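/- Let b,η > 0, x⁰ ∈ ℝ^d, and let u be κ-harmonic on the G-invariant open set ∪_{σ∈G} Γ_b^η(σ(x⁰)). If |u| ≤ 1 on ∪_{σ∈G} Γ_b^η(σ(x⁰)), then for any fixed a ∈ (0,b) and h ∈ (0,η) there exists a constant c > 0, depending only on a, b, h, η, d, R and κ (in particular independent of u and of x⁰), such that y |∇u(x,y)| ≤ c for all (x,y) ∈ Γ_a^h(x⁰), where ∇ is the full (d+1)-dimensional gradient. -/

import Mathlib

/-!
Since `Δ_κ` commutes with dilations, and since a ball of radius proportional to `y` around
`(x, y) ∈ Γ_a^h(x⁰)` lies in `Γ_b^η(x⁰)`, it is enough to bound `∇u` at the centre of a ball of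
fixed radius. Points on mirrors follow from regular points by density and continuity of `∇u`. Let
`T_ξ u = ∂_ξ u + ∑_α k(α)⟨α,ξ⟩ (u - u ∘ σ_α)/⟨α,·⟩` be the Dunkl operators (the sum is over all
roots, and `k = κ/2`).

*Bernstein's method* bounds `T_ξ u`. The operators `T_ξ` commute with `Δ_κ`, so for
`χ = 1 - |q - Q|²` and large `A` the function `(χ T_ξ u)² + A u²` satisfies a maximum principle.
Because `Δ_κ` is nonlocal, the function is maximised over all reflected balls at once, which makes
the difference terms harmless and, since the maximising ball is then the one whose centre is
closest to the maximum point, gives the singular drift terms of `χ` a sign. Two technical points: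
`T_ξ u` is only once differentiable when `u` is `C²`, so the second derivative test is applied to
`C²` approximations that replace `∂_ξ u` by difference quotients; and adding a small multiple of
the convex function `∑_β |⟨β,·⟩|` keeps the maximum away from the mirrors.

*Difference quotients* `(u - u ∘ σ_α)/⟨α,·⟩` are then bounded, so that `∂_ξ u` is bounded as well.
Near a point `x₀` lying on the mirrors of the roots in `Z`, the bound for `T_w u` on the ray
`x₀ + t w` says that `d/dt u(x₀ + t w)` is bounded up to
`-∑_{β ∈ Z} k(β)/t (u(x₀ + t w) - u(x₀ + t σ_β w))` and quotients of roots outside `Z`. The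
displayed sum has a favourable sign for the largest of the values on the finitely many reflected
rays, so `u(x₀ + w) - u(x₀) = O(|w|)`. The quotients of roots outside `Z` are known by downward
induction on the number of small roots. A suitable `x₀` is found by projecting onto common kernels
of more and more roots, until all remaining roots are large compared with the distance moved.
-/

open MeasureTheory Filter Metric
open scoped RealInnerProductSpace Topology

noncomputable section

/-- Euclidean space `ℝ^d`. -/
abbrev Ed (d : ℕ) : Type := EuclideanSpace ℝ (Fin d)

/-- The reflection `σ_α(x) = x - ⟨α,x⟩α` (for roots normalized by `⟨α,α⟩ = 2`). -/
def reflAt {d : ℕ} (α x : Ed d) : Ed d := x - ⟪α, x⟫ • α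

/-- The reflection group `G` generated by the reflections `σ_α`, `α ∈ R`, realized as the
submonoid of self-maps of `ℝ^d` generated by the reflections (each reflection is an
involution, so this is in fact a group of transformations). -/
def dunklGroup {d : ℕ} (R : Finset (Ed d)) : Submonoid (Function.End (Ed d)) :=
  Submonoid.closure {f : Function.End (Ed d) | ∃ α ∈ R, f = reflAt α}

/-- A (normalized) root system `R` with positive subsystem `Rp` and
`G`-invariant nonnegative multiplicity function `κ`. -/
structure IsRootSystem {d : ℕ} (R Rp : Finset (Ed d)) (κ : Ed d → ℝ) : Prop where
  nonzero : ∀ α ∈ R, α ≠ (0 : Ed d)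
  norm_two : ∀ α ∈ R, ⟪α, α⟫ = (2 : ℝ)
  refl_mem : ∀ α ∈ R, ∀ β ∈ R, reflAt α β ∈ R
  pos_sub : Rp ⊆ R
  pos_split : ∀ α ∈ R, (α ∈ Rp ∧ ¬(-α ∈ Rp)) ∨ (¬(α ∈ Rp) ∧ -α ∈ Rp)
  kappa_nonneg : ∀ α ∈ R, 0 ≤ κ α
  kappa_inv : ∀ σ ∈ dunklGroup R, ∀ α ∈ R, κ (σ α) = κ α

/-- `x ∈ ℝ^d` is regular if `⟨α,x⟩ ≠ 0` for all roots `α ∈ R`. -/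
def isRegular {d : ℕ} (R : Finset (Ed d)) (x : Ed d) : Prop :=
  ∀ α ∈ R, ⟪α, x⟫ ≠ (0 : ℝ)

/-- Second directional derivative of `u` at `p` in direction `v`. -/
def pd2 {d : ℕ} (u : Ed d × ℝ → ℝ) (p v : Ed d × ℝ) : ℝ :=
  fderiv ℝ (fun q => fderiv ℝ u q v) p v

/-- The Euclidean Laplacian on `ℝ^{d+1} = ℝ^d × ℝ`. -/
def lapE {d : ℕ} (u : Ed d × ℝ → ℝ) (p : Ed d × ℝ) : ℝ :=
  (∑ i : Fin d, pd2 u p (EuclideanSpace.single i 1, 0)) + pd2 u p (0, 1)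

/-- The Dunkl Laplacian `Δ_κ` on `ℝ^{d+1}` (the Dunkl operators act in the `x`-variables). -/
def dunklLap {d : ℕ} (Rp : Finset (Ed d)) (κ : Ed d → ℝ) (u : Ed d × ℝ → ℝ)
    (p : Ed d × ℝ) : ℝ :=
  lapE u p + 2 * ∑ α ∈ Rp, κ α *
    (fderiv ℝ u p (α, 0) / ⟪α, p.1⟫ - (u p - u (reflAt α p.1, p.2)) / ⟪α, p.1⟫ ^ 2)

/-- The open upper half-space `ℝ^{d+1}₊`. -/
def upperHS (d : ℕ) : Set (Ed d × ℝ) := {p | 0 < p.2}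

/-- `u` is `κ`-harmonic on `Ω`: `u` is `C²` on `Ω` and `Δ_κ u = 0` at every point of `Ω`
whose `x`-coordinate is regular. -/
def KHarmonicOn {d : ℕ} (R Rp : Finset (Ed d)) (κ : Ed d → ℝ) (u : Ed d × ℝ → ℝ)
    (Ω : Set (Ed d × ℝ)) : Prop :=
  ContDiffOn ℝ 2 u Ω ∧ ∀ p ∈ Ω, isRegular R p.1 → dunklLap Rp κ u p = 0

/-- The cone `Γ_a(x)` of aperture `a` with vertex `(x,0)`. -/
def cone {d : ℕ} (a : ℝ) (x : Ed d) : Set (Ed d × ℝ) :=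
  {p | 0 < p.2 ∧ dist p.1 x < a * p.2}

/-- The truncated cone `Γ_a^h(x)`. -/
def coneT {d : ℕ} (a h : ℝ) (x : Ed d) : Set (Ed d × ℝ) :=
  {p | 0 < p.2 ∧ p.2 < h ∧ dist p.1 x < a * p.2}

/-- `u` has a finite non-tangential limit at `(x,0)`. -/
def HasNTLimit {d : ℕ} (u : Ed d × ℝ → ℝ) (x : Ed d) : Prop :=
  ∀ a > (0 : ℝ), ∃ L : ℝ, Tendsto u (𝓝[cone a x] (x, (0 : ℝ))) (𝓝 L)

/-- `u` is non-tangentially bounded at `(x,0)`. -/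
def NTBounded {d : ℕ} (u : Ed d × ℝ → ℝ) (x : Ed d) : Prop :=
  ∃ a > (0 : ℝ), ∃ h > (0 : ℝ), ∃ M : ℝ, ∀ p ∈ coneT a h x, |u p| ≤ M

/-- A subset of `ℝ^d` is `G`-invariant. -/
def GInvSet {d : ℕ} (R : Finset (Ed d)) (E : Set (Ed d)) : Prop :=
  ∀ σ ∈ dunklGroup R, σ '' E = E

/-! ### The Euclidean Laplacian and reflections on `ℝ^d × ℝ` -/

/-- The linear functional `(x, y) ↦ ⟨α, x⟩` on `ℝ^d × ℝ`. -/
def fstInner {d : ℕ} (α : Ed d) : (Ed d × ℝ) →L[ℝ] ℝ :=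
  (innerSL ℝ α).comp (ContinuousLinearMap.fst ℝ (Ed d) ℝ)

/-- The reflection `σ_α` acting on `ℝ^d × ℝ` through the first factor. -/
def reflProd {d : ℕ} (α : Ed d) : (Ed d × ℝ) →L[ℝ] (Ed d × ℝ) :=
  ContinuousLinearMap.id ℝ _ - (fstInner α).smulRight ((α, 0) : Ed d × ℝ)

/-- The standard basis of `ℝ^d × ℝ`; `none` is the `y`-direction. -/
def stdVec {d : ℕ} : Option (Fin d) → Ed d × ℝ
  | none => (0, 1)
  | some i => (EuclideanSpace.single i 1, 0)

section SecondDerivatives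

variable {E F : Type*} [NormedAddCommGroup E] [NormedSpace ℝ E]
  [NormedAddCommGroup F] [NormedSpace ℝ F]

lemma differentiableAt_fderiv_apply {f : E → F} {p : E} (hf : ContDiffAt ℝ 2 f p) (w : E) :
    DifferentiableAt ℝ (fun q => fderiv ℝ f q w) p :=
  ((hf.fderiv_right (m := 1) (by norm_num)).differentiableAt (by norm_num)).clm_apply
    (differentiableAt_const w)

lemma eventually_differentiableAt {f : E → F} {p : E} (hf : ContDiffAt ℝ 2 f p) :
    ∀ᶠ q in 𝓝 p, DifferentiableAt ℝ f q := by
  filter_upwards [hf.eventually (by simp)] with q hq using hq.differentiableAt (by norm_num)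

lemma fderiv_fderiv_apply {f : E → F} {p : E} (hf : ContDiffAt ℝ 2 f p) (w : E) :
    fderiv ℝ (fun q => fderiv ℝ f q w) p = fderiv ℝ (fderiv ℝ f) p w := by
  have hd : DifferentiableAt ℝ (fderiv ℝ f) p :=
    (hf.fderiv_right (m := 1) (by norm_num)).differentiableAt (by norm_num)
  rw [fderiv_clm_apply hd (differentiableAt_const w)]
  refine ContinuousLinearMap.ext fun v => ?_
  simpa using (hf.isSymmSndFDerivAt (by simp)).eq v w

end SecondDerivatives

section Laplacian

variable {d : ℕ} {f g u : Ed d × ℝ → ℝ} {p : Ed d × ℝ}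

lemma fstInner_apply (α : Ed d) (p : Ed d × ℝ) : fstInner α p = ⟪α, p.1⟫ := rfl

lemma reflProd_apply (α : Ed d) (p : Ed d × ℝ) :
    reflProd α p = p - fstInner α p • ((α, 0) : Ed d × ℝ) := rfl

lemma reflProd_eq (α : Ed d) (p : Ed d × ℝ) : reflProd α p = (reflAt α p.1, p.2) := by
  ext <;> simp [reflProd_apply, reflAt, fstInner_apply]

lemma fstInner_reflProd (α β : Ed d) (p : Ed d × ℝ) :
    fstInner β (reflProd α p) = fstInner β p - ⟪α, β⟫ * fstInner α p := by
  rw [reflProd_apply, map_sub, map_smul, fstInner_apply β (α, 0)]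
  simp [real_inner_comm, mul_comm]

lemma reflProd_reflProd {α : Ed d} (hα : ⟪α, α⟫ = (2 : ℝ)) (p : Ed d × ℝ) :
    reflProd α (reflProd α p) = p := by
  rw [reflProd_apply α (reflProd α p), fstInner_reflProd, hα, reflProd_apply]
  module

lemma lapE_eq_sum (u : Ed d × ℝ → ℝ) (p : Ed d × ℝ) : lapE u p = ∑ j, pd2 u p (stdVec j) := by
  rw [Fintype.sum_option, lapE, add_comm]; rfl

lemma pd2_eq_fderiv_fderiv (hu : ContDiffAt ℝ 2 u p) (w : Ed d × ℝ) :
    pd2 u p w = fderiv ℝ (fderiv ℝ u) p w w := by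
  unfold pd2
  rw [fderiv_fderiv_apply hu]

lemma pd2_congr (h : f =ᶠ[𝓝 p] g) (w : Ed d × ℝ) : pd2 f p w = pd2 g p w := by
  have hw : (fun q => fderiv ℝ f q w) =ᶠ[𝓝 p] fun q => fderiv ℝ g q w := by
    filter_upwards [h.fderiv (𝕜 := ℝ)] with q hq
    rw [hq]
  unfold pd2
  rw [hw.fderiv_eq]

lemma pd2_add (hf : ContDiffAt ℝ 2 f p) (hg : ContDiffAt ℝ 2 g p) (w : Ed d × ℝ) :
    pd2 (fun q => f q + g q) p w = pd2 f p w + pd2 g p w := by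
  have hw : (fun q => fderiv ℝ (fun q => f q + g q) q w) =ᶠ[𝓝 p]
      fun q => fderiv ℝ f q w + fderiv ℝ g q w := by
    filter_upwards [eventually_differentiableAt hf, eventually_differentiableAt hg] with q h1 h2
    rw [fderiv_fun_add h1 h2]; rfl
  unfold pd2
  rw [hw.fderiv_eq, fderiv_fun_add (differentiableAt_fderiv_apply hf w)
    (differentiableAt_fderiv_apply hg w)]
  rfl

lemma pd2_mul (hf : ContDiffAt ℝ 2 f p) (hg : ContDiffAt ℝ 2 g p) (w : Ed d × ℝ) :
    pd2 (fun q => f q * g q) p w =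
      f p * pd2 g p w + 2 * (fderiv ℝ f p w * fderiv ℝ g p w) + g p * pd2 f p w := by
  have hw : (fun q => fderiv ℝ (fun q => f q * g q) q w) =ᶠ[𝓝 p]
      fun q => f q * fderiv ℝ g q w + g q * fderiv ℝ f q w := by
    filter_upwards [eventually_differentiableAt hf, eventually_differentiableAt hg] with q h1 h2
    rw [fderiv_fun_mul h1 h2]; simp
  have hf1 := hf.differentiableAt (by norm_num)
  have hg1 := hg.differentiableAt (by norm_num)
  have hf2 := differentiableAt_fderiv_apply hf w
  have hg2 := differentiableAt_fderiv_apply hg w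
  unfold pd2
  rw [hw.fderiv_eq, fderiv_fun_add (hf1.fun_mul hg2) (hg1.fun_mul hf2), fderiv_fun_mul hf1 hg2,
    fderiv_fun_mul hg1 hf2]
  simp only [add_apply, smul_apply, smul_eq_mul]
  ring

lemma pd2_comp_clm (A : (Ed d × ℝ) →L[ℝ] (Ed d × ℝ)) (hu : ContDiffAt ℝ 2 u (A p))
    (w : Ed d × ℝ) : pd2 (fun q => u (A q)) p w = pd2 u (A p) (A w) := by
  have hw : (fun q => fderiv ℝ (fun q => u (A q)) q w) =ᶠ[𝓝 p]
      fun q => fderiv ℝ u (A q) (A w) := by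
    filter_upwards [A.continuous.continuousAt.eventually (eventually_differentiableAt hu)]
      with q hq
    exact congrArg (· w) (hq.hasFDerivAt.comp q A.hasFDerivAt).fderiv
  have hd := (differentiableAt_fderiv_apply hu (A w)).hasFDerivAt.comp p A.hasFDerivAt
  exact congrArg (· w) (hw.fderiv_eq.trans hd.fderiv)

lemma lapE_congr (h : f =ᶠ[𝓝 p] g) : lapE f p = lapE g p := by
  simp only [lapE_eq_sum, pd2_congr h]

lemma lapE_add (hf : ContDiffAt ℝ 2 f p) (hg : ContDiffAt ℝ 2 g p) :
    lapE (fun q => f q + g q) p = lapE f p + lapE g p := by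
  simp only [lapE_eq_sum, pd2_add hf hg, Finset.sum_add_distrib]

lemma lapE_mul (hf : ContDiffAt ℝ 2 f p) (hg : ContDiffAt ℝ 2 g p) :
    lapE (fun q => f q * g q) p = f p * lapE g p +
      2 * (∑ j, fderiv ℝ f p (stdVec j) * fderiv ℝ g p (stdVec j)) + g p * lapE f p := by
  simp only [lapE_eq_sum, pd2_mul hf hg, Finset.sum_add_distrib, Finset.mul_sum]

lemma lapE_const (c : ℝ) (p : Ed d × ℝ) : lapE (fun _ => c) p = 0 := by
  simp [lapE_eq_sum, pd2]

lemma lapE_const_mul (c : ℝ) (hf : ContDiffAt ℝ 2 f p) :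
    lapE (fun q => c * f q) p = c * lapE f p := by
  rw [lapE_mul contDiffAt_const hf]; simp [lapE_const]

lemma lapE_comp_add_right (u : Ed d × ℝ → ℝ) (c p : Ed d × ℝ) :
    lapE (fun q => u (q + c)) p = lapE u (p + c) := by
  simp only [lapE_eq_sum, pd2]
  refine Finset.sum_congr rfl fun j _ => ?_
  simp only [fderiv_comp_add_right c]
  rw [fderiv_comp_add_right (f := fun q => fderiv ℝ u q (stdVec j)) c]

lemma lapE_clm (A : (Ed d × ℝ) →L[ℝ] ℝ) (p : Ed d × ℝ) : lapE A p = 0 := by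
  simp [lapE_eq_sum, pd2]

lemma continuousAt_lapE (hu : ContDiffAt ℝ 2 u p) : ContinuousAt (lapE u) p := by
  have h1 : ContinuousAt (fun q => ∑ j, fderiv ℝ (fderiv ℝ u) q (stdVec j) (stdVec j)) p := by
    have h2 : ContinuousAt (fderiv ℝ (fderiv ℝ u)) p :=
      ((hu.fderiv_right (m := 1) (by norm_num)).fderiv_right (m := 0) (by norm_num)).continuousAt
    fun_prop
  refine h1.congr ?_
  filter_upwards [hu.eventually (by simp)] with q hq
  simp only [lapE_eq_sum, pd2_eq_fderiv_fderiv hq]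

lemma sum_smul_stdVec_some (α : Ed d) : ∑ i, α i • stdVec (some i) = ((α, 0) : Ed d × ℝ) := by
  have hα : ∑ i, α i • (EuclideanSpace.single i (1 : ℝ) : Ed d) = α := by
    simpa using (EuclideanSpace.basisFun (Fin d) ℝ).sum_repr α
  ext1
  · simpa [Prod.fst_sum, stdVec] using hα
  · simp [Prod.snd_sum, stdVec]

lemma sum_fstInner_stdVec_mul (α : Ed d) (L : (Ed d × ℝ) →L[ℝ] ℝ) :
    ∑ j, fstInner α (stdVec j) * L (stdVec j) = L (α, 0) := by
  have h0 : fstInner α (stdVec none) = 0 := by simp [fstInner_apply, stdVec]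
  have h1 : ∀ i, fstInner α (stdVec (some i)) = α i := fun i => by
    simp [fstInner_apply, stdVec, EuclideanSpace.inner_single_right]
  rw [Fintype.sum_option, ← sum_smul_stdVec_some, map_sum]
  simp only [h0, h1, map_smul, smul_eq_mul, zero_mul, zero_add]

lemma lapE_comp_reflProd {α : Ed d} (hα : ⟪α, α⟫ = (2 : ℝ))
    (hu : ContDiffAt ℝ 2 u (reflProd α p)) :
    lapE (fun q => u (reflProd α q)) p = lapE u (reflProd α p) := by
  simp only [lapE_eq_sum, pd2_comp_clm _ hu, pd2_eq_fderiv_fderiv hu]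
  set B := fderiv ℝ (fderiv ℝ u) (reflProd α p)
  set a : Ed d × ℝ := (α, 0)
  have hleft := sum_fstInner_stdVec_mul α (B a)
  have hright := sum_fstInner_stdVec_mul α (B.flip a)
  have hsq : ∑ j, fstInner α (stdVec j) * fstInner α (stdVec j) = 2 :=
    (sum_fstInner_stdVec_mul α (fstInner α)).trans hα
  calc ∑ j, B (reflProd α (stdVec j)) (reflProd α (stdVec j))
      = ∑ j, (B (stdVec j) (stdVec j) - fstInner α (stdVec j) * B a (stdVec j)
          - fstInner α (stdVec j) * B.flip a (stdVec j)
          + fstInner α (stdVec j) * fstInner α (stdVec j) * B a a) := by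
        refine Finset.sum_congr rfl fun j _ => ?_
        simp only [reflProd_apply, map_sub, map_smul, sub_apply, smul_apply, smul_eq_mul,
          ContinuousLinearMap.flip_apply, a]
        ring
    _ = ∑ j, B (stdVec j) (stdVec j) := by
        rw [Finset.sum_add_distrib, Finset.sum_sub_distrib, Finset.sum_sub_distrib, hleft, hright,
          ← Finset.sum_mul, hsq, ContinuousLinearMap.flip_apply]
        ring

lemma fderiv_comp_reflProd (α : Ed d) (hu : DifferentiableAt ℝ u (reflProd α p))
    (w : Ed d × ℝ) :
    fderiv ℝ (fun q => u (reflProd α q)) p w = fderiv ℝ u (reflProd α p) (reflProd α w) :=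
  congrArg (· w) (hu.hasFDerivAt.comp p (reflProd α).hasFDerivAt).fderiv

lemma contDiffAt_fstInner_inv {α : Ed d} (h : fstInner α p ≠ 0) {n : WithTop ℕ∞} :
    ContDiffAt ℝ n (fun q => (fstInner α q)⁻¹) p :=
  (fstInner α).contDiff.contDiffAt.inv h

lemma fderiv_fstInner_inv {α : Ed d} (h : fstInner α p ≠ 0) (w : Ed d × ℝ) :
    fderiv ℝ (fun q => (fstInner α q)⁻¹) p w = - fstInner α w / fstInner α p ^ 2 := by
  have hd := (hasDerivAt_inv h).comp_hasFDerivAt p ((fstInner α).hasFDerivAt (x := p))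
  rw [Function.comp_def] at hd
  rw [hd.fderiv]
  simp; field_simp

lemma lapE_fstInner_inv {α : Ed d} (h : fstInner α p ≠ 0) :
    lapE (fun q => (fstInner α q)⁻¹) p = 2 * ⟪α, α⟫ / fstInner α p ^ 3 := by
  -- the product rule for `1 = s * s⁻¹`
  have hmul := lapE_mul ((fstInner α).contDiff.contDiffAt (x := p) (n := 2))
    (contDiffAt_fstInner_inv h)
  have hone : (fun q => fstInner α q * (fstInner α q)⁻¹) =ᶠ[𝓝 p] fun _ => (1 : ℝ) := by
    filter_upwards [(fstInner α).continuous.continuousAt.eventually_ne h] with q hq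
    exact mul_inv_cancel₀ hq
  have hcross : ∑ j, fstInner α (stdVec j) * (-fstInner α (stdVec j) / fstInner α p ^ 2) =
      - ⟪α, α⟫ / fstInner α p ^ 2 := by
    have hsq : ∑ j, fstInner α (stdVec j) * fstInner α (stdVec j) = ⟪α, α⟫ :=
      sum_fstInner_stdVec_mul α (fstInner α)
    simp only [mul_div_assoc', mul_neg, ← Finset.sum_div, Finset.sum_neg_distrib, hsq]
  rw [lapE_congr hone, lapE_const, lapE_clm] at hmul
  simp only [fderiv_fstInner_inv h, (fstInner α).fderiv, hcross] at hmul
  field_simp at hmul ⊢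
  linarith

end Laplacian

/-! ### Second-derivative tests -/

/-- The squared Euclidean distance on `ℝ^d × ℝ`, whose own norm is the maximum of the norms of
the components. -/
def distSq {d : ℕ} (P q : Ed d × ℝ) : ℝ := ‖q.1 - P.1‖ ^ 2 + (q.2 - P.2) ^ 2

lemma deriv_deriv_nonpos_of_isLocalMax {g : ℝ → ℝ} {t : ℝ} (hg : ContinuousAt g t)
    (hmax : IsLocalMax g t) : deriv (deriv g) t ≤ 0 := by
  by_contra! hpos
  have hmin : IsLocalMin g t := isLocalMin_of_deriv_deriv_pos hpos hmax.deriv_eq_zero hg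
  have hconst : g =ᶠ[𝓝 t] fun _ => g t := by
    filter_upwards [hmax, hmin] with s h1 h2 using le_antisymm h1 h2
  have hdd : deriv (deriv g) t = 0 := by
    rw [hconst.deriv.deriv_eq]
    simp
  exact hpos.ne' hdd

section SecondDerivativeTest

variable {d : ℕ} {f : Ed d × ℝ → ℝ} {p : Ed d × ℝ}

lemma distSq_self (P : Ed d × ℝ) : distSq P P = 0 := by simp [distSq]

lemma contDiff_distSq (P : Ed d × ℝ) {n : WithTop ℕ∞} : ContDiff ℝ n (distSq P) :=
  ((contDiff_fst.sub contDiff_const).norm_sq ℝ).add ((contDiff_snd.sub contDiff_const).pow 2)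

lemma fderiv_distSq (P q w : Ed d × ℝ) :
    fderiv ℝ (distSq P) q w = 2 * ⟪q.1 - P.1, w.1⟫ + 2 * (q.2 - P.2) * w.2 := by
  have h1 : HasFDerivAt (fun q : Ed d × ℝ => q.1 - P.1) (ContinuousLinearMap.fst ℝ (Ed d) ℝ) q :=
    hasFDerivAt_fst.sub_const _
  have h2 : HasFDerivAt (fun q : Ed d × ℝ => q.2 - P.2) (ContinuousLinearMap.snd ℝ (Ed d) ℝ) q :=
    hasFDerivAt_snd.sub_const _
  have h3 : fderiv ℝ (distSq P) q = _ := (h1.norm_sq.add (h2.pow 2)).fderiv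
  rw [h3]
  simp [inner_sub_left]

lemma pd2_distSq (P q w : Ed d × ℝ) : pd2 (distSq P) q w = 2 * (‖w.1‖ ^ 2 + w.2 ^ 2) := by
  have h1 : HasFDerivAt (fun q : Ed d × ℝ => ⟪q.1 - P.1, w.1⟫) (fstInner w.1) q := by
    have heq : (fun q : Ed d × ℝ => ⟪q.1 - P.1, w.1⟫) = fun q => fstInner w.1 q - ⟪w.1, P.1⟫ := by
      funext q
      rw [real_inner_comm, inner_sub_right]
      rfl
    rw [heq]
    exact (fstInner w.1).hasFDerivAt.sub_const _
  have h2 : HasFDerivAt (fun q : Ed d × ℝ => q.2 - P.2) (ContinuousLinearMap.snd ℝ (Ed d) ℝ) q :=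
    hasFDerivAt_snd.sub_const _
  unfold pd2
  simp only [fderiv_distSq]
  rw [((h1.const_mul 2).fun_add ((h2.const_mul 2).mul_const w.2)).fderiv]
  simp only [add_apply, smul_apply, smul_eq_mul, fstInner_apply, real_inner_self_eq_norm_sq,
    ContinuousLinearMap.coe_snd']
  ring

lemma lapE_distSq (P q : Ed d × ℝ) : lapE (distSq P) q = 2 * (d + 1) := by
  simp only [lapE_eq_sum, pd2_distSq, Fintype.sum_option, stdVec]
  simp
  ring

lemma sq_le_distSq_of_mem_sphere {r : ℝ} {q : Ed d × ℝ} (hq : q ∈ sphere p r) :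
    r ^ 2 ≤ distSq p q := by
  have hmax : max ‖q.1 - p.1‖ |q.2 - p.2| = r := by
    rw [← dist_eq_norm, ← Real.dist_eq]
    exact hq
  unfold distSq
  rcases max_choice ‖q.1 - p.1‖ |q.2 - p.2| with h | h <;> rw [h] at hmax <;> rw [← hmax]
  · linarith [sq_nonneg (q.2 - p.2)]
  · rw [sq_abs]
    linarith [sq_nonneg ‖q.1 - p.1‖]

lemma pd2_nonpos_of_isLocalMax (hf : ContDiffAt ℝ 2 f p) (hmax : IsLocalMax f p)
    (w : Ed d × ℝ) : pd2 f p w ≤ 0 := by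
  set γ : ℝ → Ed d × ℝ := fun t => p + t • w
  have hγ : ∀ t, HasDerivAt γ w t := fun t => by
    simpa [γ] using ((hasDerivAt_id t).smul_const w).const_add p
  have hγ0 : γ 0 = p := by simp [γ]
  have hlim : Tendsto γ (𝓝 0) (𝓝 p) := by simpa [hγ0] using (hγ 0).continuousAt.tendsto
  have hderiv : deriv (f ∘ γ) =ᶠ[𝓝 0] fun t => fderiv ℝ f (γ t) w := by
    filter_upwards [hlim.eventually (eventually_differentiableAt hf)] with t ht
    exact (ht.hasFDerivAt.comp_hasDerivAt t (hγ t)).deriv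
  have hderiv2 : deriv (deriv (f ∘ γ)) 0 = pd2 f p w := by
    have h := (differentiableAt_fderiv_apply hf w).hasFDerivAt
    rw [← hγ0] at h
    rw [hderiv.deriv_eq]
    exact (h.comp_hasDerivAt 0 (hγ 0)).deriv.trans (by rw [hγ0]; rfl)
  have hmax' : IsLocalMax (f ∘ γ) 0 := by
    filter_upwards [hlim.eventually hmax] with t ht
    simpa [hγ0] using ht
  have hcont : ContinuousAt (f ∘ γ) 0 :=
    ContinuousAt.comp (by rw [hγ0]; exact hf.continuousAt) (hγ 0).continuousAt
  exact hderiv2 ▸ deriv_deriv_nonpos_of_isLocalMax hcont hmax'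

lemma lapE_nonpos_of_isLocalMax (hf : ContDiffAt ℝ 2 f p) (hmax : IsLocalMax f p) :
    lapE f p ≤ 0 := by
  rw [lapE_eq_sum]
  exact Finset.sum_nonpos fun j _ => pd2_nonpos_of_isLocalMax hf hmax _

lemma exists_mem_ball_lapE_le {r δ : ℝ} (hr : 0 < r)
    (hf : ∀ q ∈ closedBall p r, ContDiffAt ℝ 2 f q)
    (hsphere : ∀ q ∈ sphere p r, f q < f p + δ * distSq p q) :
    ∃ q ∈ ball p r, lapE f q ≤ δ * (2 * (d + 1)) := by
  set g : Ed d × ℝ → ℝ := fun q => f q + (-δ) * distSq p q with hg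
  have hdist : ∀ q, ContDiffAt ℝ 2 (distSq p) q := fun q => (contDiff_distSq p).contDiffAt
  have hgC : ∀ q ∈ closedBall p r, ContDiffAt ℝ 2 g q := fun q hq =>
    (hf q hq).add (contDiffAt_const.mul (hdist q))
  have hgp : g p = f p := by simp [hg, distSq_self]
  obtain ⟨q, hq, hmax⟩ := (isCompact_closedBall p r).exists_isLocalMax_mem_open
    ball_subset_closedBall (fun q hq => (hgC q hq).continuousAt.continuousWithinAt)
    (mem_closedBall_self hr.le) (fun q hq => by
      rw [closedBall_sdiff_ball] at hq
      rw [hgp]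
      linarith [hsphere q hq]) isOpen_ball
  refine ⟨q, hq, ?_⟩
  have hq' := ball_subset_closedBall hq
  have hlap := lapE_nonpos_of_isLocalMax (hgC q hq') hmax
  rw [hg, lapE_add (hf q hq') (contDiffAt_const.mul (hdist q)), lapE_const_mul _ (hdist q),
    lapE_distSq] at hlap
  linarith

end SecondDerivativeTest

/-! ### Approximate Laplacians -/

/-- `v` has approximate Laplacian `ℓ` at `p`: it is differentiable at `p` and there are `C²`
functions `w τ` which, as `τ → 0`, converge to `v` locally uniformly near `p`, with gradients
converging to that of `v` and Laplacians converging to `ℓ` at `p` (all in the sense of continuous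
convergence). The Laplacian of a derivative of a `C²` solution of an elliptic equation exists in
this sense. -/
def HasApproxLaplacianAt {d : ℕ} (v : Ed d × ℝ → ℝ) (p : Ed d × ℝ) (ℓ : ℝ) : Prop :=
  DifferentiableAt ℝ v p ∧ ∃ w : ℝ → Ed d × ℝ → ℝ,
    (∀ᶠ z in 𝓝[≠] (0 : ℝ) ×ˢ 𝓝 p, ContDiffAt ℝ 2 (w z.1) z.2) ∧
    (∀ᶠ q in 𝓝 p, Tendsto (fun z => w z.1 z.2) (𝓝[≠] (0 : ℝ) ×ˢ 𝓝 q) (𝓝 (v q))) ∧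
    Tendsto (fun z => fderiv ℝ (w z.1) z.2) (𝓝[≠] (0 : ℝ) ×ˢ 𝓝 p) (𝓝 (fderiv ℝ v p)) ∧
    Tendsto (fun z => lapE (w z.1) z.2) (𝓝[≠] (0 : ℝ) ×ˢ 𝓝 p) (𝓝 ℓ)

lemma eventually_forall_mem_of_isCompact {X : Type*} [TopologicalSpace X] {l : Filter ℝ}
    {K : Set X} (hK : IsCompact K) {P : ℝ × X → Prop} (h : ∀ q ∈ K, ∀ᶠ z in l ×ˢ 𝓝 q, P z) :
    ∀ᶠ τ in l, ∀ q ∈ K, P (τ, q) := by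
  have hprod : ∀ᶠ z in l ×ˢ 𝓝ˢ K, P z := hK.mem_prod_nhdsSet_of_forall h
  exact hprod.curry.mono fun τ hτ => hτ.self_of_nhdsSet

section ApproxLaplacian

variable {d : ℕ} {f g v : Ed d × ℝ → ℝ} {p : Ed d × ℝ} {ℓ m : ℝ}

lemma hasApproxLaplacianAt_of_contDiffAt (hf : ContDiffAt ℝ 2 f p) :
    HasApproxLaplacianAt f p (lapE f p) := by
  have hf2 := hf.eventually (by simp)
  refine ⟨hf.differentiableAt (by norm_num), fun _ => f, tendsto_snd.eventually hf2, ?_, ?_,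
    (continuousAt_lapE hf).tendsto.comp tendsto_snd⟩
  · filter_upwards [hf2] with q hq using hq.continuousAt.tendsto.comp tendsto_snd
  · exact (hf.fderiv_right (m := 1) (by norm_num)).continuousAt.tendsto.comp tendsto_snd

namespace HasApproxLaplacianAt

lemma add (hf : HasApproxLaplacianAt f p ℓ) (hg : HasApproxLaplacianAt g p m) :
    HasApproxLaplacianAt (fun q => f q + g q) p (ℓ + m) := by
  obtain ⟨df, φ, φ2, φ0, φ1, φL⟩ := hf
  obtain ⟨dg, ψ, ψ2, ψ0, ψ1, ψL⟩ := hg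
  refine ⟨df.fun_add dg, fun τ q => φ τ q + ψ τ q, ?_, ?_, ?_, (φL.add ψL).congr' ?_⟩
  · filter_upwards [φ2, ψ2] with z h1 h2 using h1.add h2
  · filter_upwards [φ0, ψ0] with q h1 h2 using h1.add h2
  · rw [fderiv_fun_add df dg]
    refine (φ1.add ψ1).congr' ?_
    filter_upwards [φ2, ψ2] with z h1 h2
    exact (fderiv_fun_add (h1.differentiableAt (by norm_num))
      (h2.differentiableAt (by norm_num))).symm
  · filter_upwards [φ2, ψ2] with z h1 h2 using (lapE_add h1 h2).symm

lemma mul (hf : HasApproxLaplacianAt f p ℓ) (hg : HasApproxLaplacianAt g p m) :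
    HasApproxLaplacianAt (fun q => f q * g q) p
      (f p * m + 2 * ∑ j, fderiv ℝ f p (stdVec j) * fderiv ℝ g p (stdVec j) + g p * ℓ) := by
  obtain ⟨df, φ, φ2, φ0, φ1, φL⟩ := hf
  obtain ⟨dg, ψ, ψ2, ψ0, ψ1, ψL⟩ := hg
  have happ : ∀ w : Ed d × ℝ, Continuous fun L : (Ed d × ℝ) →L[ℝ] ℝ => L w :=
    fun w => (ContinuousLinearMap.apply ℝ ℝ w).continuous
  have φp := φ0.self_of_nhds
  have ψp := ψ0.self_of_nhds
  refine ⟨df.fun_mul dg, fun τ q => φ τ q * ψ τ q, ?_, ?_, ?_, Tendsto.congr' ?_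
    (((φp.mul ψL).add ((tendsto_finsetSum _ fun j _ =>
      (((happ (stdVec j)).tendsto _).comp φ1).mul
        (((happ (stdVec j)).tendsto _).comp ψ1)).const_mul 2)).add (ψp.mul φL))⟩
  · filter_upwards [φ2, ψ2] with z h1 h2 using h1.mul h2
  · filter_upwards [φ0, ψ0] with q h1 h2 using h1.mul h2
  · rw [fderiv_fun_mul df dg]
    refine ((φp.smul ψ1).add (ψp.smul φ1)).congr' ?_
    filter_upwards [φ2, ψ2] with z h1 h2
    exact (fderiv_fun_mul (h1.differentiableAt (by norm_num))
      (h2.differentiableAt (by norm_num))).symm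
  · filter_upwards [φ2, ψ2] with z h1 h2 using (lapE_mul h1 h2).symm

lemma congr_right (hf : HasApproxLaplacianAt f p ℓ) (h : ℓ = m) : HasApproxLaplacianAt f p m :=
  h ▸ hf

lemma const_mul (c : ℝ) (hf : HasApproxLaplacianAt f p ℓ) :
    HasApproxLaplacianAt (fun q => c * f q) p (c * ℓ) :=
  ((hasApproxLaplacianAt_of_contDiffAt contDiffAt_const).mul hf).congr_right (by simp [lapE_const])

lemma nonpos_of_isLocalMax (hv : HasApproxLaplacianAt v p ℓ) (hmax : IsLocalMax v p) :
    ℓ ≤ 0 := by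
  obtain ⟨-, w, hw2, hw0, -, hwL⟩ := hv
  by_contra! hpos
  set δ : ℝ := ℓ / (8 * (d + 1)) with hδ
  have hδpos : 0 < δ := by positivity
  have hδℓ : δ * (2 * (d + 1)) = ℓ / 4 := by rw [hδ]; field_simp; norm_num
  obtain ⟨⟨T, r₁⟩, ⟨hT, hr₁⟩, hlarge⟩ := ((𝓝[≠] (0 : ℝ)).basis_sets.prod
    (nhds_basis_closedBall (x := p))).eventually_iff.1
      (hw2.and (hwL.eventually (lt_mem_nhds (half_lt_self hpos))))
  obtain ⟨r₂, hr₂, hball⟩ := nhds_basis_closedBall.eventually_iff.1 (hmax.and hw0)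
  set r := min r₁ r₂
  have hr : 0 < r := lt_min hr₁ hr₂
  have hη : 0 < δ * r ^ 2 / 2 := by positivity
  have hcenter : ∀ᶠ τ in 𝓝[≠] (0 : ℝ), v p - δ * r ^ 2 / 2 < w τ p := by
    have h := (hball (mem_closedBall_self hr₂.le)).2.eventually
      (lt_mem_nhds (sub_lt_self (v p) hη))
    exact h.curry.mono fun τ hτ => hτ.self_of_nhds
  have hsphere : ∀ᶠ τ in 𝓝[≠] (0 : ℝ), ∀ q ∈ sphere p r, w τ q < v p + δ * r ^ 2 / 2 := by
    refine eventually_forall_mem_of_isCompact (isCompact_sphere p r)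
      (P := fun z => w z.1 z.2 < v p + δ * r ^ 2 / 2) fun q hq => ?_
    obtain ⟨hle, hlim⟩ := hball (closedBall_subset_closedBall (min_le_right r₁ r₂)
      (sphere_subset_closedBall hq))
    exact hlim.eventually (gt_mem_nhds (hle.trans_lt (lt_add_of_pos_right _ hη)))
  obtain ⟨τ, hτp, hτs, hτT⟩ := (hcenter.and (hsphere.and hT)).exists
  have hτ : ∀ q ∈ closedBall p r, ContDiffAt ℝ 2 (w τ) q ∧ ℓ / 2 < lapE (w τ) q := fun q hq =>
    hlarge (x := (τ, q)) ⟨hτT, closedBall_subset_closedBall (min_le_left _ _) hq⟩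
  obtain ⟨q, hq, hle⟩ := exists_mem_ball_lapE_le (f := w τ) (δ := δ) hr (fun q hq => (hτ q hq).1)
    fun q hq => by
      have h1 := hτs q hq
      have h2 := mul_le_mul_of_nonneg_left (sq_le_distSq_of_mem_sphere hq) hδpos.le
      linarith
  linarith [(hτ q (ball_subset_closedBall hq)).2]

end HasApproxLaplacianAt

end ApproxLaplacian

section DifferenceQuotients

variable {E F : Type*} [NormedAddCommGroup E] [NormedSpace ℝ E]
  [NormedAddCommGroup F] [NormedSpace ℝ F]

lemma tendsto_add_smul (ξ q : E) :
    Tendsto (fun z : ℝ × E => z.2 + z.1 • ξ) (𝓝[≠] 0 ×ˢ 𝓝 q) (𝓝 q) := by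
  have h : Tendsto (fun z : ℝ × E => z.2 + z.1 • ξ) (𝓝 ((0 : ℝ), q)) (𝓝 (q + (0 : ℝ) • ξ)) :=
    Continuous.tendsto (by fun_prop) _
  rw [zero_smul, add_zero, nhds_prod_eq] at h
  exact h.mono_left (Filter.prod_mono nhdsWithin_le_nhds le_rfl)

lemma tendsto_diffQuot_of_hasStrictFDerivAt {f : E → F} {f' : E →L[ℝ] F} {q : E}
    (hf : HasStrictFDerivAt f f' q) (ξ : E) :
    Tendsto (fun z : ℝ × E => z.1⁻¹ • (f (z.2 + z.1 • ξ) - f z.2)) (𝓝[≠] 0 ×ˢ 𝓝 q)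
      (𝓝 (f' ξ)) := by
  have hpairs : Tendsto (fun z : ℝ × E => (z.2 + z.1 • ξ, z.2)) (𝓝[≠] 0 ×ˢ 𝓝 q) (𝓝 (q, q)) :=
    (tendsto_add_smul ξ q).prodMk_nhds tendsto_snd
  have hne : ∀ᶠ z : ℝ × E in 𝓝[≠] 0 ×ˢ 𝓝 q, z.1 ≠ 0 :=
    tendsto_fst.eventually self_mem_nhdsWithin
  have ho : (fun z : ℝ × E => z.1⁻¹ • (f (z.2 + z.1 • ξ) - f z.2 - f' (z.1 • ξ)))
      =o[𝓝[≠] 0 ×ˢ 𝓝 q] fun z => z.1⁻¹ • z.1 • ξ := by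
    have h := (Asymptotics.isBigO_refl (fun z : ℝ × E => z.1⁻¹) _).smul_isLittleO
      (hf.isLittleO.comp_tendsto hpairs)
    simpa [Function.comp_def] using h
  have hbounded : (fun z : ℝ × E => z.1⁻¹ • z.1 • ξ) =O[𝓝[≠] 0 ×ˢ 𝓝 q] fun _ => (1 : ℝ) :=
    ((Asymptotics.isBigO_refl (fun _ : ℝ × E => ξ) _).trans
      (Asymptotics.isBigO_const_const ξ one_ne_zero _)).congr'
      (hne.mono fun z hz => (inv_smul_smul₀ hz ξ).symm) (.of_forall fun _ => rfl)
  have hzero := (Asymptotics.isLittleO_one_iff ℝ).1 (ho.trans_isBigO hbounded)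
  refine ((hzero.add_const (f' ξ)).congr' ?_).trans (by rw [zero_add])
  filter_upwards [hne] with z hz
  rw [smul_sub _ _ (f' _), map_smul, inv_smul_smul₀ hz, sub_add_cancel]

end DifferenceQuotients

/-- Differentiating an equation `Δu = G` along `ξ`. -/
lemma hasApproxLaplacianAt_fderiv_apply {d : ℕ} {u G : Ed d × ℝ → ℝ} {p : Ed d × ℝ}
    {G' : (Ed d × ℝ) →L[ℝ] ℝ} (hu : ContDiffAt ℝ 2 u p) (hG : lapE u =ᶠ[𝓝 p] G)
    (hG' : HasStrictFDerivAt G G' p) (ξ : Ed d × ℝ) :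
    HasApproxLaplacianAt (fun q => fderiv ℝ u q ξ) p (G' ξ) := by
  have hdu : ContDiffAt ℝ 1 (fderiv ℝ u) p := hu.fderiv_right (by norm_num)
  have hgood := (hu.eventually (by simp)).and hG
  have hnear : ∀ᶠ z : ℝ × (Ed d × ℝ) in 𝓝[≠] 0 ×ˢ 𝓝 p,
      (ContDiffAt ℝ 2 (fun q => u (q + z.1 • ξ)) z.2 ∧ ContDiffAt ℝ 2 u (z.2 + z.1 • ξ)) ∧
      ContDiffAt ℝ 2 u z.2 ∧ lapE u (z.2 + z.1 • ξ) = G (z.2 + z.1 • ξ) ∧ lapE u z.2 = G z.2 := by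
    filter_upwards [(tendsto_add_smul ξ p).eventually hgood, tendsto_snd.eventually hgood]
      with z h1 h2
    exact ⟨⟨h1.1.comp z.2 (contDiff_id.add contDiff_const).contDiffAt, h1.1⟩, h2.1, h1.2, h2.2⟩
  refine ⟨differentiableAt_fderiv_apply hu ξ,
    fun τ q => τ⁻¹ * (u (q + τ • ξ) + (-1) * u q), ?_, ?_, ?_, ?_⟩
  · filter_upwards [hnear] with z hz
    exact contDiffAt_const.mul (hz.1.1.add (contDiffAt_const.mul hz.2.1))
  · filter_upwards [hgood] with q hq
    refine (tendsto_diffQuot_of_hasStrictFDerivAt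
      (hq.1.hasStrictFDerivAt (by norm_num)) ξ).congr fun z => ?_
    rw [smul_eq_mul]
    ring
  · rw [fderiv_fderiv_apply hu]
    refine (tendsto_diffQuot_of_hasStrictFDerivAt
      (hdu.hasStrictFDerivAt (by norm_num)) ξ).congr' ?_
    filter_upwards [hnear] with z hz
    have h1 := hz.1.1.differentiableAt (by norm_num)
    have h2 := hz.2.1.differentiableAt (by norm_num)
    rw [fderiv_const_mul (h1.fun_add (h2.const_mul _)), fderiv_fun_add h1 (h2.const_mul _),
      fderiv_const_mul h2, fderiv_comp_add_right]
    module
  · refine (tendsto_diffQuot_of_hasStrictFDerivAt hG' ξ).congr' ?_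
    filter_upwards [hnear] with z hz
    rw [lapE_const_mul _ (hz.1.1.add (contDiffAt_const.mul hz.2.1)),
      lapE_add hz.1.1 (contDiffAt_const.mul hz.2.1), lapE_const_mul _ hz.2.1,
      lapE_comp_add_right, hz.2.2.1, hz.2.2.2, smul_eq_mul]
    ring

/-! ### Dunkl operators -/

/-- The difference quotient `(u - u ∘ σ_α) / ⟨α, ·⟩`, extended to the mirror `⟨α, x⟩ = 0` by its
limit, the derivative of `u` along `α`. -/
def dunklQuot {d : ℕ} (u : Ed d × ℝ → ℝ) (α : Ed d) (p : Ed d × ℝ) : ℝ :=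
  open Classical in
  if fstInner α p = 0 then fderiv ℝ u p (α, 0) else (u p - u (reflProd α p)) / fstInner α p

/-- The Dunkl operator `T_ξ u = ∂_ξ u + ∑_α k(α) ⟨α, ξ⟩ (u - u ∘ σ_α) / ⟨α, ·⟩`. The sum runs over
all of `R`, so `k` stands for half of the multiplicity function. -/
def dunklOp {d : ℕ} (R : Finset (Ed d)) (k : Ed d → ℝ) (u : Ed d × ℝ → ℝ) (ξ p : Ed d × ℝ) : ℝ :=
  fderiv ℝ u p ξ + ∑ α ∈ R, k α * fstInner α ξ * dunklQuot u α p

section Taylor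

open Asymptotics

variable {E F : Type*} [NormedAddCommGroup E] [NormedSpace ℝ E]
  [NormedAddCommGroup F] [NormedSpace ℝ F]

lemma hasFDerivAt_sub_taylor_two {u : E → F} {p z : E} (hu : ContDiffAt ℝ 2 u p)
    (hz : DifferentiableAt ℝ u z) :
    HasFDerivAt (fun x => u x - fderiv ℝ u p (x - p)
        - (1 / 2 : ℝ) • fderiv ℝ (fderiv ℝ u) p (x - p) (x - p))
      (fderiv ℝ u z - fderiv ℝ u p - fderiv ℝ (fderiv ℝ u) p (z - p)) z := by
  have hid : HasFDerivAt (fun x : E => x - p) (ContinuousLinearMap.id ℝ E) z :=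
    (hasFDerivAt_id z).sub_const p
  have hlin := (fderiv ℝ u p).hasFDerivAt.comp z hid
  have hquad := ((fderiv ℝ (fderiv ℝ u) p).hasFDerivAt.comp z hid).clm_apply hid
  refine ((hz.hasFDerivAt.fun_sub hlin).fun_sub (hquad.const_smul (1 / 2 : ℝ))).congr_fderiv ?_
  refine ContinuousLinearMap.ext fun w => ?_
  have hsymm := (hu.isSymmSndFDerivAt (by simp)).eq w (z - p)
  simp only [sub_apply, smul_apply, add_apply, ContinuousLinearMap.comp_apply,
    ContinuousLinearMap.id_apply, ContinuousLinearMap.flip_apply, Function.comp_apply, hsymm]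
  module

/-- The mean value inequality for the second order Taylor remainder at `p`. -/
lemma isLittleO_sub_sub_midpoint {u : E → F} {p : E} (hu : ContDiffAt ℝ 2 u p) :
    (fun z : E × E => u z.1 - u z.2 -
        (fderiv ℝ u p + fderiv ℝ (fderiv ℝ u) p (midpoint ℝ z.1 z.2 - p)) (z.1 - z.2))
      =o[𝓝 (p, p)] fun z => max ‖z.1 - p‖ ‖z.2 - p‖ * ‖z.1 - z.2‖ := by
  set B := fderiv ℝ (fderiv ℝ u) p
  set e : E → F := fun x => u x - fderiv ℝ u p (x - p) - (1 / 2 : ℝ) • B (x - p) (x - p) with he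
  have hB : (fun z => fderiv ℝ u z - fderiv ℝ u p - B (z - p)) =o[𝓝 p] fun z => z - p :=
    ((hu.fderiv_right (m := 1) (by norm_num)).differentiableAt (by norm_num)).hasFDerivAt.isLittleO
  have hremainder : ∀ x y, u x - u y - (fderiv ℝ u p + B (midpoint ℝ x y - p)) (x - y) =
      e x - e y := by
    intro x y
    have hsymm := (hu.isSymmSndFDerivAt (by simp)).eq (x - p) (y - p)
    have hmid : midpoint ℝ x y - p = (1 / 2 : ℝ) • ((x - p) + (y - p)) := by
      rw [midpoint_eq_smul_add, invOf_eq_inv]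
      module
    simp only [hmid, he, ← sub_sub_sub_cancel_right x y p, map_sub (fderiv ℝ u p) (x - p),
      map_sub (B _) (x - p), map_add, map_smul, add_apply, smul_apply]
    rw [show B (x - p) (y - p) = B (y - p) (x - p) from hsymm]
    module
  refine isLittleO_iff.2 fun c hc => ?_
  obtain ⟨r, hr, hball⟩ := Metric.eventually_nhds_iff_ball.1
    ((isLittleO_iff.1 hB hc).and (eventually_differentiableAt hu))
  filter_upwards [ball_mem_nhds (p, p) hr] with ⟨x, y⟩ hxy
  have hmax : max ‖x - p‖ ‖y - p‖ < r := by
    simpa [mem_ball, Prod.dist_eq, dist_eq_norm] using hxy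
  have hsub : closedBall p (max ‖x - p‖ ‖y - p‖) ⊆ ball p r := closedBall_subset_ball hmax
  have hconvex := convex_closedBall p (max ‖x - p‖ ‖y - p‖)
  have hmean := hconvex.norm_image_sub_le_of_norm_hasFDerivWithin_le (f := e)
    (C := c * max ‖x - p‖ ‖y - p‖) (x := y) (y := x)
    (fun w hw => (hasFDerivAt_sub_taylor_two hu (hball w (hsub hw)).2).hasFDerivWithinAt)
    (fun w hw => (hball w (hsub hw)).1.trans (by
      gcongr
      exact mem_closedBall_iff_norm.1 hw))
    (mem_closedBall_iff_norm.2 (le_max_right _ _)) (mem_closedBall_iff_norm.2 (le_max_left _ _))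
  rw [hremainder, norm_mul, norm_norm, Real.norm_of_nonneg (le_max_of_le_left (norm_nonneg _)),
    ← mul_assoc]
  exact hmean

end Taylor

section DunklQuotient

open Asymptotics

variable {d : ℕ} {u : Ed d × ℝ → ℝ} {α : Ed d} {p : Ed d × ℝ}

lemma dunklQuot_of_ne (h : fstInner α p ≠ 0) :
    dunklQuot u α p = (u p - u (reflProd α p)) / fstInner α p := if_neg h

lemma dunklQuot_of_eq (h : fstInner α p = 0) : dunklQuot u α p = fderiv ℝ u p (α, 0) := if_pos h

lemma reflProd_of_fstInner_eq_zero (h : fstInner α p = 0) : reflProd α p = p := by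
  simp [reflProd_apply, h]

lemma dunklQuot_eventuallyEq (h : fstInner α p ≠ 0) :
    dunklQuot u α =ᶠ[𝓝 p] fun q => (u q + (-1) * u (reflProd α q)) * (fstInner α q)⁻¹ := by
  filter_upwards [(fstInner α).continuous.continuousAt.eventually_ne h] with q hq
  rw [dunklQuot_of_ne hq]
  ring

lemma contDiffAt_comp_reflProd {n : WithTop ℕ∞} (hu : ContDiffAt ℝ n u (reflProd α p)) :
    ContDiffAt ℝ n (fun q => u (reflProd α q)) p :=
  hu.comp p (reflProd α).contDiff.contDiffAt

lemma contDiffAt_dunklQuot {n : WithTop ℕ∞} (h : fstInner α p ≠ 0) (h1 : ContDiffAt ℝ n u p)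
    (h2 : ContDiffAt ℝ n u (reflProd α p)) : ContDiffAt ℝ n (dunklQuot u α) p :=
  ((h1.add (contDiffAt_const.mul (contDiffAt_comp_reflProd h2))).mul
    (contDiffAt_fstInner_inv h)).congr_of_eventuallyEq (dunklQuot_eventuallyEq h)

lemma isLittleO_sub_comp_reflProd (h : fstInner α p = 0) (hu : ContDiffAt ℝ 2 u p) :
    (fun z => u z - u (reflProd α z) -
      (fderiv ℝ u p + fderiv ℝ (fderiv ℝ u) p (midpoint ℝ z (reflProd α z) - p))
        (z - reflProd α z)) =o[𝓝 p] fun z => ‖z - p‖ * fstInner α z := by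
  have hfix := reflProd_of_fstInner_eq_zero h
  have hpair : Tendsto (fun z => (z, reflProd α z)) (𝓝 p) (𝓝 (p, p)) := by
    have hcont := (continuous_id.prodMk (reflProd α).continuous).tendsto p
    simpa only [hfix, id] using hcont
  have hdist : (fun z => z - reflProd α z) =O[𝓝 p] fun z => fstInner α z := by
    simp only [reflProd_apply, sub_sub_cancel]
    exact isBigO_of_le' (c := ‖((α, 0) : Ed d × ℝ)‖) _ fun z => by rw [norm_smul, mul_comm]
  have hrefl : (fun z => reflProd α z - p) =O[𝓝 p] fun z => z - p := by
    refine ((reflProd α).isBigO_comp (fun z => z - p) (𝓝 p)).congr_left fun z => ?_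
    rw [map_sub, hfix]
  have hmax : (fun z => max ‖z - p‖ ‖reflProd α z - p‖) =O[𝓝 p] fun z => ‖z - p‖ := by
    refine (isBigO_of_le _ fun z => ?_).trans ((isBigO_refl _ _).norm_norm.add hrefl.norm_norm)
    rw [Real.norm_of_nonneg (by positivity), Real.norm_of_nonneg (by positivity)]
    exact max_le_add_of_nonneg (norm_nonneg _) (norm_nonneg _)
  exact ((isLittleO_sub_sub_midpoint hu).comp_tendsto hpair).trans_isBigO
    (hmax.mul hdist.norm_left)

lemma hasFDerivAt_dunklQuot_of_eq (h : fstInner α p = 0) (hu : ContDiffAt ℝ 2 u p) :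
    HasFDerivAt (dunklQuot u α) ((fderiv ℝ (fderiv ℝ u) p).flip (α, 0) -
      (1 / 2 * fderiv ℝ (fderiv ℝ u) p (α, 0) (α, 0)) • fstInner α) p := by
  set B := fderiv ℝ (fderiv ℝ u) p
  set a : Ed d × ℝ := (α, 0)
  have hB : (fun z => fderiv ℝ u z - fderiv ℝ u p - B (z - p)) =o[𝓝 p] fun z => z - p :=
    ((hu.fderiv_right (m := 1) (by norm_num)).differentiableAt (by norm_num)).hasFDerivAt.isLittleO
  have hmirror : (fun z => (fderiv ℝ u z - fderiv ℝ u p - B (z - p)) a) =o[𝓝 p] fun z => z - p :=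
    ((ContinuousLinearMap.apply ℝ ℝ a).isBigO_comp _ _).trans_isLittleO hB
  have hinner : ∀ z, fstInner α (z - p) = fstInner α z := fun z => by rw [map_sub, h, sub_zero]
  refine .of_isLittleO (isLittleO_iff.2 fun c hc => ?_)
  filter_upwards [isLittleO_iff.1 hmirror hc,
    isLittleO_iff.1 (isLittleO_sub_comp_reflProd h hu) hc] with z h1 h2
  by_cases hz : fstInner α z = 0
  · rw [dunklQuot_of_eq h, dunklQuot_of_eq hz]
    simpa [hinner, hz] using h1
  · have hmid : midpoint ℝ z (reflProd α z) - p = (z - p) - (fstInner α z / 2) • a := by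
      rw [midpoint_eq_smul_add, invOf_eq_inv, reflProd_apply]
      module
    have hnum : u z - u (reflProd α z) -
        (fderiv ℝ u p + B (midpoint ℝ z (reflProd α z) - p)) (z - reflProd α z) =
        (dunklQuot u α z - dunklQuot u α p - (B.flip a - (1 / 2 * B a a) • fstInner α) (z - p)) *
          fstInner α z := by
      rw [dunklQuot_of_ne hz, dunklQuot_of_eq h, hmid, reflProd_apply, sub_sub_cancel]
      simp only [map_sub B (z - p), map_smul, add_apply, sub_apply, smul_apply, smul_eq_mul,
        ContinuousLinearMap.flip_apply, hinner]
      field_simp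
      ring
    rw [hnum, norm_mul, norm_mul, norm_norm, ← mul_assoc] at h2
    exact le_of_mul_le_mul_right h2 (norm_pos_iff.2 hz)

lemma differentiableAt_dunklQuot (h1 : ContDiffAt ℝ 2 u p) (h2 : ContDiffAt ℝ 2 u (reflProd α p)) :
    DifferentiableAt ℝ (dunklQuot u α) p := by
  by_cases h : fstInner α p = 0
  · exact (hasFDerivAt_dunklQuot_of_eq h h1).differentiableAt
  · exact (contDiffAt_dunklQuot h h1 h2).differentiableAt (by norm_num)

lemma differentiableAt_dunklOp {R : Finset (Ed d)} (k : Ed d → ℝ) (ξ : Ed d × ℝ)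
    (h1 : ContDiffAt ℝ 2 u p) (h2 : ∀ α ∈ R, ContDiffAt ℝ 2 u (reflProd α p)) :
    DifferentiableAt ℝ (dunklOp R k u ξ) p :=
  (differentiableAt_fderiv_apply h1 ξ).fun_add
    (DifferentiableAt.fun_sum fun α hα => (differentiableAt_dunklQuot h1 (h2 α hα)).const_mul _)

lemma fderiv_dunklQuot (h : fstInner α p ≠ 0) (h1 : DifferentiableAt ℝ u p)
    (h2 : DifferentiableAt ℝ u (reflProd α p)) (w : Ed d × ℝ) : fderiv ℝ (dunklQuot u α) p w =
      (fderiv ℝ u p w - fderiv ℝ u (reflProd α p) (reflProd α w)) / fstInner α p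
        - (u p - u (reflProd α p)) * fstInner α w / fstInner α p ^ 2 := by
  have hrefl : DifferentiableAt ℝ (fun q => u (reflProd α q)) p :=
    h2.comp p (reflProd α).differentiableAt
  have hinv := (contDiffAt_fstInner_inv h (n := 1)).differentiableAt (by norm_num)
  rw [(dunklQuot_eventuallyEq h).fderiv_eq, fderiv_fun_mul (h1.fun_add (hrefl.const_mul _)) hinv,
    fderiv_fun_add h1 (hrefl.const_mul _), fderiv_const_mul hrefl]
  simp only [add_apply, smul_apply, smul_eq_mul, fderiv_fstInner_inv h, fderiv_comp_reflProd α h2]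
  field_simp
  ring

lemma lapE_dunklQuot (hα : ⟪α, α⟫ = (2 : ℝ)) (h : fstInner α p ≠ 0) (h1 : ContDiffAt ℝ 2 u p)
    (h2 : ContDiffAt ℝ 2 u (reflProd α p)) : lapE (dunklQuot u α) p =
      (lapE u p - lapE u (reflProd α p)) / fstInner α p
        - 2 * (fderiv ℝ u p (α, 0) + fderiv ℝ u (reflProd α p) (α, 0)) / fstInner α p ^ 2
        + 4 * (u p - u (reflProd α p)) / fstInner α p ^ 3 := by
  have d1 := h1.differentiableAt (by norm_num)
  have d2 := h2.differentiableAt (by norm_num)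
  have hrefl := contDiffAt_comp_reflProd h2
  have drefl := hrefl.differentiableAt (by norm_num)
  have hneg : reflProd α ((α, 0) : Ed d × ℝ) = - (α, 0) := by
    rw [reflProd_apply, fstInner_apply, hα]
    module
  have hderiv : fderiv ℝ (fun q => u q + (-1) * u (reflProd α q)) p (α, 0) =
      fderiv ℝ u p (α, 0) + fderiv ℝ u (reflProd α p) (α, 0) := by
    rw [fderiv_fun_add d1 (drefl.const_mul _), fderiv_const_mul drefl]
    simp only [add_apply, smul_apply, smul_eq_mul, fderiv_comp_reflProd α d2, hneg, map_neg]
    ring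
  have hcross : ∑ j, fderiv ℝ (fun q => u q + (-1) * u (reflProd α q)) p (stdVec j) *
      fderiv ℝ (fun q => (fstInner α q)⁻¹) p (stdVec j) =
      - (fderiv ℝ u p (α, 0) + fderiv ℝ u (reflProd α p) (α, 0)) / fstInner α p ^ 2 := by
    rw [← hderiv, ← sum_fstInner_stdVec_mul, neg_div, Finset.sum_div, ← Finset.sum_neg_distrib]
    refine Finset.sum_congr rfl fun j _ => ?_
    rw [fderiv_fstInner_inv h]
    ring
  rw [lapE_congr (dunklQuot_eventuallyEq h), lapE_mul (h1.add (contDiffAt_const.mul hrefl))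
    (contDiffAt_fstInner_inv h), hcross, lapE_add h1 (contDiffAt_const.mul hrefl),
    lapE_const_mul _ hrefl, lapE_comp_reflProd hα h2, lapE_fstInner_inv h, hα]
  field_simp
  ring

end DunklQuotient

/-! ### Root systems and the Dunkl commutator -/

/-- A normalized root system with an invariant weight `k ≥ 0`, phrased without a choice of positive
roots. The weight `k` is half of the multiplicity function, as in `dunklOp`. -/
structure WeightedRootSystem {d : ℕ} (R : Finset (Ed d)) (k : Ed d → ℝ) : Prop where
  norm_two : ∀ α ∈ R, ⟪α, α⟫ = (2 : ℝ)
  refl_mem : ∀ α ∈ R, ∀ β ∈ R, reflAt α β ∈ R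
  nonneg : ∀ α ∈ R, 0 ≤ k α
  inv : ∀ α ∈ R, ∀ β ∈ R, k (reflAt α β) = k β

section Reflections

variable {d : ℕ}

lemma inner_reflAt (α β γ : Ed d) : ⟪reflAt α β, γ⟫ = ⟪β, γ⟫ - ⟪α, β⟫ * ⟪α, γ⟫ := by
  simp [reflAt, inner_sub_left, inner_smul_left]

lemma inner_reflAt_self {β : Ed d} (hβ : ⟪β, β⟫ = (2 : ℝ)) (α : Ed d) :
    ⟪reflAt β α, β⟫ = - ⟪α, β⟫ := by
  rw [inner_reflAt, hβ, real_inner_comm α β]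
  ring

lemma fstInner_reflAt (α β : Ed d) (p : Ed d × ℝ) :
    fstInner (reflAt β α) p = fstInner α p - ⟪α, β⟫ * fstInner β p := by
  simp only [fstInner_apply, inner_reflAt, real_inner_comm α β]

lemma fstInner_reflProd_eq (α β : Ed d) (p : Ed d × ℝ) :
    fstInner β (reflProd α p) = fstInner (reflAt α β) p := by
  rw [fstInner_reflProd, fstInner_reflAt, real_inner_comm]

lemma reflAt_reflAt {α : Ed d} (hα : ⟪α, α⟫ = (2 : ℝ)) (β : Ed d) :
    reflAt α (reflAt α β) = β := by
  simp only [reflAt, inner_sub_right, inner_smul_right, hα]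
  module

lemma reflAt_self {α : Ed d} (hα : ⟪α, α⟫ = (2 : ℝ)) : reflAt α α = -α := by
  simp only [reflAt, hα]
  module

lemma reflAt_neg (α β : Ed d) : reflAt α (-β) = -reflAt α β := by
  simp only [reflAt, inner_neg_right]
  module

lemma fstInner_neg (α : Ed d) (p : Ed d × ℝ) : fstInner (-α) p = - fstInner α p := by
  simp [fstInner_apply]

lemma reflProd_neg (α : Ed d) (p : Ed d × ℝ) : reflProd (-α) p = reflProd α p := by
  rw [reflProd_eq, reflProd_eq]
  simp [reflAt]

lemma reflProd_reflAt {α : Ed d} (hα : ⟪α, α⟫ = (2 : ℝ)) (β : Ed d) (p : Ed d × ℝ) :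
    reflProd (reflAt α β) p = reflProd α (reflProd β (reflProd α p)) := by
  have hroot : ((reflAt α β, 0) : Ed d × ℝ) = reflProd α (β, 0) := by rw [reflProd_eq]
  rw [reflProd_apply (reflAt α β), reflProd_apply β, map_sub, map_smul, reflProd_reflProd hα,
    fstInner_reflProd_eq, hroot]

lemma rotation_form_pos {α β : Ed d} (hα : ⟪α, α⟫ = (2 : ℝ)) (hβ : ⟪β, β⟫ = (2 : ℝ))
    (hne : α ≠ β) (hne' : α ≠ -β) {s : ℝ} (hs : s ≠ 0) (t : ℝ) :
    0 < s ^ 2 + t ^ 2 - ⟪α, β⟫ * s * t := by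
  have hsub : 0 < ⟪α - β, α - β⟫ := real_inner_self_pos.2 (sub_ne_zero.2 hne)
  have hadd : 0 < ⟪α + β, α + β⟫ :=
    real_inner_self_pos.2 fun h => hne' (eq_neg_of_add_eq_zero_left h)
  rw [real_inner_sub_sub_self, hα, hβ] at hsub
  rw [real_inner_add_add_self, hα, hβ] at hadd
  have hs2 : 0 < s ^ 2 := by positivity
  nlinarith [mul_nonneg (by linarith : (0 : ℝ) ≤ 2 + ⟪α, β⟫) (sq_nonneg (s - t)),
    mul_nonneg (by linarith : (0 : ℝ) ≤ 2 - ⟪α, β⟫) (sq_nonneg (s + t)),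
    mul_pos (by linarith : (0 : ℝ) < 2 - ⟪α, β⟫) hs2,
    mul_pos (by linarith : (0 : ℝ) < 2 + ⟪α, β⟫) hs2]

end Reflections

namespace WeightedRootSystem

variable {d : ℕ} {R : Finset (Ed d)} {k : Ed d → ℝ}

lemma neg_mem (h : WeightedRootSystem R k) {α : Ed d} (hα : α ∈ R) : -α ∈ R := by
  rw [← reflAt_self (h.norm_two α hα)]
  exact h.refl_mem α hα α hα

lemma weight_neg (h : WeightedRootSystem R k) {α : Ed d} (hα : α ∈ R) : k (-α) = k α := by
  rw [← reflAt_self (h.norm_two α hα)]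
  exact h.inv α hα α hα

lemma sum_reflAt (h : WeightedRootSystem R k) {α : Ed d} (hα : α ∈ R) (f : Ed d → ℝ) :
    ∑ β ∈ R, f (reflAt α β) = ∑ β ∈ R, f β :=
  Finset.sum_nbij' (reflAt α) (reflAt α) (h.refl_mem α hα) (h.refl_mem α hα)
    (fun β _ => reflAt_reflAt (h.norm_two α hα) β) (fun β _ => reflAt_reflAt (h.norm_two α hα) β)
    fun _ _ => rfl

/-- The map `(α, β) ↦ (β, -σ_β α)` preserves the rotation `σ_α σ_β`. -/
lemma sum_rotation (h : WeightedRootSystem R k) (f : Ed d × Ed d → ℝ) :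
    ∑ z ∈ R ×ˢ R, f (z.2, -reflAt z.2 z.1) = ∑ z ∈ R ×ˢ R, f z := by
  refine Finset.sum_nbij' (fun z => (z.2, -reflAt z.2 z.1)) (fun z => (-reflAt z.1 z.2, z.1))
    ?_ ?_ ?_ ?_ fun _ _ => rfl
  · intro z hz
    obtain ⟨h1, h2⟩ := Finset.mem_product.1 hz
    exact Finset.mem_product.2 ⟨h2, h.neg_mem (h.refl_mem _ h2 _ h1)⟩
  · intro z hz
    obtain ⟨h1, h2⟩ := Finset.mem_product.1 hz
    exact Finset.mem_product.2 ⟨h.neg_mem (h.refl_mem _ h1 _ h2), h1⟩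
  · intro z hz
    simp [reflAt_neg, reflAt_reflAt (h.norm_two _ (Finset.mem_product.1 hz).2)]
  · intro z hz
    simp [reflAt_neg, reflAt_reflAt (h.norm_two _ (Finset.mem_product.1 hz).1)]

/-- In `[Δ_κ, T_ξ]`, the coefficient of the single reflection `σ_δ`. -/
lemma sum_reflection_coeff (h : WeightedRootSystem R k) {p : Ed d × ℝ}
    (hp : ∀ α ∈ R, fstInner α p ≠ 0) (ξ : Ed d × ℝ) {δ : Ed d} (hδ : δ ∈ R) :
    ∑ α ∈ R, k α * (fstInner α ξ * ⟪α, δ⟫ / (fstInner α p * fstInner (reflAt δ α) p)) =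
      - (fstInner δ ξ / fstInner δ p) * ∑ α ∈ R, k α * (⟪α, δ⟫ / fstInner α p) := by
  have hδ2 := h.norm_two δ hδ
  set f : Ed d → ℝ := fun α =>
    k α * (fstInner α ξ * ⟪α, δ⟫ / (fstInner α p * fstInner (reflAt δ α) p)) with hf
  set g : Ed d → ℝ := fun α => k α * (⟪α, δ⟫ / fstInner α p) with hg
  have hsymm : ∑ α ∈ R, ((f α + f (reflAt δ α)) +
      fstInner δ ξ / fstInner δ p * (g α + g (reflAt δ α))) = 0 := by
    refine Finset.sum_eq_zero fun α hα => ?_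
    have hα0 := hp α hα
    have hδ0 := hp δ hδ
    have hδα0 := hp _ (h.refl_mem δ hδ α hα)
    simp only [hf, hg, reflAt_reflAt hδ2, h.inv δ hδ α hα, inner_reflAt_self hδ2,
      fstInner_reflAt α δ ξ]
    rw [fstInner_reflAt] at hδα0 ⊢
    field_simp
    ring
  rw [Finset.sum_add_distrib, ← Finset.mul_sum, Finset.sum_add_distrib, Finset.sum_add_distrib,
    h.sum_reflAt hδ f, h.sum_reflAt hδ g] at hsymm
  linarith

lemma rotation_coeff_eq_sub {c s t x y : ℝ} (hs : s ≠ 0) (ht : t ≠ 0) (hst : s - c * t ≠ 0)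
    (hQ : s ^ 2 + t ^ 2 - c * s * t ≠ 0) :
    x * c / (s * t * (s - c * t)) =
      ((c * x - y) / t - x / s) / (s ^ 2 + t ^ 2 - c * s * t) -
        ((c * y - -(x - c * y)) / -(s - c * t) - y / t) / (s ^ 2 + t ^ 2 - c * s * t) := by
  field_simp
  ring

/-- In `[Δ_κ, T_ξ]`, the coefficients of a rotation `σ_α σ_β ≠ 1` telescope along the orbits of
`(α, β) ↦ (β, -σ_β α)`; dividing by the form `s_α² + s_β² - ⟨α, β⟩ s_α s_β`, which is constant on
the orbits, exhibits them as differences. -/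
lemma sum_rotation_coeff (h : WeightedRootSystem R k) {p : Ed d × ℝ}
    (hp : ∀ α ∈ R, fstInner α p ≠ 0) (ξ : Ed d × ℝ) (φ : Ed d × ℝ → ℝ) (hφ : φ p = 0) :
    ∑ α ∈ R, ∑ β ∈ R, k α * k β * (fstInner α ξ * ⟪α, β⟫ * φ (reflProd α (reflProd β p)) /
      (fstInner α p * fstInner β p * fstInner (reflAt β α) p)) = 0 := by
  set w : Ed d × Ed d → ℝ := fun z =>
    k z.1 * k z.2 * φ (reflProd z.1 (reflProd z.2 p)) with hw
  set Q : Ed d × Ed d → ℝ := fun z =>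
    fstInner z.1 p ^ 2 + fstInner z.2 p ^ 2 - ⟪z.1, z.2⟫ * fstInner z.1 p * fstInner z.2 p with hQ
  set H : Ed d × Ed d → ℝ := fun z => w z / Q z *
    ((⟪z.1, z.2⟫ * fstInner z.1 ξ - fstInner z.2 ξ) / fstInner z.2 p -
      fstInner z.1 ξ / fstInner z.1 p) with hH
  suffices hterm : ∀ z ∈ R ×ˢ R, k z.1 * k z.2 * (fstInner z.1 ξ * ⟪z.1, z.2⟫ *
      φ (reflProd z.1 (reflProd z.2 p)) /
        (fstInner z.1 p * fstInner z.2 p * fstInner (reflAt z.2 z.1) p)) =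
      H z - H (z.2, -reflAt z.2 z.1) by
    rw [← Finset.sum_product', Finset.sum_congr rfl hterm, Finset.sum_sub_distrib,
      h.sum_rotation, sub_self]
  rintro ⟨α, β⟩ hz
  obtain ⟨hα, hβ⟩ : α ∈ R ∧ β ∈ R := Finset.mem_product.1 hz
  have hα2 := h.norm_two α hα
  have hβ2 := h.norm_two β hβ
  have hinner : ⟪β, -reflAt β α⟫ = ⟪α, β⟫ := by
    rw [inner_neg_right, real_inner_comm, inner_reflAt_self hβ2, neg_neg]
  have hwT : w (β, -reflAt β α) = w (α, β) := by
    simp only [hw]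
    rw [h.weight_neg (h.refl_mem _ hβ _ hα), h.inv _ hβ _ hα, reflProd_neg, reflProd_reflAt hβ2,
      reflProd_reflProd hβ2]
    ring
  have hQT : Q (β, -reflAt β α) = Q (α, β) := by
    simp only [hQ, hinner, fstInner_neg, fstInner_reflAt]
    ring
  have hα0 := hp α hα
  have hβ0 := hp β hβ
  have hβα0 := hp _ (h.refl_mem _ hβ _ hα)
  simp only [hH, hwT, hQT, hinner, fstInner_neg, fstInner_reflAt] at hβα0 ⊢
  by_cases hfix : reflProd α (reflProd β p) = p
  · simp [hw, hfix, hφ]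
  · have hQ0 : 0 < Q (α, β) := by
      refine rotation_form_pos hα2 hβ2 (fun he => hfix ?_) (fun he => hfix ?_) hα0 _
      · rw [he, reflProd_reflProd hβ2]
      · rw [he, reflProd_neg, reflProd_reflProd hβ2]
    linear_combination w (α, β) *
      rotation_coeff_eq_sub (x := fstInner α ξ) (y := fstInner β ξ) hα0 hβ0 hβα0 hQ0.ne'

/-- The order-zero part of `[Δ_κ, T_ξ]`. -/
lemma sum_value_terms (h : WeightedRootSystem R k) {p : Ed d × ℝ}
    (hp : ∀ α ∈ R, fstInner α p ≠ 0) (ξ : Ed d × ℝ) (F : Ed d × ℝ → ℝ) :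
    ∑ α ∈ R, ∑ β ∈ R, k α * k β * (fstInner α ξ * ⟪α, β⟫ / (fstInner α p * fstInner β p) *
      ((F p - F (reflProd α p)) / fstInner α p -
        (F (reflProd β p) - F (reflProd α (reflProd β p))) / fstInner (reflAt β α) p)) = 0 := by
  have hrot := h.sum_rotation_coeff hp ξ (fun q => F q - F p) (sub_self _)
  have hrefl : ∑ α ∈ R, ∑ β ∈ R, k α * k β * (fstInner α ξ * ⟪α, β⟫ * (F (reflProd β p) - F p) /
      (fstInner α p * fstInner β p * fstInner (reflAt β α) p)) =
      - ∑ α ∈ R, ∑ β ∈ R, k α * k β * (fstInner α ξ * ⟪α, β⟫ * (F (reflProd α p) - F p) /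
        (fstInner α p ^ 2 * fstInner β p)) := by
    rw [Finset.sum_comm, ← Finset.sum_neg_distrib]
    refine Finset.sum_congr rfl fun δ hδ => ?_
    have hcoeff := congrArg (k δ * (F (reflProd δ p) - F p) / fstInner δ p * ·)
      (h.sum_reflection_coeff hp ξ hδ)
    simp only [neg_mul, mul_neg, Finset.mul_sum] at hcoeff
    rw [← Finset.sum_neg_distrib]
    refine (Finset.sum_congr rfl fun α _ => ?_).trans
      (hcoeff.trans (Finset.sum_congr rfl fun α _ => ?_))
    · ring
    · rw [real_inner_comm α δ]
      ring
  have hsplit := congrArg₂ (· - ·) hrot (add_eq_zero_iff_eq_neg.2 hrefl)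
  simp only [← Finset.sum_sub_distrib, ← Finset.sum_add_distrib, sub_zero] at hsplit
  rw [← hsplit]
  refine Finset.sum_congr rfl fun α _ => Finset.sum_congr rfl fun β _ => ?_
  ring

end WeightedRootSystem

/-- The terms of order at most one of `-Δ_κ`, for a function with values `F` and gradient `D`; a
function is `κ`-harmonic when its Euclidean Laplacian equals this. -/
def dunklLowOrder {d : ℕ} (R : Finset (Ed d)) (k : Ed d → ℝ) (F : Ed d × ℝ → ℝ)
    (D : Ed d × ℝ → (Ed d × ℝ) →L[ℝ] ℝ) (q : Ed d × ℝ) : ℝ :=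
  -2 * ∑ β ∈ R, k β *
    (D q (β, 0) / fstInner β q - (F q - F (reflProd β q)) / fstInner β q ^ 2)

namespace WeightedRootSystem

variable {d : ℕ} {R : Finset (Ed d)} {k : Ed d → ℝ}

lemma dunklLowOrder_reflProd (h : WeightedRootSystem R k) (F : Ed d × ℝ → ℝ)
    (D : Ed d × ℝ → (Ed d × ℝ) →L[ℝ] ℝ) (p : Ed d × ℝ) {α : Ed d} (hα : α ∈ R) :
    dunklLowOrder R k F D (reflProd α p) = -2 * ∑ β ∈ R, k β *
      (D (reflProd α p) (reflProd α (β, 0)) / fstInner β p -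
        (F (reflProd α p) - F (reflProd α (reflProd β p))) / fstInner β p ^ 2) := by
  have hα2 := h.norm_two α hα
  unfold dunklLowOrder
  rw [← h.sum_reflAt hα]
  congr 1
  refine Finset.sum_congr rfl fun β hβ => ?_
  have hroot : ((reflAt α β, 0) : Ed d × ℝ) = reflProd α (β, 0) := by rw [reflProd_eq]
  rw [h.inv α hα β hβ, fstInner_reflProd_eq, reflAt_reflAt hα2, reflProd_reflAt hα2,
    reflProd_reflProd hα2, hroot]

/-- The terms of `[Δ_κ, T_ξ]` that are linear in the weight `k`. -/
lemma commutator_linear_term (α : Ed d) (p ξ : Ed d × ℝ) (F : Ed d × ℝ → ℝ)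
    (D : Ed d × ℝ → (Ed d × ℝ) →L[ℝ] ℝ) (H : Ed d → ℝ) :
    -2 * (H α / fstInner α p - D p (α, 0) * fstInner α ξ / fstInner α p ^ 2
        - (D p ξ - D (reflProd α p) (reflProd α ξ)) / fstInner α p ^ 2
        + 2 * (F p - F (reflProd α p)) * fstInner α ξ / fstInner α p ^ 3) +
      fstInner α ξ * (-(2 * (D p (α, 0) + D (reflProd α p) (α, 0)) / fstInner α p ^ 2)
        + 4 * (F p - F (reflProd α p)) / fstInner α p ^ 3) +
      2 * (H α / fstInner α p - (D p ξ - D (reflProd α p) ξ) / fstInner α p ^ 2) = 0 := by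
  rw [reflProd_apply α ξ, map_sub, map_smul, smul_eq_mul]
  ring

/-- The terms of `[Δ_κ, T_ξ]` that are quadratic in the weight `k`. -/
lemma commutator_quadratic_terms (h : WeightedRootSystem R k) {p : Ed d × ℝ}
    (hp : ∀ α ∈ R, fstInner α p ≠ 0) (ξ : Ed d × ℝ) (F : Ed d × ℝ → ℝ)
    (D : Ed d × ℝ → (Ed d × ℝ) →L[ℝ] ℝ) :
    ∑ α ∈ R, ∑ β ∈ R, (k α * fstInner α ξ * (-2 * (k β *
        ((D p (β, 0) / fstInner β p - (F p - F (reflProd β p)) / fstInner β p ^ 2) -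
        (D (reflProd α p) (reflProd α (β, 0)) / fstInner β p -
          (F (reflProd α p) - F (reflProd α (reflProd β p))) / fstInner β p ^ 2)))) /
          fstInner α p +
      2 * (k β * (k α * fstInner α ξ *
        (((D p (β, 0) - D (reflProd α p) (reflProd α (β, 0))) / fstInner α p
            - (F p - F (reflProd α p)) * ⟪α, β⟫ / fstInner α p ^ 2) / fstInner β p -
          ((F p - F (reflProd α p)) / fstInner α p -
            (F (reflProd β p) - F (reflProd α (reflProd β p))) / fstInner α (reflProd β p)) /
            fstInner β p ^ 2)))) = 0 := by
  have hvalue := congrArg (-2 * ·) (h.sum_value_terms hp ξ F)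
  simp only [Finset.mul_sum, mul_zero] at hvalue
  refine (Finset.sum_congr rfl fun α hα => Finset.sum_congr rfl fun β hβ => ?_).trans hvalue
  have hα0 := hp α hα
  have hβ0 := hp β hβ
  have hβα0 := hp _ (h.refl_mem _ hβ _ hα)
  rw [fstInner_reflProd_eq]
  rw [fstInner_reflAt] at hβα0 ⊢
  generalize fstInner α p = s at *
  generalize hm : s - ⟪α, β⟫ * fstInner β p = m at hβα0 ⊢
  have hs : s = m + ⟪α, β⟫ * fstInner β p := by linarith
  field_simp
  rw [hs]
  ring

lemma mul_dunklLowOrder_sub_reflProd (h : WeightedRootSystem R k) (F : Ed d × ℝ → ℝ)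
    (D : Ed d × ℝ → (Ed d × ℝ) →L[ℝ] ℝ) (p : Ed d × ℝ) {α : Ed d} (hα : α ∈ R) (c r s t : ℝ) :
    k α * c * ((dunklLowOrder R k F D p - dunklLowOrder R k F D (reflProd α p)) / s - r + t) =
      k α * (c * (-r + t)) + ∑ β ∈ R, k α * c * (-2 * (k β *
        ((D p (β, 0) / fstInner β p - (F p - F (reflProd β p)) / fstInner β p ^ 2) -
        (D (reflProd α p) (reflProd α (β, 0)) / fstInner β p -
          (F (reflProd α p) - F (reflProd α (reflProd β p))) / fstInner β p ^ 2)))) / s := by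
  rw [h.dunklLowOrder_reflProd F D p hα, dunklLowOrder, ← mul_sub, ← Finset.sum_sub_distrib]
  simp only [← mul_sub, ← Finset.sum_div, ← Finset.mul_sum]
  ring

/-- `Δ_κ T_ξ = T_ξ Δ_κ` at a regular point, with all derivatives of the function replaced by formal
symbols: `F` for values, `D` for gradients, `H` for second derivatives in direction `ξ`, and
`dunklLowOrder` in place of the Laplacian. -/
lemma commutator (h : WeightedRootSystem R k) {p : Ed d × ℝ}
    (hp : ∀ α ∈ R, fstInner α p ≠ 0) (ξ : Ed d × ℝ) (F : Ed d × ℝ → ℝ)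
    (D : Ed d × ℝ → (Ed d × ℝ) →L[ℝ] ℝ) (H : Ed d → ℝ) :
    -2 * ∑ α ∈ R, k α * (H α / fstInner α p - D p (α, 0) * fstInner α ξ / fstInner α p ^ 2
        - (D p ξ - D (reflProd α p) (reflProd α ξ)) / fstInner α p ^ 2
        + 2 * (F p - F (reflProd α p)) * fstInner α ξ / fstInner α p ^ 3) +
    ∑ α ∈ R, k α * fstInner α ξ *
      ((dunklLowOrder R k F D p - dunklLowOrder R k F D (reflProd α p)) / fstInner α p
        - 2 * (D p (α, 0) + D (reflProd α p) (α, 0)) / fstInner α p ^ 2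
        + 4 * (F p - F (reflProd α p)) / fstInner α p ^ 3) =
    -2 * ∑ β ∈ R, k β * ((H β + ∑ α ∈ R, k α * fstInner α ξ *
          ((D p (β, 0) - D (reflProd α p) (reflProd α (β, 0))) / fstInner α p
            - (F p - F (reflProd α p)) * ⟪α, β⟫ / fstInner α p ^ 2)) / fstInner β p
        - ((D p ξ + ∑ α ∈ R, k α * fstInner α ξ * ((F p - F (reflProd α p)) / fstInner α p))
          - (D (reflProd β p) ξ + ∑ α ∈ R, k α * fstInner α ξ *
            ((F (reflProd β p) - F (reflProd α (reflProd β p))) / fstInner α (reflProd β p)))) /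
              fstInner β p ^ 2) := by
  have hlow : ∀ β ∈ R, k β * ((H β + ∑ α ∈ R, k α * fstInner α ξ *
          ((D p (β, 0) - D (reflProd α p) (reflProd α (β, 0))) / fstInner α p
            - (F p - F (reflProd α p)) * ⟪α, β⟫ / fstInner α p ^ 2)) / fstInner β p
        - ((D p ξ + ∑ α ∈ R, k α * fstInner α ξ * ((F p - F (reflProd α p)) / fstInner α p))
          - (D (reflProd β p) ξ + ∑ α ∈ R, k α * fstInner α ξ *
            ((F (reflProd β p) - F (reflProd α (reflProd β p))) / fstInner α (reflProd β p)))) /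
              fstInner β p ^ 2) =
      k β * (H β / fstInner β p - (D p ξ - D (reflProd β p) ξ) / fstInner β p ^ 2) +
      ∑ α ∈ R, k β * (k α * fstInner α ξ *
        (((D p (β, 0) - D (reflProd α p) (reflProd α (β, 0))) / fstInner α p
            - (F p - F (reflProd α p)) * ⟪α, β⟫ / fstInner α p ^ 2) / fstInner β p -
          ((F p - F (reflProd α p)) / fstInner α p -
            (F (reflProd β p) - F (reflProd α (reflProd β p))) / fstInner α (reflProd β p)) /
            fstInner β p ^ 2)) := by
    intro β _
    simp only [mul_sub (_ * fstInner _ ξ), ← Finset.mul_sum, Finset.sum_sub_distrib,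
      ← mul_div_assoc, ← Finset.sum_div]
    ring
  rw [Finset.sum_congr rfl hlow, Finset.sum_congr rfl fun α hα =>
    h.mul_dunklLowOrder_sub_reflProd F D p hα _ _ _ _]
  have hlin := Finset.sum_eq_zero (s := R) fun α _ =>
    mul_eq_zero_of_right (k α) (commutator_linear_term α p ξ F D H)
  have hzero := congrArg₂ (· + ·) hlin (h.commutator_quadratic_terms hp ξ F D)
  rw [← sub_eq_zero]
  refine Eq.trans ?_ (hzero.trans (add_zero 0))
  simp only [mul_add (k _), Finset.sum_add_distrib, mul_left_comm (k _) (-2 : ℝ),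
    mul_left_comm (k _) (2 : ℝ), ← Finset.mul_sum (a := (2 : ℝ)), ← Finset.mul_sum (a := (-2 : ℝ))]
  rw [Finset.sum_comm (s := R) (t := R) (f := fun β α => k β * _)]
  ring

end WeightedRootSystem

/-! ### Dunkl harmonic functions -/

/-- `u` is `C²` on the open reflection invariant set `Ω` and solves `Δ_κ u = 0` at its regular
points. The sum in `Δ_κ` is spread over all of `R`, so that `κ = 2k`. -/
structure IsDunklHarmonic {d : ℕ} (R : Finset (Ed d)) (k : Ed d → ℝ) (u : Ed d × ℝ → ℝ)
    (Ω : Set (Ed d × ℝ)) : Prop where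
  isOpen : IsOpen Ω
  inv : ∀ α ∈ R, ∀ q ∈ Ω, reflProd α q ∈ Ω
  smooth : ∀ q ∈ Ω, ContDiffAt ℝ 2 u q
  harm : ∀ q ∈ Ω, (∀ α ∈ R, fstInner α q ≠ 0) → lapE u q = dunklLowOrder R k u (fderiv ℝ u) q

lemma eventually_regular {d : ℕ} {R : Finset (Ed d)} {p : Ed d × ℝ}
    (hp : ∀ β ∈ R, fstInner β p ≠ 0) : ∀ᶠ q in 𝓝 p, ∀ β ∈ R, fstInner β q ≠ 0 :=
  (Filter.eventually_all_finset R).2 fun β hβ =>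
    (fstInner β).continuous.continuousAt.eventually_ne (hp β hβ)

lemma HasApproxLaplacianAt.finsetSum {d : ℕ} {ι : Type*} {s : Finset ι} {f : ι → Ed d × ℝ → ℝ}
    {p : Ed d × ℝ} {ℓ : ι → ℝ} (h : ∀ i ∈ s, HasApproxLaplacianAt (f i) p (ℓ i)) :
    HasApproxLaplacianAt (fun q => ∑ i ∈ s, f i q) p (∑ i ∈ s, ℓ i) := by
  induction s using Finset.cons_induction with
  | empty =>
    simpa [lapE_const] using hasApproxLaplacianAt_of_contDiffAt (contDiffAt_const (c := (0 : ℝ)))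
  | cons i s hi ih =>
    simp only [Finset.sum_cons]
    exact (h i (Finset.mem_cons_self i s)).add
      (ih fun j hj => h j (Finset.mem_cons_of_mem hj))

lemma WeightedRootSystem.regular_reflProd {d : ℕ} {R : Finset (Ed d)} {k : Ed d → ℝ}
    {α : Ed d} {p : Ed d × ℝ} (hR : WeightedRootSystem R k)
    (hp : ∀ β ∈ R, fstInner β p ≠ 0) (hα : α ∈ R) :
    ∀ β ∈ R, fstInner β (reflProd α p) ≠ 0 := fun β hβ => by
  rw [fstInner_reflProd_eq]
  exact hp _ (hR.refl_mem α hα β hβ)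

section LowOrder

variable {d : ℕ} {R : Finset (Ed d)} {k : Ed d → ℝ} {u : Ed d × ℝ → ℝ} {α : Ed d} {p : Ed d × ℝ}

lemma lowOrderTerm_eventuallyEq (h : fstInner α p ≠ 0) :
    (fun q => fderiv ℝ u q (α, 0) / fstInner α q - (u q - u (reflProd α q)) / fstInner α q ^ 2)
      =ᶠ[𝓝 p] fun q => (fderiv ℝ u q (α, 0) + (-1) * dunklQuot u α q) * (fstInner α q)⁻¹ := by
  filter_upwards [(fstInner α).continuous.continuousAt.eventually_ne h] with q hq
  rw [dunklQuot_of_ne hq]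
  ring

lemma contDiffAt_lowOrderTerm (h : fstInner α p ≠ 0) (h1 : ContDiffAt ℝ 2 u p)
    (h2 : ContDiffAt ℝ 2 u (reflProd α p)) :
    ContDiffAt ℝ 1 (fun q => fderiv ℝ u q (α, 0) / fstInner α q -
      (u q - u (reflProd α q)) / fstInner α q ^ 2) p :=
  ((((h1.fderiv_right (by norm_num)).clm_apply contDiffAt_const).add (contDiffAt_const.mul
    ((contDiffAt_dunklQuot h h1 h2).of_le (by norm_num)))).mul
      (contDiffAt_fstInner_inv h)).congr_of_eventuallyEq (lowOrderTerm_eventuallyEq h)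

lemma fderiv_lowOrderTerm (h : fstInner α p ≠ 0) (h1 : ContDiffAt ℝ 2 u p)
    (h2 : ContDiffAt ℝ 2 u (reflProd α p)) (ξ : Ed d × ℝ) :
    fderiv ℝ (fun q => fderiv ℝ u q (α, 0) / fstInner α q -
        (u q - u (reflProd α q)) / fstInner α q ^ 2) p ξ =
      fderiv ℝ (fderiv ℝ u) p ξ (α, 0) / fstInner α p
        - fderiv ℝ u p (α, 0) * fstInner α ξ / fstInner α p ^ 2
        - (fderiv ℝ u p ξ - fderiv ℝ u (reflProd α p) (reflProd α ξ)) / fstInner α p ^ 2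
        + 2 * (u p - u (reflProd α p)) * fstInner α ξ / fstInner α p ^ 3 := by
  have hderiv := differentiableAt_fderiv_apply h1 ((α, 0) : Ed d × ℝ)
  have hquot := (differentiableAt_dunklQuot (α := α) h1 h2).const_mul (-1)
  have hinv := (contDiffAt_fstInner_inv h (n := 1)).differentiableAt (by norm_num)
  have hsymm := (h1.isSymmSndFDerivAt (by simp)).eq (α, 0) ξ
  rw [(lowOrderTerm_eventuallyEq h).fderiv_eq, fderiv_fun_mul (hderiv.fun_add hquot) hinv,
    fderiv_fun_add hderiv hquot, fderiv_const_mul (differentiableAt_dunklQuot h1 h2),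
    fderiv_fderiv_apply h1]
  simp only [add_apply, smul_apply, smul_eq_mul, fderiv_fstInner_inv h, dunklQuot_of_ne h,
    fderiv_dunklQuot h (h1.differentiableAt (by norm_num)) (h2.differentiableAt (by norm_num)),
    hsymm]
  field_simp
  ring

lemma hasStrictFDerivAt_dunklLowOrder (hp : ∀ α ∈ R, fstInner α p ≠ 0) (h1 : ContDiffAt ℝ 2 u p)
    (h2 : ∀ α ∈ R, ContDiffAt ℝ 2 u (reflProd α p)) :
    HasStrictFDerivAt (dunklLowOrder R k u (fderiv ℝ u))
      (fderiv ℝ (dunklLowOrder R k u (fderiv ℝ u)) p) p :=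
  ContDiffAt.hasStrictFDerivAt (n := 1) (contDiffAt_const.mul (ContDiffAt.sum fun α hα =>
    contDiffAt_const.mul (contDiffAt_lowOrderTerm (hp α hα) h1 (h2 α hα)))) (by norm_num)

lemma fderiv_dunklLowOrder (hp : ∀ α ∈ R, fstInner α p ≠ 0) (h1 : ContDiffAt ℝ 2 u p)
    (h2 : ∀ α ∈ R, ContDiffAt ℝ 2 u (reflProd α p)) (ξ : Ed d × ℝ) :
    fderiv ℝ (dunklLowOrder R k u (fderiv ℝ u)) p ξ =
      -2 * ∑ α ∈ R, k α * (fderiv ℝ (fderiv ℝ u) p ξ (α, 0) / fstInner α p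
        - fderiv ℝ u p (α, 0) * fstInner α ξ / fstInner α p ^ 2
        - (fderiv ℝ u p ξ - fderiv ℝ u (reflProd α p) (reflProd α ξ)) / fstInner α p ^ 2
        + 2 * (u p - u (reflProd α p)) * fstInner α ξ / fstInner α p ^ 3) := by
  have hterm := fun α hα =>
    (contDiffAt_lowOrderTerm (hp α hα) h1 (h2 α hα)).differentiableAt (by norm_num)
  unfold dunklLowOrder
  rw [fderiv_const_mul (DifferentiableAt.fun_sum fun α hα => (hterm α hα).const_mul (k α)),
    fderiv_fun_sum fun α hα => (hterm α hα).const_mul (k α)]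
  simp only [smul_apply, sum_apply, smul_eq_mul]
  congr 1
  refine Finset.sum_congr rfl fun α hα => ?_
  rw [fderiv_const_mul (hterm α hα), smul_apply, smul_eq_mul,
    fderiv_lowOrderTerm (hp α hα) h1 (h2 α hα)]

lemma dunklOp_of_regular (hp : ∀ α ∈ R, fstInner α p ≠ 0) (ξ : Ed d × ℝ) :
    dunklOp R k u ξ p = fderiv ℝ u p ξ +
      ∑ α ∈ R, k α * fstInner α ξ * ((u p - u (reflProd α p)) / fstInner α p) :=
  congrArg (fderiv ℝ u p ξ + ·)
    (Finset.sum_congr rfl fun α hα => by rw [dunklQuot_of_ne (hp α hα)])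

lemma fderiv_dunklOp (hp : ∀ α ∈ R, fstInner α p ≠ 0) (h1 : ContDiffAt ℝ 2 u p)
    (h2 : ∀ α ∈ R, ContDiffAt ℝ 2 u (reflProd α p)) (ξ : Ed d × ℝ) (w : Ed d × ℝ) :
    fderiv ℝ (dunklOp R k u ξ) p w = fderiv ℝ (fderiv ℝ u) p ξ w +
      ∑ α ∈ R, k α * fstInner α ξ *
        ((fderiv ℝ u p w - fderiv ℝ u (reflProd α p) (reflProd α w)) / fstInner α p
          - (u p - u (reflProd α p)) * fstInner α w / fstInner α p ^ 2) := by
  have hquot := fun α hα => differentiableAt_dunklQuot (α := α) h1 (h2 α hα)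
  unfold dunklOp
  rw [fderiv_fun_add (differentiableAt_fderiv_apply h1 ξ)
      (DifferentiableAt.fun_sum fun α hα => (hquot α hα).const_mul _), fderiv_fderiv_apply h1,
    fderiv_fun_sum fun α hα => (hquot α hα).const_mul _, add_apply, sum_apply]
  congr 1
  refine Finset.sum_congr rfl fun α hα => ?_
  rw [fderiv_const_mul (hquot α hα), smul_apply, smul_eq_mul, fderiv_dunklQuot (hp α hα)
    (h1.differentiableAt (by norm_num)) ((h2 α hα).differentiableAt (by norm_num))]

end LowOrder

namespace IsDunklHarmonic

variable {d : ℕ} {R : Finset (Ed d)} {k : Ed d → ℝ} {u : Ed d × ℝ → ℝ} {Ω : Set (Ed d × ℝ)}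
  {p : Ed d × ℝ}

lemma smooth_reflProd (hu : IsDunklHarmonic R k u Ω) (hpΩ : p ∈ Ω) :
    ∀ α ∈ R, ContDiffAt ℝ 2 u (reflProd α p) :=
  fun α hα => hu.smooth _ (hu.inv α hα p hpΩ)

lemma lapE_eventuallyEq (hu : IsDunklHarmonic R k u Ω) (hpΩ : p ∈ Ω)
    (hp : ∀ β ∈ R, fstInner β p ≠ 0) : lapE u =ᶠ[𝓝 p] dunklLowOrder R k u (fderiv ℝ u) := by
  filter_upwards [hu.isOpen.eventually_mem hpΩ, eventually_regular hp] with q hq hreg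
    using hu.harm q hq hreg

lemma lapE_dunklQuot (hu : IsDunklHarmonic R k u Ω) (hR : WeightedRootSystem R k) (hpΩ : p ∈ Ω)
    (hp : ∀ β ∈ R, fstInner β p ≠ 0) {α : Ed d} (hα : α ∈ R) :
    lapE (dunklQuot u α) p = (dunklLowOrder R k u (fderiv ℝ u) p -
        dunklLowOrder R k u (fderiv ℝ u) (reflProd α p)) / fstInner α p
      - 2 * (fderiv ℝ u p (α, 0) + fderiv ℝ u (reflProd α p) (α, 0)) / fstInner α p ^ 2
      + 4 * (u p - u (reflProd α p)) / fstInner α p ^ 3 := by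
  rw [_root_.lapE_dunklQuot (hR.norm_two α hα) (hp α hα) (hu.smooth p hpΩ)
    (hu.smooth_reflProd hpΩ α hα), hu.harm p hpΩ hp,
    hu.harm _ (hu.inv α hα p hpΩ) (hR.regular_reflProd hp hα)]

/-- Since `T_ξ` commutes with `Δ_κ`, `T_ξ u` solves the same equation as `u`. -/
lemma hasApproxLaplacianAt_dunklOp (hu : IsDunklHarmonic R k u Ω) (hR : WeightedRootSystem R k)
    (hpΩ : p ∈ Ω) (hp : ∀ β ∈ R, fstInner β p ≠ 0) (ξ : Ed d × ℝ) :
    HasApproxLaplacianAt (dunklOp R k u ξ) p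
      (dunklLowOrder R k (dunklOp R k u ξ) (fderiv ℝ (dunklOp R k u ξ)) p) := by
  have h1 := hu.smooth p hpΩ
  have h2 := hu.smooth_reflProd hpΩ
  have hderiv := hasApproxLaplacianAt_fderiv_apply h1 (hu.lapE_eventuallyEq hpΩ hp)
    (hasStrictFDerivAt_dunklLowOrder hp h1 h2) ξ
  have hquot : HasApproxLaplacianAt (fun q => ∑ α ∈ R, k α * fstInner α ξ * dunklQuot u α q) p
      (∑ α ∈ R, k α * fstInner α ξ * lapE (dunklQuot u α) p) :=
    .finsetSum fun α hα => (hasApproxLaplacianAt_of_contDiffAt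
      (contDiffAt_dunklQuot (hp α hα) h1 (h2 α hα))).const_mul _
  refine (hderiv.add hquot).congr_right ?_
  rw [fderiv_dunklLowOrder hp h1 h2,
    Finset.sum_congr rfl fun α hα => congrArg _ (hu.lapE_dunklQuot hR hpΩ hp hα),
    hR.commutator hp ξ u (fderiv ℝ u) fun α => fderiv ℝ (fderiv ℝ u) p ξ (α, 0)]
  unfold dunklLowOrder
  congr 1
  refine Finset.sum_congr rfl fun β hβ => ?_
  rw [fderiv_dunklOp hp h1 h2, dunklOp_of_regular hp,
    dunklOp_of_regular (hR.regular_reflProd hp hβ)]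
  rfl

end IsDunklHarmonic

/-! ### Bernstein's method -/

/-- The cut-off function of Bernstein's method, positive on the open unit ball around `Q`. -/
def bernsteinCutoff {d : ℕ} (Q q : Ed d × ℝ) : ℝ := 1 - distSq Q q

/-- Bernstein's auxiliary function `(χ v)² + A u²`, where `χ` is the cut-off function centred
at `Q`. -/
def bernsteinFun {d : ℕ} (A : ℝ) (v u : Ed d × ℝ → ℝ) (Q q : Ed d × ℝ) : ℝ :=
  (bernsteinCutoff Q q * v q) ^ 2 + A * u q ^ 2

/-- The constant `A` in Bernstein's auxiliary function, for `v = T_ξ u`. -/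
def bernsteinConst {d : ℕ} (R : Finset (Ed d)) (k : Ed d → ℝ) : ℝ :=
  (2 + 4 * ∑ α ∈ R, k α) * (4 * ∑ α ∈ R, k α + 2 * (d + 1) + 12) + 1

lemma HasApproxLaplacianAt.sq {d : ℕ} {f : Ed d × ℝ → ℝ} {p : Ed d × ℝ} {ℓ : ℝ}
    (hf : HasApproxLaplacianAt f p ℓ) : HasApproxLaplacianAt (fun q => f q ^ 2) p
      (2 * f p * ℓ + 2 * ∑ j, fderiv ℝ f p (stdVec j) ^ 2) := by
  simp only [pow_two]
  exact (hf.mul hf).congr_right (by ring)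

section BernsteinFun

variable {d : ℕ} {v u : Ed d × ℝ → ℝ} {A : ℝ} {Q p : Ed d × ℝ}

lemma contDiff_bernsteinCutoff (Q : Ed d × ℝ) {n : WithTop ℕ∞} :
    ContDiff ℝ n (bernsteinCutoff Q) :=
  contDiff_const.sub (contDiff_distSq Q)

lemma differentiable_bernsteinCutoff (Q : Ed d × ℝ) : Differentiable ℝ (bernsteinCutoff Q) :=
  (contDiff_bernsteinCutoff Q (n := 1)).differentiable (by norm_num)

lemma bernsteinCutoff_le_one (Q q : Ed d × ℝ) : bernsteinCutoff Q q ≤ 1 := by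
  unfold bernsteinCutoff distSq
  linarith [sq_nonneg ‖q.1 - Q.1‖, sq_nonneg (q.2 - Q.2)]

lemma fderiv_bernsteinCutoff (Q q w : Ed d × ℝ) :
    fderiv ℝ (bernsteinCutoff Q) q w = -(2 * ⟪q.1 - Q.1, w.1⟫ + 2 * (q.2 - Q.2) * w.2) := by
  unfold bernsteinCutoff
  rw [fderiv_const_sub, neg_apply, fderiv_distSq]

lemma lapE_bernsteinCutoff (Q q : Ed d × ℝ) : lapE (bernsteinCutoff Q) q = -(2 * (d + 1)) := by
  have hdist := (contDiff_distSq Q (n := 2)).contDiffAt (x := q)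
  have heq : bernsteinCutoff Q = fun q => 1 + (-1) * distSq Q q := by
    funext q
    unfold bernsteinCutoff
    ring
  rw [heq, lapE_add contDiffAt_const (contDiffAt_const.mul hdist), lapE_const,
    lapE_const_mul _ hdist, lapE_distSq]
  ring

lemma sum_sq_fderiv_bernsteinCutoff (Q q : Ed d × ℝ) :
    ∑ j, fderiv ℝ (bernsteinCutoff Q) q (stdVec j) ^ 2 = 4 * distSq Q q := by
  have hfst : ∀ i, fderiv ℝ (bernsteinCutoff Q) q (stdVec (some i)) ^ 2 =
      4 * ‖(q.1 - Q.1) i‖ ^ 2 := by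
    intro i
    rw [fderiv_bernsteinCutoff, Real.norm_eq_abs, sq_abs]
    simp only [stdVec, EuclideanSpace.inner_single_right, mul_zero, add_zero]
    simp
    ring
  have hsnd : fderiv ℝ (bernsteinCutoff Q) q (stdVec none) ^ 2 = 4 * (q.2 - Q.2) ^ 2 := by
    rw [fderiv_bernsteinCutoff]
    simp only [stdVec, inner_zero_right]
    ring
  rw [Fintype.sum_option, distSq, EuclideanSpace.norm_sq_eq]
  simp only [hfst, hsnd]
  rw [← Finset.mul_sum]
  ring

lemma neg_two_le_fderiv_bernsteinCutoff_div {α : Ed d} (hp : fstInner α p ≠ 0)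
    (hsign : 0 ≤ fstInner α p * ⟪α, Q.1⟫) :
    -2 ≤ fderiv ℝ (bernsteinCutoff Q) p (α, 0) / fstInner α p := by
  have hquot : fderiv ℝ (bernsteinCutoff Q) p (α, 0) / fstInner α p =
      -2 + 2 * (⟪α, Q.1⟫ / fstInner α p) := by
    rw [fderiv_bernsteinCutoff, real_inner_comm, inner_sub_right, ← fstInner_apply]
    field_simp
    ring
  have hnonneg : 0 ≤ ⟪α, Q.1⟫ / fstInner α p := by
    rw [← mul_div_mul_left _ _ hp]
    exact div_nonneg hsign (mul_self_nonneg _)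
  linarith

lemma hasFDerivAt_bernsteinFun (hv : DifferentiableAt ℝ v p) (hu : DifferentiableAt ℝ u p) :
    HasFDerivAt (bernsteinFun A v u Q)
      ((2 * (bernsteinCutoff Q p * v p)) • (bernsteinCutoff Q p • fderiv ℝ v p +
        v p • fderiv ℝ (bernsteinCutoff Q) p) + (A * (2 * u p)) • fderiv ℝ u p) p := by
  have hprod := ((differentiable_bernsteinCutoff Q p).hasFDerivAt.fun_mul hv.hasFDerivAt).pow 2
  refine (hprod.fun_add ((hu.hasFDerivAt.pow 2).const_mul A)).congr_fderiv ?_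
  simp [smul_smul]

lemma bernsteinFun_second_derivative_test {ℓ m : ℝ} (hv : HasApproxLaplacianAt v p ℓ)
    (hu : HasApproxLaplacianAt u p m) (L : (Ed d × ℝ) →L[ℝ] ℝ)
    (hmax : IsLocalMax (fun q => bernsteinFun A v u Q q + L q) p) :
    2 * (bernsteinCutoff Q p * v p) * (bernsteinCutoff Q p * ℓ +
        2 * (∑ j, fderiv ℝ (bernsteinCutoff Q) p (stdVec j) * fderiv ℝ v p (stdVec j))
        - v p * (2 * (d + 1))) +
      2 * ∑ j, (bernsteinCutoff Q p * fderiv ℝ v p (stdVec j) +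
        v p * fderiv ℝ (bernsteinCutoff Q) p (stdVec j)) ^ 2 +
      A * (2 * u p * m + 2 * ∑ j, fderiv ℝ u p (stdVec j) ^ 2) ≤ 0 := by
  have hcut := hasApproxLaplacianAt_of_contDiffAt
    (contDiff_bernsteinCutoff Q (n := 2)).contDiffAt (p := p)
  have hL := hasApproxLaplacianAt_of_contDiffAt (L.contDiff (n := 2)).contDiffAt (p := p)
  have hlap := (((hcut.mul hv).sq.add (hu.sq.const_mul A)).add hL).nonpos_of_isLocalMax hmax
  rw [lapE_clm, lapE_bernsteinCutoff,
    fderiv_fun_mul (differentiable_bernsteinCutoff Q p) hv.1] at hlap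
  simp only [add_apply, smul_apply, smul_eq_mul] at hlap
  linarith

end BernsteinFun

section BernsteinInequality

variable {d : ℕ} {R : Finset (Ed d)} {k : Ed d → ℝ} {v u : Ed d × ℝ → ℝ} {Ω : Set (Ed d × ℝ)}
  {p : Ed d × ℝ}

lemma sq_fstInner_stdVec_le {α : Ed d} (hα : ⟪α, α⟫ = (2 : ℝ)) (j : Option (Fin d)) :
    fstInner α (stdVec j) ^ 2 ≤ 2 := by
  have hsum : ∑ i, fstInner α (stdVec i) ^ 2 = 2 := by
    simp only [pow_two]
    rw [sum_fstInner_stdVec_mul, fstInner_apply, hα]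
  rw [← hsum]
  exact Finset.single_le_sum (f := fun i => fstInner α (stdVec i) ^ 2)
    (fun i _ => sq_nonneg _) (Finset.mem_univ j)

lemma sq_dunklOp_le (hR : WeightedRootSystem R k) (u : Ed d × ℝ → ℝ) (j : Option (Fin d))
    (p : Ed d × ℝ) : dunklOp R k u (stdVec j) p ^ 2 ≤ (2 + 4 * ∑ α ∈ R, k α) *
      (∑ i, fderiv ℝ u p (stdVec i) ^ 2 + ∑ α ∈ R, k α * dunklQuot u α p ^ 2) := by
  have hK : 0 ≤ ∑ α ∈ R, k α := Finset.sum_nonneg hR.nonneg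
  have hquot : 0 ≤ ∑ α ∈ R, k α * dunklQuot u α p ^ 2 :=
    Finset.sum_nonneg fun α hα => mul_nonneg (hR.nonneg α hα) (sq_nonneg _)
  have hgrad : 0 ≤ ∑ i, fderiv ℝ u p (stdVec i) ^ 2 := Finset.sum_nonneg fun i _ => sq_nonneg _
  have hcoord : fderiv ℝ u p (stdVec j) ^ 2 ≤ ∑ i, fderiv ℝ u p (stdVec i) ^ 2 :=
    Finset.single_le_sum (f := fun i => fderiv ℝ u p (stdVec i) ^ 2)
      (fun i _ => sq_nonneg _) (Finset.mem_univ j)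
  have hweights : ∑ α ∈ R, k α * fstInner α (stdVec j) ^ 2 ≤ 2 * ∑ α ∈ R, k α := by
    rw [Finset.mul_sum]
    refine Finset.sum_le_sum fun α hα => ?_
    nlinarith [sq_fstInner_stdVec_le (hR.norm_two α hα) j, hR.nonneg α hα]
  have hcauchy : (∑ α ∈ R, k α * fstInner α (stdVec j) * dunklQuot u α p) ^ 2 ≤
      (2 * ∑ α ∈ R, k α) * ∑ α ∈ R, k α * dunklQuot u α p ^ 2 :=
    (Finset.sum_sq_le_sum_mul_sum_of_sq_le_mul R
      (fun α hα => mul_nonneg (hR.nonneg α hα) (sq_nonneg (fstInner α (stdVec j))))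
      (fun α hα => mul_nonneg (hR.nonneg α hα) (sq_nonneg _)) fun α _ => le_of_eq (by ring)).trans
      (mul_le_mul_of_nonneg_right hweights hquot)
  refine add_sq_le.trans ?_
  nlinarith [mul_nonneg hK hgrad]

/-- The contribution of one root to `Δ_κ ((χ v)² + A u² + L)` at a critical point where the
function without `L` does not increase under the reflection. Here `s` is the value of the root, the
letters `D` are derivatives along the root and `v'`, `u'` values at the reflected point. -/
lemma bernstein_root_inequality {A χ v v' u u' s Dχ Dv Du DL : ℝ} (hs : s ≠ 0)
    (hχ : 0 ≤ χ) (hcrit : 2 * (χ * v) * (χ * Dv + v * Dχ) + A * (2 * u) * Du + DL = 0)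
    (hjump : (χ * v') ^ 2 + A * u' ^ 2 ≤ (χ * v) ^ 2 + A * u ^ 2)
    (hDχ : -2 ≤ Dχ / s) (hDL : 0 ≤ DL / s) :
    -(8 * (χ * v ^ 2)) + 2 * A * ((u - u') / s) ^ 2 ≤
      2 * (χ * v) * (χ * (-2 * (Dv / s - (v - v') / s ^ 2))) +
        A * (2 * u) * (-2 * (Du / s - (u - u') / s ^ 2)) := by
  have hDL_eq : DL = -(2 * (χ * v) * (χ * Dv + v * Dχ) + A * (2 * u) * Du) := by linarith
  have hsplit : 2 * (χ * v) * (χ * (-2 * (Dv / s - (v - v') / s ^ 2))) +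
      A * (2 * u) * (-2 * (Du / s - (u - u') / s ^ 2)) =
      4 * (χ * v ^ 2 * (Dχ / s)) + 2 * (DL / s) +
        (4 * χ ^ 2 * v * (v - v') + 4 * A * u * (u - u')) / s ^ 2 := by
    rw [hDL_eq]
    field_simp
    ring
  have hcutoff : χ * v ^ 2 * (-2) ≤ χ * v ^ 2 * (Dχ / s) :=
    mul_le_mul_of_nonneg_left hDχ (by positivity)
  have hdiff : 2 * A * ((u - u') / s) ^ 2 ≤
      (4 * χ ^ 2 * v * (v - v') + 4 * A * u * (u - u')) / s ^ 2 := by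
    rw [div_pow, ← mul_div_assoc]
    gcongr
    nlinarith [sq_nonneg (χ * (v - v'))]
  linarith

lemma bernstein_dunklLowOrder_inequality (hR : WeightedRootSystem R k)
    (hp : ∀ α ∈ R, fstInner α p ≠ 0) {A : ℝ} {Q : Ed d × ℝ}
    {L : (Ed d × ℝ) →L[ℝ] ℝ} (hv : DifferentiableAt ℝ v p) (hu : DifferentiableAt ℝ u p)
    (hχ : 0 ≤ bernsteinCutoff Q p)
    (hmax : IsLocalMax (fun q => bernsteinFun A v u Q q + L q) p)
    (hjump : ∀ α ∈ R, (bernsteinCutoff Q p * v (reflProd α p)) ^ 2 + A * u (reflProd α p) ^ 2 ≤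
      bernsteinFun A v u Q p)
    (hsign : ∀ α ∈ R, 0 ≤ fstInner α p * ⟪α, Q.1⟫)
    (hL : ∀ α ∈ R, 0 ≤ L (α, 0) / fstInner α p) :
    -(8 * (bernsteinCutoff Q p * v p ^ 2)) * ∑ α ∈ R, k α +
        2 * A * ∑ α ∈ R, k α * dunklQuot u α p ^ 2 ≤
      2 * (bernsteinCutoff Q p * v p) *
          (bernsteinCutoff Q p * dunklLowOrder R k v (fderiv ℝ v) p) +
        A * (2 * u p) * dunklLowOrder R k u (fderiv ℝ u) p := by
  have hcrit := hmax.hasFDerivAt_eq_zero ((hasFDerivAt_bernsteinFun hv hu).fun_add L.hasFDerivAt)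
  unfold dunklLowOrder
  simp only [Finset.mul_sum, ← Finset.sum_add_distrib]
  refine Finset.sum_le_sum fun α hα => ?_
  have hcritα : 2 * (bernsteinCutoff Q p * v p) * (bernsteinCutoff Q p * fderiv ℝ v p (α, 0) +
      v p * fderiv ℝ (bernsteinCutoff Q) p (α, 0)) + A * (2 * u p) * fderiv ℝ u p (α, 0) +
      L (α, 0) = 0 := by
    simpa only [add_apply, smul_apply, smul_eq_mul, zero_apply] using
      congrArg (fun T : (Ed d × ℝ) →L[ℝ] ℝ => T (α, 0)) hcrit
  have hroot := bernstein_root_inequality (hp α hα) hχ hcritα (hjump α hα)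
    (neg_two_le_fderiv_bernsteinCutoff_div (hp α hα) (hsign α hα)) (hL α hα)
  rw [dunklQuot_of_ne (hp α hα)]
  linarith [mul_le_mul_of_nonneg_left hroot (hR.nonneg α hα)]

lemma bernsteinConst_nonneg (hR : WeightedRootSystem R k) : 0 ≤ bernsteinConst R k := by
  have hK : 0 ≤ ∑ α ∈ R, k α := Finset.sum_nonneg hR.nonneg
  unfold bernsteinConst
  positivity

/-- Cauchy-Schwarz for the cross terms in the second derivative test: completing the square leaves
only derivatives of the cut-off function. -/
lemma neg_sum_sq_le_bernstein_cross_terms {ι : Type*} (s : Finset ι) (χ v : ℝ) (a b : ι → ℝ) :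
    -(6 * v ^ 2) * ∑ j ∈ s, a j ^ 2 ≤
      4 * (χ * v) * (∑ j ∈ s, a j * b j) + 2 * ∑ j ∈ s, (χ * b j + v * a j) ^ 2 := by
  simp only [Finset.mul_sum, ← Finset.sum_add_distrib]
  refine Finset.sum_le_sum fun j _ => ?_
  nlinarith [sq_nonneg (χ * b j + 2 * (v * a j))]

lemma eq_zero_of_sq_le_of_energy_le {K n A E V : ℝ} (hK : 0 ≤ K) (hn : 0 ≤ n)
    (hA : A = (2 + 4 * K) * (4 * K + 2 * n + 12) + 1) (hbound : V ^ 2 ≤ (2 + 4 * K) * E)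
    (henergy : 2 * A * E ≤ V ^ 2 * (8 * K + 4 * n + 24)) : V = 0 := by
  have hscaled := mul_le_mul_of_nonneg_right hbound (by positivity : 0 ≤ 8 * K + 4 * n + 24)
  have hE : E ≤ 0 := by
    rw [hA] at henergy
    linarith
  have hV : V ^ 2 ≤ 0 := hbound.trans (mul_nonpos_of_nonneg_of_nonpos (by positivity) hE)
  exact pow_eq_zero_iff two_ne_zero |>.1 (le_antisymm hV (sq_nonneg V))

lemma dunklOp_eq_zero_of_isLocalMax_bernsteinFun (hR : WeightedRootSystem R k)
    (hu : IsDunklHarmonic R k u Ω) (hpΩ : p ∈ Ω) (hp : ∀ α ∈ R, fstInner α p ≠ 0)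
    (j : Option (Fin d)) {Q : Ed d × ℝ} {L : (Ed d × ℝ) →L[ℝ] ℝ} (hχ : 0 ≤ bernsteinCutoff Q p)
    (hmax : IsLocalMax
      (fun q => bernsteinFun (bernsteinConst R k) (dunklOp R k u (stdVec j)) u Q q + L q) p)
    (hjump : ∀ α ∈ R, (bernsteinCutoff Q p * dunklOp R k u (stdVec j) (reflProd α p)) ^ 2 +
        bernsteinConst R k * u (reflProd α p) ^ 2 ≤
      bernsteinFun (bernsteinConst R k) (dunklOp R k u (stdVec j)) u Q p)
    (hsign : ∀ α ∈ R, 0 ≤ fstInner α p * ⟪α, Q.1⟫)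
    (hL : ∀ α ∈ R, 0 ≤ L (α, 0) / fstInner α p) : dunklOp R k u (stdVec j) p = 0 := by
  have hv := hu.hasApproxLaplacianAt_dunklOp hR hpΩ hp (stdVec j)
  have hu2 := hasApproxLaplacianAt_of_contDiffAt (hu.smooth p hpΩ)
  have hsecond := bernsteinFun_second_derivative_test hv hu2 L hmax
  have hfirst := bernstein_dunklLowOrder_inequality hR hp hv.1 hu2.1 hχ
    hmax hjump hsign hL
  have hcross := neg_sum_sq_le_bernstein_cross_terms Finset.univ (bernsteinCutoff Q p)
    (dunklOp R k u (stdVec j) p) (fun i => fderiv ℝ (bernsteinCutoff Q) p (stdVec i))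
    fun i => fderiv ℝ (dunklOp R k u (stdVec j)) p (stdVec i)
  have hbound := sq_dunklOp_le hR u j p
  rw [hu.harm p hpΩ hp] at hsecond
  rw [sum_sq_fderiv_bernsteinCutoff] at hcross
  have hdist : distSq Q p ≤ 1 := sub_nonneg.1 hχ
  have hχ1 := bernsteinCutoff_le_one Q p
  have hK : 0 ≤ ∑ α ∈ R, k α := Finset.sum_nonneg hR.nonneg
  set χ := bernsteinCutoff Q p
  set A := bernsteinConst R k
  set K := ∑ α ∈ R, k α
  set V := dunklOp R k u (stdVec j) p
  set E := ∑ i, fderiv ℝ u p (stdVec i) ^ 2 + ∑ α ∈ R, k α * dunklQuot u α p ^ 2 with hE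
  have hcutoff : χ * V ^ 2 * (8 * K + 4 * (d + 1)) ≤ 1 * V ^ 2 * (8 * K + 4 * (d + 1)) := by
    gcongr
  have hgrad : V ^ 2 * distSq Q p ≤ V ^ 2 * 1 := mul_le_mul_of_nonneg_left hdist (sq_nonneg V)
  have henergy : 2 * A * E ≤ V ^ 2 * (8 * K + 4 * (d + 1) + 24) := by
    rw [hE]
    linarith
  exact eq_zero_of_sq_le_of_energy_le hK (by positivity) rfl hbound henergy

end BernsteinInequality

/-! ### Orbits of reflections -/

/-- The orbit of `z` under the group generated by the reflections `σ_α`, `α ∈ Z`. -/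
def reflOrbit {d : ℕ} (Z : Finset (Ed d)) (z : Ed d) : Set (Ed d) :=
  {w | Relation.ReflTransGen (fun x y => ∃ α ∈ Z, y = reflAt α x) z w}

section ReflOrbit

variable {d : ℕ} {R Z : Finset (Ed d)} {k : Ed d → ℝ} {z w : Ed d}

lemma self_mem_reflOrbit (Z : Finset (Ed d)) (z : Ed d) : z ∈ reflOrbit Z z :=
  Relation.ReflTransGen.refl

lemma reflAt_mem_reflOrbit (hw : w ∈ reflOrbit Z z) {α : Ed d} (hα : α ∈ Z) :
    reflAt α w ∈ reflOrbit Z z :=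
  Relation.ReflTransGen.tail hw ⟨α, hα, rfl⟩

lemma reflOrbit_induction {C : Ed d → Prop} (self : C z)
    (step : ∀ w, C w → ∀ α ∈ Z, C (reflAt α w)) (hw : w ∈ reflOrbit Z z) : C w := by
  induction hw with
  | refl => exact self
  | tail _ hstep ih =>
    obtain ⟨α, hα, rfl⟩ := hstep
    exact step _ ih α hα

lemma norm_reflAt {α : Ed d} (hα : ⟪α, α⟫ = (2 : ℝ)) (x : Ed d) : ‖reflAt α x‖ = ‖x‖ := by
  rw [← sq_eq_sq₀ (norm_nonneg _) (norm_nonneg _), ← real_inner_self_eq_norm_sq,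
    ← real_inner_self_eq_norm_sq, inner_reflAt, real_inner_comm, inner_reflAt,
    real_inner_comm (reflAt α x), inner_reflAt, hα, real_inner_comm α x]
  ring

lemma inner_reflAt_right (α β x : Ed d) : ⟪β, reflAt α x⟫ = ⟪reflAt α β, x⟫ := by
  rw [inner_reflAt, real_inner_comm, inner_reflAt, real_inner_comm x β]
  ring

lemma reflAt_sub_reflAt (α x z : Ed d) : reflAt α x - reflAt α z = reflAt α (x - z) := by
  simp only [reflAt, inner_sub_right, sub_smul]
  abel

lemma norm_eq_of_mem_reflOrbit (hZ : ∀ α ∈ Z, ⟪α, α⟫ = (2 : ℝ)) (hw : w ∈ reflOrbit Z z) :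
    ‖w‖ = ‖z‖ :=
  reflOrbit_induction (C := fun w => ‖w‖ = ‖z‖) rfl
    (fun w hw α hα => by rw [norm_reflAt (hZ α hα), hw]) hw

lemma exists_inner_eq_of_mem_reflOrbit (hR : WeightedRootSystem R k) (hZ : Z ⊆ R) {y : Ed d}
    (hy : ∀ α ∈ Z, ⟪α, y⟫ = 0) (hw : w ∈ reflOrbit Z z) :
    ∀ β ∈ R, ∃ γ ∈ R, ⟪β, w⟫ = ⟪γ, z⟫ ∧ ⟪β, y⟫ = ⟪γ, y⟫ := by
  refine reflOrbit_induction
    (C := fun w => ∀ β ∈ R, ∃ γ ∈ R, ⟪β, w⟫ = ⟪γ, z⟫ ∧ ⟪β, y⟫ = ⟪γ, y⟫)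
    (fun β hβ => ⟨β, hβ, rfl, rfl⟩) (fun w hw α hα β hβ => ?_) hw
  obtain ⟨γ, hγ, hγz, hγy⟩ := hw _ (hR.refl_mem α (hZ hα) β hβ)
  refine ⟨γ, hγ, by rw [inner_reflAt_right, hγz], ?_⟩
  rw [← hγy, inner_reflAt, hy α hα]
  ring

lemma sub_mem_span_of_mem_reflOrbit (hw : w ∈ reflOrbit Z z) :
    w - z ∈ Submodule.span ℝ (Z : Set (Ed d)) := by
  refine reflOrbit_induction (C := fun w => w - z ∈ Submodule.span ℝ (Z : Set (Ed d)))
    (by simp) (fun w hw α hα => ?_) hw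
  have hstep : reflAt α w - z = (w - z) - ⟪α, w⟫ • α := by
    unfold reflAt
    abel
  rw [hstep]
  exact Submodule.sub_mem _ hw (Submodule.smul_mem _ _ (Submodule.subset_span hα))

lemma eq_zero_of_mem_span_of_forall_inner_eq_zero {E : Type*} [NormedAddCommGroup E]
    [InnerProductSpace ℝ E] {T : Set E} {x : E} (hx : x ∈ Submodule.span ℝ T)
    (hT : ∀ y ∈ T, ⟪y, x⟫ = (0 : ℝ)) : x = 0 := by
  have hspan : Submodule.span ℝ T ≤ (ℝ ∙ x)ᗮ := Submodule.span_le.2 fun y hy =>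
    Submodule.mem_orthogonal_singleton_iff_inner_left.2 (hT y hy)
  exact inner_self_eq_zero.1 (Submodule.mem_orthogonal_singleton_iff_inner_left.1 (hspan hx))

/-- A point of the orbit is determined by the values of the roots there, which are among the
finitely many values at the base point. -/
lemma finite_reflOrbit (hR : WeightedRootSystem R k) (hZ : Z ⊆ R) (z : Ed d) :
    (reflOrbit Z z).Finite := by
  have hvalues : (Set.univ.pi fun _ : R => (fun β => (⟪β, z⟫ : ℝ)) '' (R : Set (Ed d))).Finite :=
    Set.Finite.pi fun _ => R.finite_toSet.image _
  refine Set.Finite.of_injOn (f := fun w (β : R) => (⟪(β : Ed d), w⟫ : ℝ)) ?_ ?_ hvalues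
  · intro w hw β _
    obtain ⟨γ, hγ, hγz, -⟩ :=
      exists_inner_eq_of_mem_reflOrbit hR hZ (y := 0) (by simp) hw β β.2
    exact ⟨γ, hγ, hγz.symm⟩
  · intro w hw w' hw' h
    have hspan : w - w' ∈ Submodule.span ℝ (Z : Set (Ed d)) := by
      simpa using Submodule.sub_mem _ (sub_mem_span_of_mem_reflOrbit hw)
        (sub_mem_span_of_mem_reflOrbit hw')
    refine sub_eq_zero.1 (eq_zero_of_mem_span_of_forall_inner_eq_zero hspan fun β hβ => ?_)
    rw [inner_sub_right, sub_eq_zero]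
    exact congrFun h ⟨β, hZ hβ⟩

lemma distSq_reflAt {α : Ed d} (hα : ⟪α, α⟫ = (2 : ℝ)) (z : Ed d) (y : ℝ) (q : Ed d × ℝ) :
    distSq (reflAt α z, y) q = distSq (z, y) (reflProd α q) := by
  have hsub : reflAt α q.1 - z = reflAt α (q.1 - reflAt α z) := by
    rw [← reflAt_sub_reflAt, reflAt_reflAt hα]
  simp only [reflProd_eq, distSq]
  rw [hsub, norm_reflAt hα]

lemma distSq_reflAt_eq_add {α : Ed d} (hα : ⟪α, α⟫ = (2 : ℝ)) (z : Ed d) (y : ℝ)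
    (q : Ed d × ℝ) :
    distSq (reflAt α z, y) q = distSq (z, y) q + 2 * (fstInner α q * ⟪α, z⟫) := by
  have hsub : q.1 - reflAt α z = (q.1 - z) + ⟪α, z⟫ • α := by
    unfold reflAt
    module
  simp only [distSq, fstInner_apply]
  rw [hsub, norm_add_sq_real, inner_smul_right, norm_smul, mul_pow,
    ← real_inner_self_eq_norm_sq α, hα, real_inner_comm α, inner_sub_right, Real.norm_eq_abs,
    sq_abs]
  ring

lemma distSq_le_mem_of_mem_reflOrbit (hZ : ∀ α ∈ Z, ⟪α, α⟫ = (2 : ℝ)) {Ω : Set (Ed d × ℝ)}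
    (hinv : ∀ α ∈ Z, ∀ q ∈ Ω, reflProd α q ∈ Ω) {y r : ℝ}
    (hball : ∀ q, distSq (z, y) q ≤ r → q ∈ Ω) (hw : w ∈ reflOrbit Z z) :
    ∀ q, distSq (w, y) q ≤ r → q ∈ Ω := by
  refine reflOrbit_induction (C := fun w => ∀ q, distSq (w, y) q ≤ r → q ∈ Ω) hball
    (fun w hw α hα q hq => ?_) hw
  rw [distSq_reflAt (hZ α hα)] at hq
  rw [← reflProd_reflProd (hZ α hα) q]
  exact hinv α hα _ (hw _ hq)

lemma isCompact_distSq_le_one (Q : Ed d × ℝ) : IsCompact {q | distSq Q q ≤ 1} := by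
  refine Metric.isCompact_of_isClosed_isBounded
    (isClosed_le (contDiff_distSq Q (n := 1)).continuous continuous_const)
    ((Metric.isBounded_closedBall (x := Q) (r := 1)).subset fun q hq => ?_)
  have hq' : ‖q.1 - Q.1‖ ^ 2 + (q.2 - Q.2) ^ 2 ≤ 1 := hq
  rw [Metric.mem_closedBall, Prod.dist_eq, max_le_iff, dist_eq_norm, Real.dist_eq]
  exact ⟨by nlinarith [norm_nonneg (q.1 - Q.1), sq_nonneg (q.2 - Q.2)],
    abs_le_one_iff_mul_self_le_one.2 (by nlinarith [sq_nonneg ‖q.1 - Q.1‖])⟩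

end ReflOrbit

/-! ### Penalizing the mirrors -/

/-- The penalty `∑ |⟨β, x⟩|`, which has a convex kink on every mirror. -/
def mirrorPenalty {d : ℕ} (R : Finset (Ed d)) (q : Ed d × ℝ) : ℝ := ∑ β ∈ R, |fstInner β q|

/-- The linear form `∑ sgn⟨β, p⟩ ⟨β, ·⟩`, a subgradient of the penalty at `p`. -/
def mirrorSignForm {d : ℕ} (R : Finset (Ed d)) (p : Ed d × ℝ) : (Ed d × ℝ) →L[ℝ] ℝ :=
  ∑ β ∈ R, (SignType.sign (fstInner β p) : ℝ) • fstInner β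

lemma isLocalMax_add_of_le {X : Type*} [TopologicalSpace X] {f g h : X → ℝ} {p : X}
    (hmax : IsLocalMax (fun q => f q + g q) p) (hle : ∀ q, h q ≤ g q) (heq : h p = g p) :
    IsLocalMax (fun q => f q + h q) p := by
  filter_upwards [hmax] with q hq
  linarith [hle q]

lemma eq_zero_of_isLocalMax_add_abs {E : Type*} [NormedAddCommGroup E] [NormedSpace ℝ E]
    {f : E → ℝ} {p : E} {L : E →L[ℝ] ℝ} (hf : DifferentiableAt ℝ f p) (hL : L p = 0)
    (hmax : IsLocalMax (fun q => f q + |L q|) p) : L = 0 := by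
  have hplus := (isLocalMax_add_of_le hmax (h := L) (fun q => le_abs_self _)
    (by rw [hL, abs_zero])).hasFDerivAt_eq_zero (hf.hasFDerivAt.fun_add L.hasFDerivAt)
  have hminus := (isLocalMax_add_of_le hmax (h := fun q => -L q) (fun q => neg_le_abs _)
    (by rw [hL, abs_zero, neg_zero])).hasFDerivAt_eq_zero
      (hf.hasFDerivAt.fun_add L.hasFDerivAt.fun_neg)
  have hdouble : (2 : ℝ) • L = (fderiv ℝ f p + L) - (fderiv ℝ f p + -L) := by
    rw [two_smul]
    abel
  rw [hplus, hminus, sub_zero] at hdouble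
  exact (smul_eq_zero.1 hdouble).resolve_left two_ne_zero

section MirrorPenalty

variable {d : ℕ} {R : Finset (Ed d)} {k : Ed d → ℝ} {f : Ed d × ℝ → ℝ} {p : Ed d × ℝ} {ε : ℝ}

lemma continuous_mirrorPenalty (R : Finset (Ed d)) : Continuous (mirrorPenalty R) :=
  continuous_finsetSum _ fun β _ => (fstInner β).continuous.abs

lemma mirrorPenalty_nonneg (R : Finset (Ed d)) (q : Ed d × ℝ) : 0 ≤ mirrorPenalty R q :=
  Finset.sum_nonneg fun _ _ => abs_nonneg _

lemma WeightedRootSystem.mirrorPenalty_reflProd (hR : WeightedRootSystem R k) {α : Ed d}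
    (hα : α ∈ R) (q : Ed d × ℝ) : mirrorPenalty R (reflProd α q) = mirrorPenalty R q := by
  simp only [mirrorPenalty, fstInner_reflProd_eq]
  exact hR.sum_reflAt hα fun β => |fstInner β q|

lemma mirrorSignForm_apply (R : Finset (Ed d)) (p q : Ed d × ℝ) :
    mirrorSignForm R p q = ∑ β ∈ R, (SignType.sign (fstInner β p) : ℝ) * fstInner β q := by
  simp only [mirrorSignForm, sum_apply, smul_apply, smul_eq_mul]

lemma mirrorSignForm_le (R : Finset (Ed d)) (p q : Ed d × ℝ) :
    mirrorSignForm R p q ≤ mirrorPenalty R q := by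
  rw [mirrorSignForm_apply]
  refine Finset.sum_le_sum fun β _ => ?_
  rcases lt_trichotomy (fstInner β p) 0 with h | h | h
  · simpa [sign_neg h] using neg_le_abs _
  · simp [h]
  · simpa [sign_pos h] using le_abs_self _

lemma mirrorSignForm_self (R : Finset (Ed d)) (p : Ed d × ℝ) :
    mirrorSignForm R p p = mirrorPenalty R p := by
  simp only [mirrorSignForm_apply, sign_mul_self, mirrorPenalty]

lemma sign_sub_sign_mul_sub_nonneg (a b : ℝ) :
    0 ≤ ((SignType.sign a : ℝ) - SignType.sign b) * (a - b) := by
  rcases lt_trichotomy a 0 with ha | ha | ha <;> rcases lt_trichotomy b 0 with hb | hb | hb <;>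
    simp [ha, hb, sign_neg, sign_pos] <;> linarith

lemma WeightedRootSystem.mirrorSignForm_mul_nonneg (hR : WeightedRootSystem R k)
    (p : Ed d × ℝ) {α : Ed d} (hα : α ∈ R) :
    0 ≤ mirrorSignForm R p (α, 0) * fstInner α p := by
  have hpair : ∀ β, ((SignType.sign (fstInner β p) : ℝ) -
      SignType.sign (fstInner (reflAt α β) p)) * (fstInner β p - fstInner (reflAt α β) p) =
      (SignType.sign (fstInner β p) : ℝ) * ⟪β, α⟫ * fstInner α p +
        (SignType.sign (fstInner (reflAt α β) p) : ℝ) * ⟪reflAt α β, α⟫ * fstInner α p := by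
    intro β
    rw [inner_reflAt, hR.norm_two α hα, fstInner_reflAt, real_inner_comm β α]
    ring
  have hsum := Finset.sum_nonneg fun β (_ : β ∈ R) =>
    sign_sub_sign_mul_sub_nonneg (fstInner β p) (fstInner (reflAt α β) p)
  rw [Finset.sum_congr rfl fun β _ => hpair β, Finset.sum_add_distrib,
    hR.sum_reflAt hα fun β => (SignType.sign (fstInner β p) : ℝ) * ⟪β, α⟫ * fstInner α p,
    ← Finset.sum_mul] at hsum
  simp only [mirrorSignForm_apply, fstInner_apply _ (α, (0 : ℝ))]
  linarith

lemma isLocalMax_add_mirrorSignForm (hε : 0 ≤ ε)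
    (hmax : IsLocalMax (fun q => f q + ε * mirrorPenalty R q) p) :
    IsLocalMax (fun q => f q + (ε • mirrorSignForm R p) q) p :=
  isLocalMax_add_of_le hmax (fun q => mul_le_mul_of_nonneg_left (mirrorSignForm_le R p q) hε)
    (congrArg (ε * ·) (mirrorSignForm_self R p))

lemma fstInner_ne_zero_of_isLocalMax_add_mirrorPenalty (hf : DifferentiableAt ℝ f p) (hε : 0 < ε)
    (hmax : IsLocalMax (fun q => f q + ε * mirrorPenalty R q) p) {α : Ed d} (hα : α ∈ R)
    (hα0 : α ≠ 0) : fstInner α p ≠ 0 := by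
  classical
  intro hp
  have hsplit : ∀ q, mirrorPenalty R q = mirrorPenalty (R.erase α) q + |fstInner α q| :=
    fun q => (Finset.sum_erase_add R _ hα).symm
  have hmax' : IsLocalMax (fun q => f q + ((ε • mirrorSignForm (R.erase α) p) q +
      |(ε • fstInner α) q|)) p := by
    refine isLocalMax_add_of_le hmax (fun q => ?_) ?_
    · rw [hsplit, smul_apply, smul_apply, smul_eq_mul, smul_eq_mul, abs_mul, abs_of_pos hε, mul_add]
      gcongr
      exact mirrorSignForm_le _ p q
    · rw [hsplit, smul_apply, smul_apply, mirrorSignForm_self, hp]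
      simp
  simp only [← add_assoc] at hmax'
  have hzero := eq_zero_of_isLocalMax_add_abs
    (hf.fun_add (ε • mirrorSignForm (R.erase α) p).differentiableAt) (by simp [hp]) hmax'
  have hα2 := DFunLike.congr_fun ((smul_eq_zero.1 hzero).resolve_left hε.ne') ((α, 0) : Ed d × ℝ)
  rw [fstInner_apply] at hα2
  exact hα0 (inner_self_eq_zero.1 hα2)

end MirrorPenalty

/-! ### Bernstein's estimate -/

lemma exists_forall_le_of_finite_of_isCompact {ι X : Type*} [TopologicalSpace X] {S : Set ι}
    (hS : S.Finite) (hne : S.Nonempty) {K : ι → Set X} (hK : ∀ i ∈ S, IsCompact (K i))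
    (hKne : ∀ i ∈ S, (K i).Nonempty) {f : ι → X → ℝ} (hf : ∀ i ∈ S, ContinuousOn (f i) (K i)) :
    ∃ i ∈ S, ∃ x ∈ K i, ∀ j ∈ S, ∀ y ∈ K j, f j y ≤ f i x := by
  obtain ⟨i₀, hi₀⟩ := hne
  have : Nonempty X := (hKne i₀ hi₀).to_subtype.map Subtype.val
  choose! m hmem hmax using fun i hi => (hK i hi).exists_isMaxOn (hKne i hi) (hf i hi)
  obtain ⟨i, hi, hle⟩ := S.exists_max_image (fun i => f i (m i)) hS ⟨i₀, hi₀⟩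
  exact ⟨i, hi, m i, hmem i hi, fun j hj y hy => (hmax j hj hy).trans (hle j hj)⟩

/-- `IsPenalizedMax R A ε v u P z p` says that, among all unit balls centred at the reflections of
`P`, the function `(χ v)² + A u² + ε ∑ |⟨β, ·⟩|` is largest at the point `p` of the ball centred at
`(z, P.2)`. Each ball has its own cut-off function `χ`. -/
structure IsPenalizedMax {d : ℕ} (R : Finset (Ed d)) (A ε : ℝ) (v u : Ed d × ℝ → ℝ)
    (P : Ed d × ℝ) (z : Ed d) (p : Ed d × ℝ) : Prop where
  mem_orbit : z ∈ reflOrbit R P.1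
  distSq_le : distSq (z, P.2) p ≤ 1
  le : ∀ w ∈ reflOrbit R P.1, ∀ q, distSq (w, P.2) q ≤ 1 →
    bernsteinFun A v u (w, P.2) q + ε * mirrorPenalty R q ≤
      bernsteinFun A v u (z, P.2) p + ε * mirrorPenalty R p

section BernsteinEstimate

variable {d : ℕ} {R : Finset (Ed d)} {k : Ed d → ℝ} {A ε : ℝ} {v u : Ed d × ℝ → ℝ}
  {Ω : Set (Ed d × ℝ)} {P p : Ed d × ℝ} {z : Ed d}

lemma exists_isPenalizedMax (hR : WeightedRootSystem R k) (A ε : ℝ)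
    (hv : ∀ z ∈ reflOrbit R P.1, ∀ q, distSq (z, P.2) q ≤ 1 → ContinuousAt v q)
    (hu : ∀ z ∈ reflOrbit R P.1, ∀ q, distSq (z, P.2) q ≤ 1 → ContinuousAt u q) :
    ∃ z p, IsPenalizedMax R A ε v u P z p := by
  obtain ⟨z, hz, p, hp, hmax⟩ := exists_forall_le_of_finite_of_isCompact
    (finite_reflOrbit hR subset_rfl P.1) ⟨P.1, self_mem_reflOrbit R P.1⟩
    (K := fun z => {q | distSq (z, P.2) q ≤ 1})
    (f := fun z q => bernsteinFun A v u (z, P.2) q + ε * mirrorPenalty R q)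
    (fun z _ => isCompact_distSq_le_one _) (fun z _ => ⟨(z, P.2), by simp [distSq_self]⟩)
    (fun z hz q hq => ContinuousAt.continuousWithinAt <|
      (((differentiable_bernsteinCutoff _ q).continuousAt.mul (hv z hz q hq)).pow 2 |>.add
        (((hu z hz q hq).pow 2).const_mul A)).add
        ((continuous_mirrorPenalty R).continuousAt.const_mul ε))
  exact ⟨z, p, hz, hp, hmax⟩

lemma exists_mirrorPenalty_le (hR : WeightedRootSystem R k) (P : Ed d × ℝ) :
    ∃ C ≥ (0 : ℝ), ∀ z ∈ reflOrbit R P.1, ∀ q, distSq (z, P.2) q ≤ 1 → mirrorPenalty R q ≤ C := by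
  obtain ⟨z, -, p, -, hmax⟩ := exists_forall_le_of_finite_of_isCompact
    (finite_reflOrbit hR subset_rfl P.1) ⟨P.1, self_mem_reflOrbit R P.1⟩
    (K := fun z => {q | distSq (z, P.2) q ≤ 1}) (f := fun _ => mirrorPenalty R)
    (fun z _ => isCompact_distSq_le_one _) (fun z _ => ⟨(z, P.2), by simp [distSq_self]⟩)
    (fun z _ => (continuous_mirrorPenalty R).continuousOn)
  exact ⟨mirrorPenalty R p, mirrorPenalty_nonneg R p, hmax⟩

namespace IsPenalizedMax

lemma isLocalMax (h : IsPenalizedMax R A ε v u P z p) (hχ : 0 < bernsteinCutoff (z, P.2) p) :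
    IsLocalMax (fun q => bernsteinFun A v u (z, P.2) q + ε * mirrorPenalty R q) p := by
  filter_upwards [(differentiable_bernsteinCutoff (z, P.2) p).continuousAt.eventually
    (lt_mem_nhds hχ)] with q hq
  exact h.le z h.mem_orbit q (sub_pos.1 hq).le

lemma reflProd_le (h : IsPenalizedMax R A ε v u P z p) (hR : WeightedRootSystem R k) {α : Ed d}
    (hα : α ∈ R) : (bernsteinCutoff (z, P.2) p * v (reflProd α p)) ^ 2 +
      A * u (reflProd α p) ^ 2 ≤ bernsteinFun A v u (z, P.2) p := by
  have hdist : distSq (reflAt α z, P.2) (reflProd α p) = distSq (z, P.2) p := by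
    rw [distSq_reflAt (hR.norm_two α hα), reflProd_reflProd (hR.norm_two α hα)]
  have hle := h.le _ (reflAt_mem_reflOrbit h.mem_orbit hα) (reflProd α p)
    (hdist.trans_le h.distSq_le)
  rw [hR.mirrorPenalty_reflProd hα, add_le_add_iff_right] at hle
  rwa [bernsteinFun, bernsteinCutoff, hdist] at hle

/-- Otherwise the cut-off function of the reflected ball would be larger at `p`. -/
lemma fstInner_mul_nonneg (h : IsPenalizedMax R A ε v u P z p) (hR : WeightedRootSystem R k)
    (hχ : 0 < bernsteinCutoff (z, P.2) p) (hv : v p ≠ 0) {α : Ed d} (hα : α ∈ R) :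
    0 ≤ fstInner α p * ⟪α, z⟫ := by
  have hdist := distSq_reflAt_eq_add (hR.norm_two α hα) z P.2 p
  by_contra! hneg
  have hle := h.le _ (reflAt_mem_reflOrbit h.mem_orbit hα) p (by linarith [h.distSq_le])
  have hlt : bernsteinCutoff (z, P.2) p < bernsteinCutoff (reflAt α z, P.2) p := by
    unfold bernsteinCutoff
    linarith
  have hsq : (bernsteinCutoff (z, P.2) p * v p) ^ 2 <
      (bernsteinCutoff (reflAt α z, P.2) p * v p) ^ 2 := by
    rw [mul_pow, mul_pow]
    gcongr
  unfold bernsteinFun at hle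
  linarith

lemma cutoff_mul_dunklOp_eq_zero {j : Option (Fin d)}
    (h : IsPenalizedMax R (bernsteinConst R k) ε (dunklOp R k u (stdVec j)) u P z p)
    (hR : WeightedRootSystem R k) (hu : IsDunklHarmonic R k u Ω) (hpΩ : p ∈ Ω) (hε : 0 < ε) :
    bernsteinCutoff (z, P.2) p * dunklOp R k u (stdVec j) p = 0 := by
  by_contra hne
  have hχ : 0 < bernsteinCutoff (z, P.2) p :=
    (sub_nonneg.2 h.distSq_le).lt_of_ne (left_ne_zero_of_mul hne).symm
  have hmax := h.isLocalMax hχ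
  have hdiff := (hasFDerivAt_bernsteinFun (A := bernsteinConst R k) (Q := (z, P.2))
    (differentiableAt_dunklOp k (stdVec j) (hu.smooth p hpΩ) (hu.smooth_reflProd hpΩ))
    ((hu.smooth p hpΩ).differentiableAt two_ne_zero)).differentiableAt
  have hreg : ∀ α ∈ R, fstInner α p ≠ 0 := fun α hα =>
    fstInner_ne_zero_of_isLocalMax_add_mirrorPenalty hdiff hε hmax hα fun hα0 => by
      simpa [hα0] using hR.norm_two α hα
  refine right_ne_zero_of_mul hne (dunklOp_eq_zero_of_isLocalMax_bernsteinFun hR hu hpΩ hreg j hχ.le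
    (isLocalMax_add_mirrorSignForm hε.le hmax) (fun α hα => h.reflProd_le hR hα)
    (fun α hα => h.fstInner_mul_nonneg hR hχ (right_ne_zero_of_mul hne) hα) fun α hα => ?_)
  rw [smul_apply, smul_eq_mul, mul_div_assoc, ← mul_div_mul_right _ _ (hreg α hα)]
  exact mul_nonneg hε.le (div_nonneg (hR.mirrorSignForm_mul_nonneg p hα) (mul_self_nonneg _))

end IsPenalizedMax

lemma sq_dunklOp_le_bernsteinConst (hR : WeightedRootSystem R k) (hu : IsDunklHarmonic R k u Ω)
    (hbdd : ∀ q ∈ Ω, |u q| ≤ 1) (hball : ∀ q, distSq P q ≤ 1 → q ∈ Ω) (j : Option (Fin d)) :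
    dunklOp R k u (stdVec j) P ^ 2 ≤ bernsteinConst R k := by
  have hΩ : ∀ z ∈ reflOrbit R P.1, ∀ q, distSq (z, P.2) q ≤ 1 → q ∈ Ω := fun z hz =>
    distSq_le_mem_of_mem_reflOrbit hR.norm_two hu.inv hball hz
  have hA := bernsteinConst_nonneg hR
  obtain ⟨C, hC, hpenalty⟩ := exists_mirrorPenalty_le hR P
  refine le_of_forall_pos_le_add fun δ hδ => ?_
  have hε : 0 < δ / (C + 1) := by positivity
  obtain ⟨z, p, h⟩ := exists_isPenalizedMax (P := P) hR (bernsteinConst R k) (δ / (C + 1))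
    (fun z hz q hq => (differentiableAt_dunklOp k (stdVec j) (hu.smooth q (hΩ z hz q hq))
      (hu.smooth_reflProd (hΩ z hz q hq))).continuousAt)
    (fun z hz q hq => (hu.smooth q (hΩ z hz q hq)).continuousAt)
  have hpΩ := hΩ z h.mem_orbit p h.distSq_le
  have hcenter := h.le P.1 (self_mem_reflOrbit R P.1) P (by simp [distSq_self])
  have hzero := h.cutoff_mul_dunklOp_eq_zero hR hu hpΩ hε
  have hsmall : δ / (C + 1) * mirrorPenalty R p ≤ δ := by
    rw [div_mul_eq_mul_div, div_le_iff₀ (by positivity)]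
    nlinarith [hpenalty z h.mem_orbit p h.distSq_le]
  have hu1 : bernsteinConst R k * u p ^ 2 ≤ bernsteinConst R k :=
    mul_le_of_le_one_right hA ((sq_le_one_iff_abs_le_one _).2 (hbdd p hpΩ))
  have hpenalty0 := mul_nonneg hε.le (mirrorPenalty_nonneg R P)
  have hu0 := mul_nonneg hA (sq_nonneg (u P))
  have hcutoff : bernsteinCutoff P P = 1 := by rw [bernsteinCutoff, distSq_self, sub_zero]
  rw [bernsteinFun, bernsteinFun, hzero, Prod.mk.eta, hcutoff] at hcenter
  linarith

end BernsteinEstimate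

/-! ### Points near intersections of mirrors -/

section NearKernel

lemma exists_forall_inner_eq_zero_and_norm_sub_le {E : Type*} [NormedAddCommGroup E]
    [InnerProductSpace ℝ E] (T : Finset E) :
    ∃ C ≥ (1 : ℝ), ∀ (z : E) (m : ℝ), 0 ≤ m → (∀ γ ∈ T, |⟪γ, z⟫| ≤ m) →
      ∃ x, (∀ γ ∈ T, ⟪γ, x⟫ = (0 : ℝ)) ∧ ‖z - x‖ ≤ C * m := by
  set S := Submodule.span ℝ (T : Set E)
  have : FiniteDimensional ℝ S := FiniteDimensional.span_finset ℝ T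
  let L : S →ₗ[ℝ] (T → ℝ) := LinearMap.pi fun γ => (innerₛₗ ℝ (γ : E)).comp S.subtype
  have hL : LinearMap.ker L = ⊥ := LinearMap.ker_eq_bot'.2 fun w hw =>
    Subtype.ext (eq_zero_of_mem_span_of_forall_inner_eq_zero w.2 fun γ hγ => congrFun hw ⟨γ, hγ⟩)
  obtain ⟨K, -, hK⟩ := L.exists_antilipschitzWith hL
  refine ⟨max 1 K, le_max_left _ _, fun z m hm hz => ?_⟩
  obtain ⟨w, hw, x, hx, rfl⟩ := S.exists_add_mem_mem_orthogonal z
  have hxT : ∀ γ ∈ T, ⟪γ, x⟫ = (0 : ℝ) := fun γ hγ =>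
    Submodule.inner_right_of_mem_orthogonal (Submodule.subset_span hγ) hx
  refine ⟨x, hxT, ?_⟩
  have hLw : ‖L ⟨w, hw⟩‖ ≤ m := by
    refine (pi_norm_le_iff_of_nonneg hm).2 fun γ => ?_
    have hγ := hz γ γ.2
    rwa [inner_add_right, hxT γ γ.2, add_zero] at hγ
  have hwL : ‖w‖ ≤ K * ‖L ⟨w, hw⟩‖ := by
    simpa only [map_zero, dist_zero_right, Submodule.coe_norm] using hK.le_mul_dist ⟨w, hw⟩ 0
  rw [add_sub_cancel_right]
  calc ‖w‖ ≤ K * ‖L ⟨w, hw⟩‖ := hwL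
    _ ≤ max 1 K * m := by
      gcongr
      exact le_max_right _ _

lemma exists_forall_subset_inner_eq_zero_and_norm_sub_le {E : Type*} [NormedAddCommGroup E]
    [InnerProductSpace ℝ E] (R : Finset E) :
    ∃ C ≥ (1 : ℝ), ∀ T ⊆ R, ∀ (z : E) (m : ℝ), 0 ≤ m → (∀ γ ∈ T, |⟪γ, z⟫| ≤ m) →
      ∃ x, (∀ γ ∈ T, ⟪γ, x⟫ = (0 : ℝ)) ∧ ‖z - x‖ ≤ C * m := by
  choose C hC1 hC using exists_forall_inner_eq_zero_and_norm_sub_le (E := E)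
  have hle : ∀ T ⊆ R, C T ≤ ∑ T ∈ R.powerset, C T := fun T hT =>
    Finset.single_le_sum (f := C) (fun T _ => zero_le_one.trans (hC1 T)) (Finset.mem_powerset.2 hT)
  refine ⟨∑ T ∈ R.powerset, C T, (hC1 ∅).trans (hle ∅ (Finset.empty_subset R)),
    fun T hT z m hm hz => ?_⟩
  obtain ⟨x, hx, hzx⟩ := hC T z m hm hz
  exact ⟨x, hx, hzx.trans (mul_le_mul_of_nonneg_right (hle T hT) hm)⟩

/-- Induction on the number of elements of `R` outside `T`: as long as some `β` with `⟪β, x⟫ ≠ 0`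
is small at `z`, it is added to `T`. -/
lemma exists_gap_of_card_le {E : Type*} [NormedAddCommGroup E] [InnerProductSpace ℝ E]
    (R : Finset E) (n : ℕ) :
    ∃ D ≥ (1 : ℝ), ∀ T ⊆ R, R.card ≤ T.card + n → ∀ (z : E) (ρ : ℝ), 0 ≤ ρ →
      (∀ γ ∈ T, |⟪γ, z⟫| ≤ ρ) → ∃ x, (∀ γ ∈ T, ⟪γ, x⟫ = (0 : ℝ)) ∧ ‖z - x‖ ≤ D * ρ ∧
        ∀ β ∈ R, ⟪β, x⟫ = (0 : ℝ) ∨ 3 * ‖z - x‖ ≤ |⟪β, z⟫| := by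
  classical
  obtain ⟨C, hC1, hC⟩ := exists_forall_subset_inner_eq_zero_and_norm_sub_le R
  induction n with
  | zero =>
    refine ⟨C, hC1, fun T hT hcard z ρ hρ hz => ?_⟩
    obtain ⟨x, hx, hzx⟩ := hC T hT z ρ hρ hz
    obtain rfl := Finset.eq_of_subset_of_card_le hT hcard
    exact ⟨x, hx, hzx, fun β hβ => Or.inl (hx β hβ)⟩
  | succ n ih =>
    obtain ⟨D, hD1, hD⟩ := ih
    refine ⟨D * (3 * C), by nlinarith, fun T hT hcard z ρ hρ hz => ?_⟩
    obtain ⟨x, hx, hzx⟩ := hC T hT z ρ hρ hz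
    by_cases hgap : ∀ β ∈ R, ⟪β, x⟫ = (0 : ℝ) ∨ 3 * ‖z - x‖ ≤ |⟪β, z⟫|
    · exact ⟨x, hx, hzx.trans (mul_le_mul_of_nonneg_right (by nlinarith) hρ), hgap⟩
    push Not at hgap
    obtain ⟨β, hβ, hβx, hβz⟩ := hgap
    have hβT : β ∉ T := fun h => hβx (hx β h)
    obtain ⟨x', hx', hzx', hgap'⟩ := hD (insert β T) (Finset.insert_subset hβ hT)
      (by rw [Finset.card_insert_of_notMem hβT]; omega) z (3 * C * ρ) (by positivity)
      ((Finset.forall_mem_insert _ _ _).2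
        ⟨by linarith, fun γ hγ => (hz γ hγ).trans (by nlinarith)⟩)
    exact ⟨x', fun γ hγ => hx' γ (Finset.mem_insert_of_mem hγ), by rwa [mul_assoc], hgap'⟩

lemma exists_inner_eq_zero_or_le_abs_inner {E : Type*} [NormedAddCommGroup E]
    [InnerProductSpace ℝ E] (R : Finset E) :
    ∃ D ≥ (1 : ℝ), ∀ (z : E) (ρ : ℝ), 0 ≤ ρ →
      ∃ x, (∀ γ ∈ R, |⟪γ, z⟫| ≤ ρ → ⟪γ, x⟫ = (0 : ℝ)) ∧ ‖z - x‖ ≤ D * ρ ∧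
        ∀ β ∈ R, ⟪β, x⟫ = (0 : ℝ) ∨ 3 * ‖z - x‖ ≤ |⟪β, z⟫| := by
  obtain ⟨D, hD1, hD⟩ := exists_gap_of_card_le R R.card
  refine ⟨D, hD1, fun z ρ hρ => ?_⟩
  obtain ⟨x, hx, hgap⟩ := hD (R.filter fun γ => |⟪γ, z⟫| ≤ ρ) (Finset.filter_subset _ _)
    (Nat.le_add_left _ _) z ρ hρ fun γ hγ => (Finset.mem_filter.1 hγ).2
  exact ⟨x, fun γ hγ hγρ => hx γ (Finset.mem_filter.2 ⟨hγ, hγρ⟩), hgap⟩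

end NearKernel

/-! ### Growth along rays -/

section Rays

lemma nonneg_of_isMaxOn_Icc_of_hasDerivAt {f : ℝ → ℝ} {f' a b t : ℝ}
    (hmax : IsMaxOn f (Set.Icc a b) t) (hat : a < t) (htb : t ≤ b) (hf : HasDerivAt f f' t) :
    0 ≤ f' := by
  have hcone : a - t ∈ posTangentConeAt (Set.Icc a b) t :=
    sub_mem_posTangentConeAt_of_segment_subset
      ((convex_Icc a b).segment_subset ⟨hat.le, htb⟩ ⟨le_rfl, hat.le.trans htb⟩)
  have hle := hmax.localize.hasFDerivWithinAt_nonpos hf.hasFDerivAt.hasFDerivWithinAt hcone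
  rw [ContinuousLinearMap.toSpanSingleton_apply, smul_eq_mul] at hle
  exact nonneg_of_mul_nonpos_right hle (sub_neg.2 hat)

variable {d : ℕ} {Z : Finset (Ed d)} {k : Ed d → ℝ} {O : Set (Ed d)} {f : Ed d → ℝ} {x₀ : Ed d}
  {B : ℝ}

/-- At a point where the largest of the functions `t ↦ f (x₀ + t • w) - (B + ε) * t` is attained,
the sum over `Z` is nonnegative, so that the derivative is negative unless `t = 0`. -/
lemma le_add_of_fderiv_add_smul_le (hk : ∀ β ∈ Z, 0 ≤ k β) (hO : O.Finite)
    (hinv : ∀ w ∈ O, ∀ β ∈ Z, reflAt β w ∈ O)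
    (hdiff : ∀ w ∈ O, ∀ t ∈ Set.Icc (0 : ℝ) 1, DifferentiableAt ℝ f (x₀ + t • w))
    (hder : ∀ w ∈ O, ∀ t ∈ Set.Ioc (0 : ℝ) 1, fderiv ℝ f (x₀ + t • w) w ≤
      B - ∑ β ∈ Z, k β / t * (f (x₀ + t • w) - f (x₀ + t • reflAt β w))) :
    ∀ w ∈ O, f (x₀ + w) ≤ f x₀ + B := by
  intro w₀ hw₀
  refine le_of_forall_pos_le_add fun ε hε => ?_
  have hH : ∀ w ∈ O, ∀ t ∈ Set.Icc (0 : ℝ) 1,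
      HasDerivAt (fun s : ℝ => f (x₀ + s • w) - (B + ε) * s)
        (fderiv ℝ f (x₀ + t • w) w - (B + ε)) t := fun w hw t ht => by
    have hline : HasDerivAt (fun s : ℝ => x₀ + s • w) w t := by
      simpa using ((hasDerivAt_id t).smul_const w).const_add x₀
    exact ((hdiff w hw t ht).hasFDerivAt.comp_hasDerivAt t hline).sub
      (hasDerivAt_const_mul (B + ε))
  obtain ⟨w, hw, t, ht, hmax⟩ := exists_forall_le_of_finite_of_isCompact hO ⟨w₀, hw₀⟩
    (K := fun _ => Set.Icc (0 : ℝ) 1) (f := fun w s => f (x₀ + s • w) - (B + ε) * s)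
    (fun _ _ => isCompact_Icc) (fun _ _ => Set.nonempty_Icc.2 zero_le_one)
    fun w hw t ht => (hH w hw t ht).continuousAt.continuousWithinAt
  have ht0 : t = 0 := by
    by_contra hne
    have htpos : 0 < t := ht.1.lt_of_ne' hne
    have hsum : 0 ≤ ∑ β ∈ Z, k β / t * (f (x₀ + t • w) - f (x₀ + t • reflAt β w)) :=
      Finset.sum_nonneg fun β hβ => mul_nonneg (div_nonneg (hk β hβ) htpos.le)
        (sub_nonneg.2 (sub_le_sub_iff_right _ |>.1 (hmax _ (hinv w hw β hβ) t ht)))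
    have hder0 := nonneg_of_isMaxOn_Icc_of_hasDerivAt (fun s hs => hmax w hw s hs) htpos ht.2
      (hH w hw t ht)
    linarith [hder w hw t ⟨htpos, ht.2⟩]
  have hend := hmax w₀ hw₀ 1 ⟨zero_le_one, le_rfl⟩
  simp only [ht0, one_smul, zero_smul, add_zero, mul_zero, sub_zero, mul_one] at hend
  linarith

end Rays

/-! ### Bounds for difference quotients -/

/-- `x` is within distance `δ` of some point of `O`. -/
def IsNear {d : ℕ} (O : Set (Ed d)) (δ : ℝ) (x : Ed d) : Prop := ∃ z ∈ O, ‖x - z‖ ≤ δ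

/-- A differentiable function on the unit neighbourhood of a reflection-invariant set `O`, bounded
by `1`, whose Dunkl derivatives at regular points are bounded by `M`. -/
structure HasBoundedDunklDeriv {d : ℕ} (R : Finset (Ed d)) (k : Ed d → ℝ) (M : ℝ) (f : Ed d → ℝ)
    (O : Set (Ed d)) : Prop where
  inv : ∀ z ∈ O, ∀ α ∈ R, reflAt α z ∈ O
  abs_le_one : ∀ x, IsNear O 1 x → |f x| ≤ 1
  differentiableAt : ∀ x, IsNear O 1 x → DifferentiableAt ℝ f x
  dunkl_le : ∀ x, IsNear O 1 x → isRegular R x → ∀ ξ,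
    |fderiv ℝ f x ξ + ∑ β ∈ R, k β * ⟪β, ξ⟫ * ((f x - f (reflAt β x)) / ⟪β, x⟫)| ≤ M * ‖ξ‖

/-- The roots whose mirrors pass through `x`. -/
def mirrorRoots {d : ℕ} (R : Finset (Ed d)) (x : Ed d) : Finset (Ed d) :=
  R.filter fun γ => ⟪γ, x⟫ = (0 : ℝ)

/-- The difference quotients `(f x - f (σ_β x)) / ⟨β, x⟩` are bounded by `Q` at those points `x`
within `δ` of `O` at which at least `n` roots `γ` satisfy `|⟨γ, x⟩| ≤ 2 |⟨β, x⟩|`. -/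
def QuotientBoundWith {d : ℕ} (R : Finset (Ed d)) (n : ℕ) (Q δ : ℝ) (f : Ed d → ℝ)
    (O : Set (Ed d)) : Prop :=
  ∀ x, isRegular R x → IsNear O δ x → ∀ β ∈ R,
    n ≤ (R.filter fun γ => |⟪γ, x⟫| ≤ 2 * |⟪β, x⟫|).card → |f x - f (reflAt β x)| ≤ Q * |⟪β, x⟫|

/-- `QuotientBoundWith` with constants depending only on `R`, `k`, `M` and `n`. -/
def QuotientBound {d : ℕ} (R : Finset (Ed d)) (k : Ed d → ℝ) (M : ℝ) (n : ℕ) : Prop :=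
  ∃ Q ≥ (0 : ℝ), ∃ δ > (0 : ℝ), δ ≤ 1 ∧
    ∀ f O, HasBoundedDunklDeriv R k M f O → QuotientBoundWith R n Q δ f O

/-- Reflected differences `f x - f (σ_β x)` are `O(|x - x₀|)`, uniformly in `f`, when `x₀` lies on
the mirror of `β` and on at least `n` mirrors altogether, and the roots not vanishing at `x₀` are
not small at `x`. -/
def ClusterBound {d : ℕ} (R : Finset (Ed d)) (k : Ed d → ℝ) (M : ℝ) (n : ℕ) : Prop :=
  ∃ C ≥ (0 : ℝ), ∃ δ > (0 : ℝ), δ ≤ 1 ∧ ∀ f O, HasBoundedDunklDeriv R k M f O →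
    ∀ x x₀, isRegular R x → IsNear O δ x →
      (∀ β ∈ R, ⟪β, x₀⟫ = (0 : ℝ) ∨ 3 * ‖x - x₀‖ ≤ |⟪β, x⟫|) → ‖x - x₀‖ ≤ δ →
      n ≤ (mirrorRoots R x₀).card → ∀ β ∈ mirrorRoots R x₀, |f x - f (reflAt β x)| ≤ C * ‖x - x₀‖

section Quotients

variable {d n : ℕ} {R : Finset (Ed d)} {k : Ed d → ℝ} {M Q δ : ℝ} {f : Ed d → ℝ} {O : Set (Ed d)}
  {x x₀ w β : Ed d} {t : ℝ}

lemma mem_mirrorRoots : β ∈ mirrorRoots R x ↔ β ∈ R ∧ ⟪β, x⟫ = (0 : ℝ) := Finset.mem_filter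

lemma mirrorRoots_subset (R : Finset (Ed d)) (x : Ed d) : mirrorRoots R x ⊆ R :=
  Finset.filter_subset _ _

lemma reflAt_add_smul (hβ : ⟪β, x₀⟫ = (0 : ℝ)) (t : ℝ) (w : Ed d) :
    reflAt β (x₀ + t • w) = x₀ + t • reflAt β w := by
  simp only [reflAt, inner_add_right, hβ, inner_smul_right, zero_add]
  module

lemma reflAt_add (hβ : ⟪β, x₀⟫ = (0 : ℝ)) (w : Ed d) : reflAt β (x₀ + w) = x₀ + reflAt β w := by
  simpa only [one_smul] using reflAt_add_smul hβ 1 w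

lemma IsNear.mono {δ' : ℝ} (h : IsNear O δ x) (hδ : δ ≤ δ') : IsNear O δ' x :=
  h.imp fun _ hz => ⟨hz.1, hz.2.trans hδ⟩

lemma IsNear.reflAt (h : IsNear O δ x) (hβ : ⟪β, β⟫ = (2 : ℝ)) (hO : ∀ z ∈ O, reflAt β z ∈ O) :
    IsNear O δ (reflAt β x) := by
  obtain ⟨z, hz, hxz⟩ := h
  exact ⟨_, hO z hz, by rwa [reflAt_sub_reflAt, norm_reflAt hβ]⟩

lemma abs_inner_le_of_inner_self_eq_two {E : Type*} [NormedAddCommGroup E] [InnerProductSpace ℝ E]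
    {β : E} (hβ : ⟪β, β⟫ = (2 : ℝ)) (x : E) : |⟪β, x⟫| ≤ 3 / 2 * ‖x‖ := by
  rw [real_inner_self_eq_norm_sq] at hβ
  have hnorm : ‖β‖ ≤ 3 / 2 := by nlinarith [norm_nonneg β]
  exact (abs_real_inner_le_norm β x).trans (by gcongr)

lemma HasBoundedDunklDeriv.neg (h : HasBoundedDunklDeriv R k M f O) :
    HasBoundedDunklDeriv R k M (fun x => -f x) O where
  inv := h.inv
  abs_le_one x hx := (abs_neg (f x)).trans_le (h.abs_le_one x hx)
  differentiableAt x hx := (h.differentiableAt x hx).fun_neg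
  dunkl_le x hx hreg ξ := by
    convert h.dunkl_le x hx hreg ξ using 1
    rw [← abs_neg, neg_add, ← Finset.sum_neg_distrib, fderiv_fun_neg, neg_apply, neg_neg]
    exact congrArg (fun s => |_ + s|) (Finset.sum_congr rfl fun β _ => by ring)

lemma ClusterBound.quotientBound (hR : WeightedRootSystem R k) (h : ClusterBound R k M n) :
    QuotientBound R k M n := by
  obtain ⟨C, hC, δ, hδ, hδ1, h⟩ := h
  obtain ⟨D, hD, hgap⟩ := exists_inner_eq_zero_or_le_abs_inner R
  refine ⟨2 * C * D + 4 * D / δ, by positivity, δ, hδ, hδ1, fun f O hf x hx hnear β hβ hn => ?_⟩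
  obtain ⟨x₀, hx₀, hdist, hlarge⟩ := hgap x (2 * |⟪β, x⟫|) (by positivity)
  have hβ0 := abs_nonneg (⟪β, x⟫ : ℝ)
  have hsub : (R.filter fun γ => |⟪γ, x⟫| ≤ 2 * |⟪β, x⟫|) ⊆ mirrorRoots R x₀ := fun γ hγ => by
    rw [Finset.mem_filter] at hγ
    exact mem_mirrorRoots.2 ⟨hγ.1, hx₀ γ hγ.1 hγ.2⟩
  rw [add_mul]
  rcases le_or_gt ‖x - x₀‖ δ with hle | hgt
  · have hcluster := h f O hf x x₀ hx hnear hlarge hle (hn.trans (Finset.card_le_card hsub)) β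
      (mem_mirrorRoots.2 ⟨hβ, hx₀ β hβ (by linarith)⟩)
    have hfar : 0 ≤ 4 * D / δ * |(⟪β, x⟫ : ℝ)| := by positivity
    linarith [mul_le_mul_of_nonneg_left hdist hC]
  · have htriv : |f x - f (reflAt β x)| ≤ 2 := by
      have hfx := hf.abs_le_one x (hnear.mono hδ1)
      have hfβ := hf.abs_le_one _ ((hnear.mono hδ1).reflAt (hR.norm_two β hβ) (hf.inv · · β hβ))
      exact (abs_sub _ _).trans (by linarith)
    have hfar : 2 ≤ 4 * D / δ * |(⟪β, x⟫ : ℝ)| := by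
      rw [div_mul_eq_mul_div, le_div_iff₀ hδ]
      linarith
    have hnear0 : 0 ≤ 2 * C * D * |(⟪β, x⟫ : ℝ)| := by positivity
    linarith

section OrbitRays

variable (hR : WeightedRootSystem R k) (hw : w ∈ reflOrbit (mirrorRoots R x₀) (x - x₀))
include hR hw

lemma norm_eq_of_mem_reflOrbit_mirrorRoots : ‖w‖ = ‖x - x₀‖ :=
  norm_eq_of_mem_reflOrbit (fun α hα => hR.norm_two α (mirrorRoots_subset R x₀ hα)) hw

lemma isNear_add_of_mem_reflOrbit (hO : ∀ z ∈ O, ∀ α ∈ R, reflAt α z ∈ O) (hx : IsNear O δ x) :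
    IsNear O δ (x₀ + w) := by
  refine reflOrbit_induction (C := fun w => IsNear O δ (x₀ + w)) (by rwa [add_sub_cancel])
    (fun w hw α hα => ?_) hw
  have hα' := mem_mirrorRoots.1 hα
  rw [← reflAt_add hα'.2]
  exact hw.reflAt (hR.norm_two α hα'.1) (hO · · α hα'.1)

lemma isNear_add_smul_of_mem_reflOrbit (hO : ∀ z ∈ O, ∀ α ∈ R, reflAt α z ∈ O)
    (hx : IsNear O (δ / 2) x) (hxx₀ : ‖x - x₀‖ ≤ δ / 2) (ht : t ∈ Set.Icc (0 : ℝ) 1) :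
    IsNear O δ (x₀ + t • w) := by
  obtain ⟨z, hz, hdist⟩ := isNear_add_of_mem_reflOrbit hR hw hO hx
  refine ⟨z, hz, ?_⟩
  have hsplit : x₀ + t • w - z = (x₀ + w - z) - (1 - t) • w := by module
  have hshift : ‖(1 - t) • w‖ ≤ δ / 2 := by
    rw [norm_smul, Real.norm_eq_abs, abs_of_nonneg (sub_nonneg.2 ht.2)]
    rw [← norm_eq_of_mem_reflOrbit_mirrorRoots hR hw] at hxx₀
    nlinarith [ht.1, norm_nonneg w]
  rw [hsplit]
  exact (norm_sub_le _ _).trans (by linarith)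

/-- A root not vanishing at `x₀` is at least `3 ‖x - x₀‖` at `x₀ + w`, and varies by at most
`3 / 2 ‖x - x₀‖` along the ray. -/
lemma le_abs_inner_add_smul_of_mem_reflOrbit
    (hgap : ∀ β ∈ R, ⟪β, x₀⟫ = (0 : ℝ) ∨ 3 * ‖x - x₀‖ ≤ |⟪β, x⟫|) (ht : t ∈ Set.Icc (0 : ℝ) 1)
    (hβ : β ∈ R) (hβ0 : ⟪β, x₀⟫ ≠ (0 : ℝ)) : ‖x - x₀‖ ≤ |⟪β, x₀ + t • w⟫| := by
  obtain ⟨γ, hγ, hγw, hγx₀⟩ := exists_inner_eq_of_mem_reflOrbit hR (mirrorRoots_subset R x₀)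
    (fun α hα => (mem_mirrorRoots.1 hα).2) hw β hβ
  have hend : 3 * ‖x - x₀‖ ≤ |⟪β, x₀ + w⟫| := by
    rw [inner_add_right, hγw, hγx₀, ← inner_add_right, add_sub_cancel]
    exact (hgap γ hγ).resolve_left (hγx₀ ▸ hβ0)
  have hβw := abs_inner_le_of_inner_self_eq_two (hR.norm_two β hβ) w
  rw [norm_eq_of_mem_reflOrbit_mirrorRoots hR hw] at hβw
  have hsplit : (⟪β, x₀ + w⟫ : ℝ) = ⟪β, x₀ + t • w⟫ + (1 - t) * ⟪β, w⟫ := by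
    simp only [inner_add_right, inner_smul_right]
    ring
  have htri := abs_add_le (⟪β, x₀ + t • w⟫ : ℝ) ((1 - t) * ⟪β, w⟫)
  rw [← hsplit, abs_mul, abs_of_nonneg (sub_nonneg.2 ht.2)] at htri
  nlinarith [ht.1, ht.2, abs_nonneg (⟪β, w⟫ : ℝ)]

lemma isRegular_add_smul_of_mem_reflOrbit (hx : isRegular R x) (hxx₀ : 0 < ‖x - x₀‖)
    (hgap : ∀ β ∈ R, ⟪β, x₀⟫ = (0 : ℝ) ∨ 3 * ‖x - x₀‖ ≤ |⟪β, x⟫|) (ht : t ∈ Set.Ioc (0 : ℝ) 1) :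
    isRegular R (x₀ + t • w) := by
  intro β hβ
  by_cases hβ0 : ⟪β, x₀⟫ = (0 : ℝ)
  · obtain ⟨γ, hγ, hγw, hγx₀⟩ := exists_inner_eq_of_mem_reflOrbit hR (mirrorRoots_subset R x₀)
      (fun α hα => (mem_mirrorRoots.1 hα).2) hw β hβ
    rw [inner_add_right, inner_smul_right, hβ0, zero_add, hγw, inner_sub_right, ← hγx₀, hβ0,
      sub_zero]
    exact mul_ne_zero ht.1.ne' (hx γ hγ)
  · exact abs_pos.1 (hxx₀.trans_le
      (le_abs_inner_add_smul_of_mem_reflOrbit hR hw hgap ⟨ht.1.le, ht.2⟩ hβ hβ0))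

lemma card_mirrorRoots_lt_card_filter
    (hgap : ∀ β ∈ R, ⟪β, x₀⟫ = (0 : ℝ) ∨ 3 * ‖x - x₀‖ ≤ |⟪β, x⟫|) (ht : t ∈ Set.Icc (0 : ℝ) 1)
    (hβ : β ∈ R) (hβ0 : ⟪β, x₀⟫ ≠ (0 : ℝ)) : (mirrorRoots R x₀).card <
      (R.filter fun γ => |⟪γ, x₀ + t • w⟫| ≤ 2 * |⟪β, x₀ + t • w⟫|).card := by
  refine Finset.card_lt_card (Finset.ssubset_iff_of_subset (fun γ hγ => ?_) |>.2
    ⟨β, Finset.mem_filter.2 ⟨hβ, ?_⟩, fun h => hβ0 (mem_mirrorRoots.1 h).2⟩)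
  · obtain ⟨hγR, hγ0⟩ := mem_mirrorRoots.1 hγ
    refine Finset.mem_filter.2 ⟨hγR, ?_⟩
    have hγw := abs_inner_le_of_inner_self_eq_two (hR.norm_two γ hγR) w
    rw [norm_eq_of_mem_reflOrbit_mirrorRoots hR hw] at hγw
    rw [inner_add_right, hγ0, zero_add, inner_smul_right, abs_mul, abs_of_nonneg ht.1]
    nlinarith [ht.2, abs_nonneg (⟪γ, w⟫ : ℝ),
      le_abs_inner_add_smul_of_mem_reflOrbit hR hw hgap ht hβ hβ0]
  · linarith [abs_nonneg (⟪β, x₀ + t • w⟫ : ℝ)]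

omit hw

/-- The terms of roots vanishing at `x₀` are differences of values on two rays; the other terms are
controlled by the bound on quotients. -/
lemma sum_mirrorRoots_sub_le_sum_quotient (hQ : 0 ≤ Q) (ht : 0 < t)
    (hreg : isRegular R (x₀ + t • w))
    (hquot : ∀ β ∈ R, ⟪β, x₀⟫ ≠ (0 : ℝ) →
      |f (x₀ + t • w) - f (reflAt β (x₀ + t • w))| ≤ Q * |⟪β, x₀ + t • w⟫|) :
    ∑ β ∈ mirrorRoots R x₀, k β / t * (f (x₀ + t • w) - f (x₀ + t • reflAt β w)) -
        (∑ β ∈ R, k β * (3 / 2 * Q)) * ‖w‖ ≤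
      ∑ β ∈ R, k β * ⟪β, w⟫ *
        ((f (x₀ + t • w) - f (reflAt β (x₀ + t • w))) / ⟪β, x₀ + t • w⟫) := by
  rw [mirrorRoots, Finset.sum_filter, Finset.sum_mul, ← Finset.sum_sub_distrib]
  refine Finset.sum_le_sum fun β hβ => ?_
  have hk := hR.nonneg β hβ
  have hne := hreg β hβ
  split_ifs with hβ0
  · have hinner : (⟪β, x₀ + t • w⟫ : ℝ) = t * ⟪β, w⟫ := by
      rw [inner_add_right, hβ0, inner_smul_right, zero_add]
    rw [hinner] at hne ⊢
    have hw0 := right_ne_zero_of_mul hne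
    have hterm : k β * ⟪β, w⟫ *
        ((f (x₀ + t • w) - f (reflAt β (x₀ + t • w))) / (t * ⟪β, w⟫)) =
          k β / t * (f (x₀ + t • w) - f (x₀ + t • reflAt β w)) := by
      rw [reflAt_add_smul hβ0]
      field_simp
    rw [hterm]
    exact sub_le_self _ (by positivity)
  · have hβw := abs_inner_le_of_inner_self_eq_two (hR.norm_two β hβ) w
    have hle : |(f (x₀ + t • w) - f (reflAt β (x₀ + t • w))) / ⟪β, x₀ + t • w⟫| ≤ Q := by
      rw [abs_div, div_le_iff₀ (abs_pos.2 hne)]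
      exact hquot β hβ hβ0
    have habs : |k β * ⟪β, w⟫ *
        ((f (x₀ + t • w) - f (reflAt β (x₀ + t • w))) / ⟪β, x₀ + t • w⟫)| ≤
          k β * (3 / 2 * ‖w‖) * Q := by
      rw [abs_mul, abs_mul, abs_of_nonneg hk]
      gcongr
    linarith [(abs_le.1 habs).1]

end OrbitRays

lemma QuotientBoundWith.le_add_of_mem_reflOrbit (hR : WeightedRootSystem R k) (hQ : 0 ≤ Q)
    (hδ1 : δ ≤ 1) (hquot : QuotientBoundWith R (n + 1) Q δ f O)
    (hf : HasBoundedDunklDeriv R k M f O) (hx : isRegular R x) (hnear : IsNear O (δ / 2) x)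
    (hgap : ∀ β ∈ R, ⟪β, x₀⟫ = (0 : ℝ) ∨ 3 * ‖x - x₀‖ ≤ |⟪β, x⟫|) (hxx₀ : ‖x - x₀‖ ≤ δ / 2)
    (hpos : 0 < ‖x - x₀‖) (hn : n ≤ (mirrorRoots R x₀).card) :
    ∀ w ∈ reflOrbit (mirrorRoots R x₀) (x - x₀),
      f (x₀ + w) ≤ f x₀ + (M + ∑ β ∈ R, k β * (3 / 2 * Q)) * ‖x - x₀‖ := by
  have hray : ∀ w ∈ reflOrbit (mirrorRoots R x₀) (x - x₀), ∀ t ∈ Set.Icc (0 : ℝ) 1,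
      IsNear O δ (x₀ + t • w) := fun w hw t ht =>
    isNear_add_smul_of_mem_reflOrbit hR hw hf.inv hnear hxx₀ ht
  refine le_add_of_fderiv_add_smul_le (k := k)
    (fun β hβ => hR.nonneg β (mirrorRoots_subset R x₀ hβ))
    (finite_reflOrbit hR (mirrorRoots_subset R x₀) _) (fun w hw β hβ => reflAt_mem_reflOrbit hw hβ)
    (fun w hw t ht => hf.differentiableAt _ ((hray w hw t ht).mono hδ1)) fun w hw t ht => ?_
  have ht' : t ∈ Set.Icc (0 : ℝ) 1 := ⟨ht.1.le, ht.2⟩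
  have hreg := isRegular_add_smul_of_mem_reflOrbit hR hw hx hpos hgap ht
  have hdunkl := (le_abs_self _).trans (hf.dunkl_le _ ((hray w hw t ht').mono hδ1) hreg w)
  have hsum := sum_mirrorRoots_sub_le_sum_quotient hR hQ ht.1 hreg fun β hβ hβ0 =>
    hquot _ hreg (hray w hw t ht') β hβ
      (hn.trans_lt (card_mirrorRoots_lt_card_filter hR hw hgap ht' hβ hβ0))
  rw [norm_eq_of_mem_reflOrbit_mirrorRoots hR hw] at hdunkl hsum
  linarith

lemma QuotientBound.clusterBound (hR : WeightedRootSystem R k) (hM : 0 ≤ M)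
    (h : QuotientBound R k M (n + 1)) : ClusterBound R k M n := by
  obtain ⟨Q, hQ, δ, hδ, hδ1, h⟩ := h
  have hsum : 0 ≤ ∑ β ∈ R, k β * (3 / 2 * Q) :=
    Finset.sum_nonneg fun β hβ => mul_nonneg (hR.nonneg β hβ) (by positivity)
  refine ⟨2 * (M + ∑ β ∈ R, k β * (3 / 2 * Q)), by positivity, δ / 2, by positivity, by linarith,
    fun f O hf x x₀ hx hnear hgap hxx₀ hn β hβ => ?_⟩
  obtain ⟨hβR, hβ0⟩ := mem_mirrorRoots.1 hβ
  have hpos : 0 < ‖x - x₀‖ := norm_pos_iff.2 <| sub_ne_zero.2 fun heq => hx β hβR (heq ▸ hβ0)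
  have hself := self_mem_reflOrbit (mirrorRoots R x₀) (x - x₀)
  have hrefl := reflAt_mem_reflOrbit hself hβ
  have hup := (h f O hf).le_add_of_mem_reflOrbit hR hQ hδ1 hf hx hnear hgap hxx₀ hpos hn
  have hdown := (h _ O hf.neg).le_add_of_mem_reflOrbit hR hQ hδ1 hf.neg hx hnear hgap hxx₀ hpos hn
  have hup₁ := hup _ hself
  have hup₂ := hup _ hrefl
  have hdown₁ := hdown _ hself
  have hdown₂ := hdown _ hrefl
  rw [← reflAt_add hβ0] at hup₂ hdown₂
  rw [add_sub_cancel] at hup₁ hup₂ hdown₁ hdown₂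
  rw [abs_le]
  constructor <;> linarith

lemma quotientBound_of_card_lt (k : Ed d → ℝ) (M : ℝ) (hn : R.card < n) : QuotientBound R k M n :=
  ⟨0, le_rfl, 1, one_pos, le_rfl, fun _ _ _ _ _ _ _ _ hcard =>
    absurd (hcard.trans (Finset.card_filter_le _ _)) hn.not_ge⟩

lemma quotientBound (hR : WeightedRootSystem R k) (hM : 0 ≤ M) (n : ℕ) :
    QuotientBound R k M n := by
  suffices hdown : ∀ j n, R.card < n + j → QuotientBound R k M n from
    hdown (R.card + 1) n (by omega)
  intro j
  induction j with
  | zero => exact fun n hn => quotientBound_of_card_lt k M hn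
  | succ j ih =>
    exact fun n hn => ((ih (n + 1) (by omega)).clusterBound hR hM).quotientBound hR

end Quotients

/-! ### The gradient estimate on balls -/

section GradientEstimate

variable {d : ℕ} {R : Finset (Ed d)} {k : Ed d → ℝ} {u : Ed d × ℝ → ℝ} {Ω : Set (Ed d × ℝ)}
  {p P : Ed d × ℝ}

lemma distSq_eq_sq_dist (p q : Ed d × ℝ) :
    distSq p q = dist (WithLp.toLp 2 q) (WithLp.toLp 2 p) ^ 2 := by
  rw [WithLp.prod_dist_eq_of_L2, Real.sq_sqrt (by positivity), distSq, dist_eq_norm, Real.dist_eq,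
    sq_abs]
  rfl

lemma distSq_le_add_sq {p q z : Ed d × ℝ} {r s : ℝ} (hr : 0 ≤ r) (hs : 0 ≤ s)
    (hpq : distSq p q ≤ r ^ 2) (hqz : distSq q z ≤ s ^ 2) : distSq p z ≤ (r + s) ^ 2 := by
  rw [distSq_eq_sq_dist, sq_le_sq₀ dist_nonneg (by positivity)] at *
  linarith [dist_triangle (WithLp.toLp 2 z) (WithLp.toLp 2 q) (WithLp.toLp 2 p)]

lemma distSq_smul {r : ℝ} (hr : r ≠ 0) (p q : Ed d × ℝ) :
    distSq p (r • q) = r ^ 2 * distSq (r⁻¹ • p) q := by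
  have hfst : (r • q).1 - p.1 = r • (q.1 - (r⁻¹ • p).1) := by
    rw [smul_sub, Prod.smul_fst, Prod.smul_fst, smul_inv_smul₀ hr]
  have hsnd : (r • q).2 - p.2 = r * (q.2 - (r⁻¹ • p).2) := by
    simp only [Prod.smul_snd, smul_eq_mul]
    field_simp
  rw [distSq, distSq, hfst, hsnd, norm_smul, mul_pow, Real.norm_eq_abs, sq_abs]
  ring

lemma dunklOp_prodMk_zero (R : Finset (Ed d)) (k : Ed d → ℝ) (u : Ed d × ℝ → ℝ) (ξ : Ed d)
    (p : Ed d × ℝ) :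
    dunklOp R k u (ξ, 0) p = ∑ i, ξ i * dunklOp R k u (stdVec (some i)) p := by
  simp only [dunklOp, ← sum_smul_stdVec_some ξ, map_sum, map_smul, smul_eq_mul, mul_add,
    Finset.sum_add_distrib, Finset.mul_sum, Finset.sum_mul]
  rw [Finset.sum_comm]
  exact congrArg _ (Finset.sum_congr rfl fun i _ => Finset.sum_congr rfl fun α _ => by ring)

lemma hasFDerivAt_prodMk_const {x : Ed d} {y : ℝ} (hu : DifferentiableAt ℝ u (x, y)) :
    HasFDerivAt (fun x => u (x, y))
      ((fderiv ℝ u (x, y)).comp (ContinuousLinearMap.inl ℝ (Ed d) ℝ)) x :=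
  hu.hasFDerivAt.comp x (hasFDerivAt_prodMk_left x y)

lemma dunklOp_prodMk_zero_eq_fderiv_add {x : Ed d} {y : ℝ} (k : Ed d → ℝ)
    (hu : DifferentiableAt ℝ u (x, y)) (hreg : isRegular R x) (ξ : Ed d) :
    dunklOp R k u (ξ, 0) (x, y) = fderiv ℝ (fun x => u (x, y)) x ξ +
      ∑ β ∈ R, k β * ⟪β, ξ⟫ * ((u (x, y) - u (reflAt β x, y)) / ⟪β, x⟫) := by
  rw [(hasFDerivAt_prodMk_const hu).fderiv]
  refine congrArg _ (Finset.sum_congr rfl fun β hβ => ?_)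
  rw [dunklQuot_of_ne (hreg β hβ), reflProd_eq, fstInner_apply, fstInner_apply]

lemma abs_sum_mul_le_of_abs_le {a : Fin d → ℝ} {A : ℝ} (ha : ∀ i, |a i| ≤ A) (ξ : Ed d) :
    |∑ i, ξ i * a i| ≤ d * A * ‖ξ‖ :=
  calc |∑ i, ξ i * a i| ≤ ∑ i, |ξ i * a i| := Finset.abs_sum_le_sum_abs _ _
    _ ≤ ∑ _i : Fin d, ‖ξ‖ * A := Finset.sum_le_sum fun i _ => by
        rw [abs_mul]
        exact mul_le_mul (PiLp.norm_apply_le ξ i) (ha i) (abs_nonneg _) (norm_nonneg _)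
    _ = d * A * ‖ξ‖ := by
        rw [Finset.sum_const, Finset.card_univ, Fintype.card_fin, nsmul_eq_mul]
        ring

lemma mem_of_isNear_reflOrbit (hR : WeightedRootSystem R k) (hu : IsDunklHarmonic R k u Ω)
    (hball : ∀ q, distSq P q ≤ 2 ^ 2 → q ∈ Ω) {x : Ed d} (hx : IsNear (reflOrbit R P.1) 1 x)
    {q : Ed d × ℝ} (hq : distSq (x, P.2) q ≤ 1) : q ∈ Ω := by
  obtain ⟨z, hz, hxz⟩ := hx
  refine distSq_le_mem_of_mem_reflOrbit (r := 2 ^ 2) hR.norm_two hu.inv hball hz q ?_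
  have hzx : distSq (z, P.2) (x, P.2) ≤ 1 ^ 2 := by
    rw [distSq, sub_self, zero_pow two_ne_zero, add_zero]
    gcongr
  have hzq : distSq (z, P.2) q ≤ (1 + 1 : ℝ) ^ 2 :=
    distSq_le_add_sq zero_le_one zero_le_one hzx (by rwa [one_pow])
  rwa [one_add_one_eq_two] at hzq

lemma IsDunklHarmonic.hasBoundedDunklDeriv (hR : WeightedRootSystem R k)
    (hu : IsDunklHarmonic R k u Ω) (hbdd : ∀ q ∈ Ω, |u q| ≤ 1)
    (hball : ∀ q, distSq P q ≤ 2 ^ 2 → q ∈ Ω) :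
    HasBoundedDunklDeriv R k (d * √(bernsteinConst R k)) (fun x => u (x, P.2))
      (reflOrbit R P.1) := by
  have hmem : ∀ x, IsNear (reflOrbit R P.1) 1 x → (x, P.2) ∈ Ω := fun x hx =>
    mem_of_isNear_reflOrbit hR hu hball hx (distSq_self _ |>.trans_le zero_le_one)
  have hdiff : ∀ x, IsNear (reflOrbit R P.1) 1 x → DifferentiableAt ℝ u (x, P.2) := fun x hx =>
    (hu.smooth _ (hmem x hx)).differentiableAt two_ne_zero
  refine ⟨fun z hz α hα => reflAt_mem_reflOrbit hz hα, fun x hx => hbdd _ (hmem x hx),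
    fun x hx => (hasFDerivAt_prodMk_const (hdiff x hx)).differentiableAt, fun x hx hreg ξ => ?_⟩
  rw [← dunklOp_prodMk_zero_eq_fderiv_add k (hdiff x hx) hreg, dunklOp_prodMk_zero]
  exact abs_sum_mul_le_of_abs_le (fun i => Real.abs_le_sqrt (sq_dunklOp_le_bernsteinConst hR hu hbdd
    (fun q hq => mem_of_isNear_reflOrbit hR hu hball hx hq) (some i))) ξ

lemma abs_sum_mul_dunklQuot_le {Q : ℝ} (hR : WeightedRootSystem R k)
    (hquot : ∀ α ∈ R, |dunklQuot u α p| ≤ Q) (j : Option (Fin d)) :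
    |∑ α ∈ R, k α * fstInner α (stdVec j) * dunklQuot u α p| ≤ ∑ α ∈ R, k α * 2 * Q := by
  refine (Finset.abs_sum_le_sum_abs _ _).trans (Finset.sum_le_sum fun α hα => ?_)
  have hstd : |fstInner α (stdVec j)| ≤ 2 :=
    abs_le_of_sq_le_sq (by linarith [sq_fstInner_stdVec_le (hR.norm_two α hα) j]) zero_le_two
  have hk := hR.nonneg α hα
  rw [abs_mul, abs_mul, abs_of_nonneg hk]
  gcongr
  exact hquot α hα

lemma exists_abs_fderiv_stdVec_le_of_isRegular (hR : WeightedRootSystem R k) :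
    ∃ c ≥ (0 : ℝ), ∀ (u : Ed d × ℝ → ℝ) (Ω : Set (Ed d × ℝ)), IsDunklHarmonic R k u Ω →
      (∀ q ∈ Ω, |u q| ≤ 1) → ∀ P : Ed d × ℝ, isRegular R P.1 →
        (∀ q, distSq P q ≤ 2 ^ 2 → q ∈ Ω) → ∀ j, |fderiv ℝ u P (stdVec j)| ≤ c := by
  obtain ⟨Q, hQ, δ, hδ, -, hquot⟩ := quotientBound (M := d * √(bernsteinConst R k)) hR
    (by positivity) 0
  have hsum : 0 ≤ ∑ α ∈ R, k α * 2 * Q := Finset.sum_nonneg fun α hα =>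
    mul_nonneg (mul_nonneg (hR.nonneg α hα) zero_le_two) hQ
  refine ⟨√(bernsteinConst R k) + ∑ α ∈ R, k α * 2 * Q, by positivity,
    fun u Ω hu hbdd P hreg hball j => ?_⟩
  have hdunkl := Real.abs_le_sqrt (sq_dunklOp_le_bernsteinConst hR hu hbdd
    (fun q hq => hball q (hq.trans (by norm_num))) j)
  have hquotP : ∀ α ∈ R, |dunklQuot u α P| ≤ Q := fun α hα => by
    rw [dunklQuot_of_ne (hreg α hα), abs_div, reflProd_eq, fstInner_apply,
      div_le_iff₀ (abs_pos.2 (hreg α hα))]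
    exact hquot _ _ (hu.hasBoundedDunklDeriv hR hbdd hball) P.1 hreg
      ⟨P.1, self_mem_reflOrbit R P.1, by simpa using hδ.le⟩ α hα (Nat.zero_le _)
  have hfderiv : fderiv ℝ u P (stdVec j) = dunklOp R k u (stdVec j) P -
      ∑ α ∈ R, k α * fstInner α (stdVec j) * dunklQuot u α P := by
    rw [dunklOp, add_sub_cancel_right]
  rw [hfderiv]
  exact (abs_sub _ _).trans (add_le_add hdunkl (abs_sum_mul_dunklQuot_le hR hquotP j))

lemma dense_isRegular (hR : ∀ α ∈ R, ⟪α, α⟫ = (2 : ℝ)) :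
    Dense {p : Ed d × ℝ | isRegular R p.1} := by
  have hinter : {p : Ed d × ℝ | isRegular R p.1} = ⋂ α ∈ R, {p | fstInner α p ≠ 0} := by
    ext p
    simp [isRegular, fstInner_apply]
  rw [hinter]
  refine dense_biInter_of_isOpen
    (fun α _ => isOpen_ne_fun (fstInner α).continuous continuous_const) R.countable_toSet
    fun α hα => ?_
  have hne : fstInner α ≠ 0 := fun h0 => by
    simpa [h0] using (fstInner_apply α (α, 0)).trans (hR α hα)
  exact (dense_compl_singleton (0 : ℝ)).preimage ((fstInner α).isOpenMap_of_ne_zero hne)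

lemma exists_abs_fderiv_stdVec_le (hR : WeightedRootSystem R k) :
    ∃ c ≥ (0 : ℝ), ∀ (u : Ed d × ℝ → ℝ) (Ω : Set (Ed d × ℝ)), IsDunklHarmonic R k u Ω →
      (∀ q ∈ Ω, |u q| ≤ 1) → ∀ P : Ed d × ℝ, (∀ q, distSq P q ≤ 3 ^ 2 → q ∈ Ω) →
        ∀ j, |fderiv ℝ u P (stdVec j)| ≤ c := by
  obtain ⟨c, hc, hregular⟩ := exists_abs_fderiv_stdVec_le_of_isRegular hR
  refine ⟨c, hc, fun u Ω hu hbdd P hball j => ?_⟩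
  have hopen : IsOpen {q | distSq P q < 1} :=
    isOpen_lt (contDiff_distSq P (n := 1)).continuous continuous_const
  have hP : P ∈ {q | distSq P q < 1} := by simp [distSq_self]
  have hcont := (differentiableAt_fderiv_apply
    (hu.smooth P (hball P (by rw [distSq_self]; positivity))) (stdVec j)).continuousAt.abs
  refine hcont.continuousWithinAt.closure_le
    ((dense_isRegular hR.norm_two).open_subset_closure_inter hopen hP) continuousWithinAt_const
    fun Q hQ => hregular u Ω hu hbdd Q hQ.2 (fun q hq => hball q ?_) j
  convert distSq_le_add_sq zero_le_one zero_le_two (hQ.1.le.trans_eq (one_pow 2).symm) hq using 2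
  norm_num

lemma pd2_comp_smul (u : Ed d × ℝ → ℝ) (r : ℝ) (q w : Ed d × ℝ) :
    pd2 (fun q => u (r • q)) q w = r ^ 2 * pd2 u (r • q) w := by
  simp only [pd2, fderiv_comp_smul, smul_apply]
  change fderiv ℝ (r • fun q => fderiv ℝ u (r • q) w) q w = _
  rw [fderiv_const_smul_field, Pi.smul_apply, fderiv_comp_smul (f := fun q => fderiv ℝ u q w)]
  simp only [smul_apply, smul_eq_mul]
  ring

lemma lapE_comp_smul (u : Ed d × ℝ → ℝ) (r : ℝ) (q : Ed d × ℝ) :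
    lapE (fun q => u (r • q)) q = r ^ 2 * lapE u (r • q) := by
  simp only [lapE_eq_sum, Finset.mul_sum, pd2_comp_smul]

lemma IsDunklHarmonic.comp_smul (hu : IsDunklHarmonic R k u Ω) {r : ℝ} (hr : r ≠ 0) :
    IsDunklHarmonic R k (fun q => u (r • q)) {q | r • q ∈ Ω} where
  isOpen := hu.isOpen.preimage (continuous_const_smul r)
  inv α hα q hq := by
    change r • reflProd α q ∈ Ω
    rw [← map_smul]
    exact hu.inv α hα _ hq
  smooth q hq := (hu.smooth _ hq).comp q (contDiff_const_smul r).contDiffAt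
  harm q hq hreg := by
    rw [lapE_comp_smul, hu.harm _ hq fun α hα => by
      rw [map_smul, smul_eq_mul]
      exact mul_ne_zero hr (hreg α hα)]
    unfold dunklLowOrder
    rw [mul_left_comm, Finset.mul_sum]
    refine congrArg _ (Finset.sum_congr rfl fun β hβ => ?_)
    have hβ0 := hreg β hβ
    simp only [fderiv_comp_smul, smul_apply, map_smul, smul_eq_mul]
    field_simp

lemma exists_mul_abs_fderiv_stdVec_le (hR : WeightedRootSystem R k) :
    ∃ c ≥ (0 : ℝ), ∀ (u : Ed d × ℝ → ℝ) (Ω : Set (Ed d × ℝ)), IsDunklHarmonic R k u Ω →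
      (∀ q ∈ Ω, |u q| ≤ 1) → ∀ (P : Ed d × ℝ) (r : ℝ), 0 < r →
        (∀ q, distSq P q ≤ r ^ 2 → q ∈ Ω) → ∀ j, r * |fderiv ℝ u P (stdVec j)| ≤ c := by
  obtain ⟨c, hc, hunit⟩ := exists_abs_fderiv_stdVec_le hR
  refine ⟨3 * c, by positivity, fun u Ω hu hbdd P r hr hball j => ?_⟩
  have hr3 : r / 3 ≠ 0 := by positivity
  have hP : (r / 3) • (r / 3)⁻¹ • P = P := smul_inv_smul₀ hr3 P
  have hest := hunit _ _ (hu.comp_smul hr3) (fun q hq => hbdd _ hq) ((r / 3)⁻¹ • P)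
    (fun q hq => hball _ (by rw [distSq_smul hr3]; nlinarith [sq_nonneg r])) j
  rw [fderiv_comp_smul, hP, smul_apply, smul_eq_mul, abs_mul,
    abs_of_pos (by positivity : 0 < r / 3)] at hest
  linarith

end GradientEstimate

/-! ### Cones -/

section Cone

variable {d : ℕ} {R Rp : Finset (Ed d)} {κ : Ed d → ℝ} {u : Ed d × ℝ → ℝ} {a b h η : ℝ} {x0 : Ed d}

lemma IsRootSystem.weightedRootSystem (hRS : IsRootSystem R Rp κ) :
    WeightedRootSystem R (fun α => κ α / 2) where
  norm_two := hRS.norm_two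
  refl_mem := hRS.refl_mem
  nonneg α hα := div_nonneg (hRS.kappa_nonneg α hα) zero_le_two
  inv α hα β hβ := congrArg (· / 2) <|
    hRS.kappa_inv (reflAt α) (Submonoid.subset_closure ⟨α, hα, rfl⟩) β hβ

lemma IsRootSystem.sum_eq_two_mul_sum_pos (hRS : IsRootSystem R Rp κ) {F : Ed d → ℝ}
    (hF : ∀ α ∈ R, F (-α) = F α) : ∑ α ∈ R, F α = 2 * ∑ α ∈ Rp, F α := by
  classical
  have hneg : ∑ α ∈ R \ Rp, F α = ∑ α ∈ Rp, F α := by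
    refine Finset.sum_nbij' Neg.neg Neg.neg (fun α hα => ?_) (fun α hα => ?_)
      (fun α _ => neg_neg α) (fun α _ => neg_neg α)
      fun α hα => (hF α (Finset.mem_sdiff.1 hα).1).symm
    · obtain ⟨hαR, hαRp⟩ := Finset.mem_sdiff.1 hα
      exact ((hRS.pos_split α hαR).resolve_left fun hpos => hαRp hpos.1).2
    · have hαR := hRS.pos_sub hα
      exact Finset.mem_sdiff.2 ⟨hRS.weightedRootSystem.neg_mem hαR,
        ((hRS.pos_split α hαR).resolve_right fun hneg => hneg.1 hα).2⟩
  rw [← Finset.sum_sdiff hRS.pos_sub, hneg, two_mul]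

lemma IsRootSystem.dunklLap_eq (hRS : IsRootSystem R Rp κ) (u : Ed d × ℝ → ℝ) (p : Ed d × ℝ) :
    dunklLap Rp κ u p = lapE u p - dunklLowOrder R (fun α => κ α / 2) u (fderiv ℝ u) p := by
  have heven : ∀ α ∈ R, κ (-α) / 2 * (fderiv ℝ u p (-α, 0) / fstInner (-α) p -
      (u p - u (reflProd (-α) p)) / fstInner (-α) p ^ 2) = κ α / 2 *
        (fderiv ℝ u p (α, 0) / fstInner α p - (u p - u (reflProd α p)) / fstInner α p ^ 2) := by
    intro α hα
    have hpair : ((-α, 0) : Ed d × ℝ) = -(α, 0) := by simp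
    rw [hRS.weightedRootSystem.weight_neg hα, fstInner_neg, reflProd_neg, hpair, map_neg,
      neg_div_neg_eq, neg_sq]
  rw [dunklLap, dunklLowOrder, hRS.sum_eq_two_mul_sum_pos heven, neg_mul, sub_neg_eq_add,
    ← mul_assoc, Finset.mul_sum, Finset.mul_sum]
  refine congrArg _ (Finset.sum_congr rfl fun α _ => ?_)
  rw [fstInner_apply, reflProd_eq]
  ring

lemma isOpen_coneT (a h : ℝ) (x : Ed d) : IsOpen (coneT a h x) :=
  (isOpen_lt continuous_const continuous_snd).inter <|
    (isOpen_lt continuous_snd continuous_const).inter <|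
      isOpen_lt (continuous_fst.dist continuous_const) (continuous_const.mul continuous_snd)

lemma reflProd_mem_coneT {α : Ed d} (hα : ⟪α, α⟫ = (2 : ℝ)) {x : Ed d} {q : Ed d × ℝ}
    (hq : q ∈ coneT a h x) : reflProd α q ∈ coneT a h (reflAt α x) := by
  obtain ⟨hpos, hlt, hdist⟩ := hq
  rw [reflProd_eq]
  refine ⟨hpos, hlt, ?_⟩
  rwa [dist_eq_norm, reflAt_sub_reflAt, norm_reflAt hα, ← dist_eq_norm]

lemma coneT_subset_iUnion_dunklGroup (R : Finset (Ed d)) (a h : ℝ) (x : Ed d) :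
    coneT a h x ⊆ ⋃ σ ∈ dunklGroup R, coneT a h (σ x) :=
  fun _ hq => Set.mem_iUnion₂.2 ⟨1, one_mem _, hq⟩

lemma reflProd_mem_iUnion_coneT {α : Ed d} (hαR : α ∈ R) (hα : ⟪α, α⟫ = (2 : ℝ)) {x : Ed d}
    {q : Ed d × ℝ} (hq : q ∈ ⋃ σ ∈ dunklGroup R, coneT a h (σ x)) :
    reflProd α q ∈ ⋃ σ ∈ dunklGroup R, coneT a h (σ x) := by
  obtain ⟨σ, hσ, hqσ⟩ := Set.mem_iUnion₂.1 hq
  exact Set.mem_iUnion₂.2 ⟨(show Function.End (Ed d) from reflAt α) * σ,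
    mul_mem (Submonoid.subset_closure ⟨α, hαR, rfl⟩) hσ, reflProd_mem_coneT hα hqσ⟩

lemma KHarmonicOn.isDunklHarmonic (hRS : IsRootSystem R Rp κ)
    (hu : KHarmonicOn R Rp κ u (⋃ σ ∈ dunklGroup R, coneT b η (σ x0))) :
    IsDunklHarmonic R (fun α => κ α / 2) u (⋃ σ ∈ dunklGroup R, coneT b η (σ x0)) where
  isOpen := isOpen_biUnion fun _ _ => isOpen_coneT _ _ _
  inv α hα _ hq := reflProd_mem_iUnion_coneT hα (hRS.norm_two α hα) hq
  smooth q hq := hu.1.contDiffAt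
    ((isOpen_biUnion fun _ _ => isOpen_coneT _ _ _).mem_nhds hq)
  harm q hq hreg := by rw [← sub_eq_zero, ← hRS.dunklLap_eq, hu.2 q hq hreg]

lemma mem_coneT_of_distSq_le {ε : ℝ} (hε : 0 < ε) (hε1 : ε < 1) (hε_aperture : ε * (1 + b) ≤ b - a)
    (hε_height : ε * h ≤ η - h) (hb : 0 < b) {p q : Ed d × ℝ} (hp : p ∈ coneT a h x0)
    (hq : distSq p q ≤ (ε * p.2) ^ 2) : q ∈ coneT b η x0 := by
  obtain ⟨hpos, hlt, hdist⟩ := hp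
  have hrad : 0 ≤ ε * p.2 := by positivity
  rw [distSq] at hq
  have hfst : ‖q.1 - p.1‖ ≤ ε * p.2 :=
    abs_le_of_sq_le_sq' (by linarith [sq_nonneg (q.2 - p.2)]) hrad |>.2
  obtain ⟨hlow, hhigh⟩ := abs_le_of_sq_le_sq' (a := q.2 - p.2) (b := ε * p.2)
    (by linarith [sq_nonneg ‖q.1 - p.1‖]) hrad
  have htri : dist q.1 x0 ≤ ‖q.1 - p.1‖ + dist p.1 x0 := by
    rw [← dist_eq_norm]
    exact dist_triangle _ _ _
  exact ⟨by nlinarith, by nlinarith, by nlinarith⟩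

lemma exists_ball_subset_coneT (hb : 0 < b) (hab : a < b) (hh : 0 < h) (hhη : h < η) :
    ∃ ε > (0 : ℝ), ∀ (x0 : Ed d), ∀ p ∈ coneT a h x0, ∀ q, distSq p q ≤ (ε * p.2) ^ 2 →
      q ∈ coneT b η x0 := by
  have hb1 : 0 < 1 + b := by linarith
  set ε := min (1 / 2) (min ((b - a) / (1 + b)) ((η - h) / h))
  have hε : 0 < ε := lt_min one_half_pos
    (lt_min (div_pos (sub_pos.2 hab) hb1) (div_pos (sub_pos.2 hhη) hh))
  have haperture : ε ≤ (b - a) / (1 + b) := (min_le_right _ _).trans (min_le_left _ _)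
  have hheight : ε ≤ (η - h) / h := (min_le_right _ _).trans (min_le_right _ _)
  exact ⟨ε, hε, fun x0 p hp q hq => mem_coneT_of_distSq_le hε
    ((min_le_left _ _).trans_lt one_half_lt_one) ((le_div_iff₀ hb1).1 haperture)
    ((le_div_iff₀ hh).1 hheight) hb hp hq⟩

lemma mul_sqrt_sum_sq_le {ι : Type*} [Fintype ι] {f : ι → ℝ} {y C : ℝ} (hy : 0 ≤ y)
    (hf : ∀ j, y * |f j| ≤ C) : y * √(∑ j, f j ^ 2) ≤ Fintype.card ι * C :=
  calc y * √(∑ j, f j ^ 2) ≤ y * ∑ j, |f j| := by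
        gcongr
        refine Real.sqrt_le_iff.2 ⟨by positivity, ?_⟩
        simpa only [sq_abs] using
          Finset.sum_sq_le_sq_sum_of_nonneg fun j (_ : j ∈ Finset.univ) => abs_nonneg (f j)
    _ ≤ Fintype.card ι * C := by
        rw [Finset.mul_sum, ← nsmul_eq_mul]
        exact Finset.sum_le_card_nsmul _ _ _ fun j _ => hf j

lemma sum_sq_fderiv_single_add (u : Ed d × ℝ → ℝ) (p : Ed d × ℝ) :
    (∑ i : Fin d, fderiv ℝ u p (EuclideanSpace.single i 1, 0) ^ 2) + fderiv ℝ u p (0, 1) ^ 2 =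
      ∑ j, fderiv ℝ u p (stdVec j) ^ 2 := by
  rw [Fintype.sum_option, add_comm]
  rfl

end Cone

/-- **Lemma 5.5 (interior gradient estimate).** Let `0 < a < b` and `0 < h < η`. There is
a constant `c > 0`, depending only on `a,b,h,η` (and `d,R,κ`), such that for every
`x⁰ ∈ ℝ^d` and every `u` which is `κ`-harmonic on `⋃_{σ∈G} Γ_b^η(σ(x⁰))` with `|u| ≤ 1`
there, one has `y|∇u(x,y)| ≤ c` on `Γ_a^h(x⁰)`. -/
theorem dunkl_interior_gradient_estimate
    {d : ℕ} (hd : 1 ≤ d) (R Rp : Finset (Ed d)) (κ : Ed d → ℝ)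
    (hRS : IsRootSystem R Rp κ)
    (a b h η : ℝ) (ha : 0 < a) (hab : a < b) (hh : 0 < h) (hhη : h < η) :
    ∃ c > (0 : ℝ), ∀ (x0 : Ed d) (u : Ed d × ℝ → ℝ),
      KHarmonicOn R Rp κ u (⋃ σ ∈ dunklGroup R, coneT b η (σ x0)) →
      (∀ p ∈ ⋃ σ ∈ dunklGroup R, coneT b η (σ x0), |u p| ≤ 1) →
      ∀ p ∈ coneT a h x0,
        p.2 * Real.sqrt ((∑ i : Fin d, (fderiv ℝ u p (EuclideanSpace.single i 1, 0)) ^ 2) +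
            (fderiv ℝ u p ((0 : Ed d), 1)) ^ 2) ≤ c := by
  obtain ⟨c, hc, hgrad⟩ := exists_mul_abs_fderiv_stdVec_le hRS.weightedRootSystem
  obtain ⟨ε, hε, hball⟩ := exists_ball_subset_coneT (ha.trans hab) hab hh hhη
  refine ⟨Fintype.card (Option (Fin d)) * (c / ε) + 1, by positivity,
    fun x0 u hu hbdd p hp => ?_⟩
  have hpartial (j : Option (Fin d)) : p.2 * |fderiv ℝ u p (stdVec j)| ≤ c / ε := by
    rw [le_div_iff₀' hε, ← mul_assoc]
    exact hgrad u _ (hu.isDunklHarmonic hRS) hbdd p (ε * p.2) (mul_pos hε hp.1)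
      (fun q hq => coneT_subset_iUnion_dunklGroup R b η x0 (hball x0 p hp q hq)) j
  rw [sum_sq_fderiv_single_add]
  exact (mul_sqrt_sum_sq_le hp.1.le hpartial).trans (le_add_of_nonneg_right zero_le_one)

end
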